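/- For every n ≥ 1, every Borel set X ⊆ ℝⁿ can be partitioned into countably many pairwise disjoint subspaces that are Gδ sets in X and are h-homogeneous in the subspace topology. -/

import Mathlib

/-- A topological space is *h-homogeneous* if every nonempty clopen subset,
with the subspace topology, is homeomorphic to the whole space. -/
def HHomogeneous (Y : Type*) [TopologicalSpace Y] : Prop :=
  ∀ U : Set Y, IsClopen U → U.Nonempty → Nonempty (U ≃ₜ Y)



namespace BG

/-- A game given by its positions; `len` is the number of moves made, `par` forgets the last move. -/
structure Gm : Type 1 where
  P : Type
  len : P → ℕ
  par : P → P
  len_par : ∀ p, len (par p) = len p - 1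
  par_zero : ∀ p, len p = 0 → par p = p
  ext : ∀ p, ∃ q, par q = p ∧ len q = len p + 1

namespace Gm

def Child (G : Gm) (p q : G.P) : Prop := G.par q = p ∧ G.len q = G.len p + 1

def Strat (G : Gm) : Type := {σ : G.P → G.P // ∀ p, G.Child p (σ p)}

def IsRun (G : Gm) (x : ℕ → G.P) : Prop := ∀ n, G.len (x n) = n ∧ G.par (x (n+1)) = x n

def Follows (G : Gm) (b : Bool) (σ : G.Strat) (x : ℕ → G.P) : Prop :=
  ∀ n, Nat.bodd n = b → x (n+1) = σ.1 (x n)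

/-- ancestor at level `n` -/
def anc (G : Gm) (n : ℕ) (p : G.P) : G.P := G.par^[G.len p - n] p

variable {G : Gm}

theorem IsRun.child {x : ℕ → G.P} (h : G.IsRun x) (n : ℕ) : G.Child (x n) (x (n+1)) := by
  refine ⟨(h n).2, ?_⟩
  rw [(h (n+1)).1, (h n).1]

theorem len_iter (p : G.P) (k : ℕ) : G.len (G.par^[k] p) = G.len p - k := by
  induction k with
  | zero => simp
  | succ k ih => rw [Function.iterate_succ_apply', G.len_par, ih]; omega

theorem len_anc (p : G.P) {n : ℕ} (h : n ≤ G.len p) : G.len (G.anc n p) = n := by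
  unfold anc; rw [len_iter]; omega

theorem anc_len (p : G.P) : G.anc (G.len p) p = p := by simp [anc]

theorem anc_of_le (p : G.P) {n : ℕ} (h : G.len p ≤ n) : G.anc n p = p := by
  have : G.len p - n = 0 := by omega
  simp [anc, this]

theorem anc_anc (p : G.P) {m n : ℕ} (h : m ≤ n) : G.anc m (G.anc n p) = G.anc m p := by
  rcases le_total (G.len p) n with h1 | h1
  · rw [anc_of_le p h1]
  · unfold anc
    rw [len_iter, ← Function.iterate_add_apply]
    congr 1; omega

theorem anc_child {p q : G.P} (h : G.Child p q) {n : ℕ} (hn : n ≤ G.len p) :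
    G.anc n q = G.anc n p := by
  unfold anc
  have : G.len q - n = (G.len p - n) + 1 := by have := h.2; omega
  rw [this, Function.iterate_succ_apply, h.1]

theorem par_eq_anc (p : G.P) : G.par p = G.anc (G.len p - 1) p := by
  unfold anc
  rcases Nat.eq_zero_or_pos (G.len p) with h | h
  · rw [G.par_zero p h]; simp [h]
  · have : G.len p - (G.len p - 1) = 1 := by omega
    rw [this]; rfl

theorem par_anc (p : G.P) {n : ℕ} (h : n + 1 ≤ G.len p) : G.par (G.anc (n+1) p) = G.anc n p := by
  rw [par_eq_anc, len_anc p h, anc_anc _ (by omega)]; rfl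

theorem child_anc (p : G.P) {n : ℕ} (h : n + 1 ≤ G.len p) :
    G.Child (G.anc n p) (G.anc (n+1) p) := by
  refine ⟨par_anc p h, ?_⟩
  rw [len_anc p h, len_anc p (by omega)]

theorem IsRun.anc {x : ℕ → G.P} (h : G.IsRun x) {m n : ℕ} (hmn : m ≤ n) :
    G.anc m (x n) = x m := by
  induction n, hmn using Nat.le_induction with
  | base => exact Gm.anc_of_le _ (by rw [(h m).1])
  | succ n hn ih => rw [anc_child (h.child n) (by rw [(h n).1]; exact hn), ih]

theorem IsRun.eq_of_eq {x y : ℕ → G.P} (hx : G.IsRun x) (hy : G.IsRun y) {n : ℕ}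
    (h : x n = y n) {m : ℕ} (hm : m ≤ n) : x m = y m := by
  rw [← hx.anc hm, ← hy.anc hm, h]

noncomputable def dflt (G : Gm) : G.Strat :=
  ⟨fun p => (G.ext p).choose, fun p => (G.ext p).choose_spec⟩

/-- open sets of runs -/
def IsOp (G : Gm) (S : Set (ℕ → G.P)) : Prop :=
  ∀ x, G.IsRun x → x ∈ S → ∃ n, ∀ y, G.IsRun y → y n = x n → y ∈ S

/-- extend a position to a run following a strategy -/
theorem exists_run (p : G.P) : ∃ x, G.IsRun x ∧ x (G.len p) = p := by
  refine ⟨fun n => if n ≤ G.len p then G.anc n p else (G.dflt).1^[n - G.len p] p, ?_, ?_⟩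
  · have hl : ∀ k, G.len ((G.dflt).1^[k] p) = G.len p + k := by
      intro k
      induction k with
      | zero => simp
      | succ k ih => rw [Function.iterate_succ_apply', ((G.dflt).2 _).2, ih]; omega
    intro n
    refine ⟨?_, ?_⟩
    · dsimp only
      split_ifs with h
      · exact len_anc p h
      · rw [hl]; omega
    · dsimp only
      split_ifs with h1 h2 h2
      · exact par_anc p h1
      · omega
      · have : n = G.len p := by omega
        subst this
        have e : G.len p + 1 - G.len p = 1 := by omega
        rw [e, anc_len]
        exact ((G.dflt).2 p).1
      · have e : n + 1 - G.len p = (n - G.len p) + 1 := by omega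
        rw [e, Function.iterate_succ_apply']
        exact ((G.dflt).2 _).1
  · simp [anc_len]

/-- Attractor of `U` for player `b` inside the arena `Ar`, with ordinal rank. -/
inductive Att (G : Gm) (b : Bool) (Ar U : Set G.P) : Ordinal.{0} → G.P → Prop
  | base (α : Ordinal.{0}) (u : G.P) : u ∈ U → Att G b Ar U α u
  | own (α β : Ordinal.{0}) (p q : G.P) : (G.len p).bodd = b → G.Child p q → q ∈ Ar → β < α →
      Att G b Ar U β q → Att G b Ar U α p
  | opp (α : Ordinal.{0}) (p : G.P) (f : G.P → Ordinal.{0}) : (G.len p).bodd ≠ b →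
      (∀ q, G.Child p q → f q < α) → (∀ q, G.Child p q → Att G b Ar U (f q) q) → Att G b Ar U α p

def AttS (G : Gm) (b : Bool) (Ar U : Set G.P) : Set G.P := {p | ∃ α, Att G b Ar U α p}

theorem AttS.base {b : Bool} {Ar U : Set G.P} {u : G.P} (h : u ∈ U) : u ∈ AttS G b Ar U :=
  ⟨0, Att.base 0 u h⟩

theorem AttS.own {b : Bool} {Ar U : Set G.P} {p q : G.P} (hb : (G.len p).bodd = b)
    (hc : G.Child p q) (hA : q ∈ Ar) (hq : q ∈ AttS G b Ar U) : p ∈ AttS G b Ar U := by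
  obtain ⟨β, h⟩ := hq
  exact ⟨Order.succ β, Att.own _ β p q hb hc hA (Order.lt_succ β) h⟩

theorem AttS.opp {b : Bool} {Ar U : Set G.P} {p : G.P} (hb : (G.len p).bodd ≠ b)
    (h : ∀ q, G.Child p q → q ∈ AttS G b Ar U) : p ∈ AttS G b Ar U := by
  classical
  choose! f hf using h
  refine ⟨Order.succ (⨆ q, f q), Att.opp _ p f hb (fun q hq => ?_) (fun q hq => hf q hq)⟩
  exact Order.lt_succ_of_le (Ordinal.le_iSup f q)

open Classical in
noncomputable def rk (G : Gm) (b : Bool) (Ar U : Set G.P) (p : G.P) : Ordinal.{0} :=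
  sInf {α | Att G b Ar U α p}

theorem att_rk {b : Bool} {Ar U : Set G.P} {p : G.P} (h : p ∈ AttS G b Ar U) :
    Att G b Ar U (rk G b Ar U p) p := csInf_mem (s := {α | Att G b Ar U α p}) h

theorem rk_le {b : Bool} {Ar U : Set G.P} {p : G.P} {α} (h : Att G b Ar U α p) :
    rk G b Ar U p ≤ α := csInf_le' h

theorem own_move {b : Bool} {Ar U : Set G.P} {p : G.P} (h : p ∈ AttS G b Ar U) (hU : p ∉ U)
    (hb : (G.len p).bodd = b) :
    ∃ q, G.Child p q ∧ q ∈ Ar ∧ q ∈ AttS G b Ar U ∧ rk G b Ar U q < rk G b Ar U p := by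
  have h1 := att_rk h
  generalize hr : rk G b Ar U p = α at h1
  cases h1 with
  | base _ _ h => exact absurd h hU
  | own _ β _ q h1 h2 h3 h4 h5 => exact ⟨q, h2, h3, ⟨β, h5⟩, (rk_le h5).trans_lt h4⟩
  | opp _ _ f h1 h2 h3 => exact absurd hb h1

theorem opp_move {b : Bool} {Ar U : Set G.P} {p : G.P} (h : p ∈ AttS G b Ar U) (hU : p ∉ U)
    (hb : (G.len p).bodd ≠ b) (q : G.P) (hq : G.Child p q) :
    q ∈ AttS G b Ar U ∧ rk G b Ar U q < rk G b Ar U p := by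
  have h1 := att_rk h
  generalize hr : rk G b Ar U p = α at h1
  cases h1 with
  | base _ _ h => exact absurd h hU
  | own _ β _ q h1 h2 h3 h4 h5 => exact absurd h1 hb
  | opp _ _ f h1 h2 h3 => exact ⟨⟨_, h3 q hq⟩, (rk_le (h3 q hq)).trans_lt (h2 q hq)⟩

open Classical in
/-- the attracting move -/
noncomputable def amv (G : Gm) (b : Bool) (Ar U : Set G.P) (p : G.P) : G.P :=
  if h : p ∈ AttS G b Ar U ∧ p ∉ U ∧ (G.len p).bodd = b then (own_move h.1 h.2.1 h.2.2).choose
  else G.dflt.1 p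

theorem amv_child (b : Bool) (Ar U : Set G.P) (p : G.P) : G.Child p (amv G b Ar U p) := by
  unfold amv
  split_ifs with h
  · exact (own_move h.1 h.2.1 h.2.2).choose_spec.1
  · exact G.dflt.2 p

theorem amv_spec {b : Bool} {Ar U : Set G.P} {p : G.P} (h : p ∈ AttS G b Ar U) (hU : p ∉ U)
    (hb : (G.len p).bodd = b) : amv G b Ar U p ∈ Ar ∧ amv G b Ar U p ∈ AttS G b Ar U ∧
      rk G b Ar U (amv G b Ar U p) < rk G b Ar U p := by
  unfold amv
  rw [dif_pos ⟨h, hU, hb⟩]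
  exact (own_move h hU hb).choose_spec.2

theorem att_hits {b : Bool} {Ar U : Set G.P} {x : ℕ → G.P} (hx : G.IsRun x) {n : ℕ}
    (hn : x n ∈ AttS G b Ar U)
    (hf : ∀ m ≥ n, m.bodd = b → x m ∈ AttS G b Ar U → (∀ k, n ≤ k → k ≤ m → x k ∉ U) →
      x (m+1) = amv G b Ar U (x m)) :
    ∃ m ≥ n, x m ∈ U := by
  by_contra hcon
  push Not at hcon
  have step : ∀ m ≥ n, x m ∈ AttS G b Ar U → x (m+1) ∈ AttS G b Ar U ∧
      rk G b Ar U (x (m+1)) < rk G b Ar U (x m) := by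
    intro m hm hA
    by_cases hb : m.bodd = b
    · rw [hf m hm hb hA (fun k hk _ => hcon k hk)]
      exact (amv_spec hA (hcon m hm) (by rw [(hx m).1]; exact hb)).2
    · exact opp_move hA (hcon m hm) (by rw [(hx m).1]; exact hb) _ (hx.child m)
  have all : ∀ k, x (n+k) ∈ AttS G b Ar U := by
    intro k
    induction k with
    | zero => exact hn
    | succ k ih => exact (step (n+k) (by omega) ih).1
  have dec : ∀ k, rk G b Ar U (x (n+(k+1))) < rk G b Ar U (x (n+k)) :=
    fun k => (step (n+k) (by omega) (all k)).2
  exact (RelEmbedding.natGT (r := (· < ·)) (fun k => rk G b Ar U (x (n+k))) dec).not_wellFounded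
    Ordinal.lt_wf

/-- Gale-Stewart -/
theorem det_open (S : Set (ℕ → G.P)) (hS : G.IsOp S) (r : G.P) (hr : G.len r = 0) :
    (∃ σ : G.Strat, ∀ x, G.IsRun x → x 0 = r → G.Follows false σ x → x ∈ S) ∨
    (∃ σ : G.Strat, ∀ x, G.IsRun x → x 0 = r → G.Follows true σ x → x ∉ S) := by
  classical
  let U : Set G.P := {p | ∀ y, G.IsRun y → y (G.len p) = p → y ∈ S}
  by_cases hA : r ∈ AttS G false Set.univ U
  · left
    refine ⟨⟨amv G false Set.univ U, amv_child _ _ _⟩, fun x hx h0 hf => ?_⟩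
    obtain ⟨m, -, hm⟩ := att_hits hx (n := 0) (by rw [h0]; exact hA)
      (fun m _ hb _ _ => hf m hb)
    exact hm x hx (by rw [(hx m).1])
  · right
    let τ : G.P → G.P := fun p => if h : ∃ q, G.Child p q ∧ q ∉ AttS G false Set.univ U
      then h.choose else G.dflt.1 p
    have hτ : ∀ p, G.Child p (τ p) := by
      intro p
      simp only [τ]
      split_ifs with h
      · exact h.choose_spec.1
      · exact G.dflt.2 p
    refine ⟨⟨τ, hτ⟩, fun x hx h0 hf hxS => ?_⟩
    have all : ∀ n, x n ∉ AttS G false Set.univ U := by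
      intro n
      induction n with
      | zero => rw [h0]; exact hA
      | succ n ih =>
        by_cases hb : n.bodd = false
        · intro h
          exact ih (AttS.own (by rw [(hx n).1]; exact hb) (hx.child n) trivial h)
        · have hb' : n.bodd = true := by simpa using hb
          rw [hf n hb']
          have : ∃ q, G.Child (x n) q ∧ q ∉ AttS G false Set.univ U := by
            by_contra hc
            push Not at hc
            exact ih (AttS.opp (by rw [(hx n).1]; simp [hb']) hc)
          simp only [τ]
          rw [dif_pos this]
          exact this.choose_spec.2
    obtain ⟨n, hn⟩ := hS x hx hxS
    apply all n
    apply AttS.base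
    intro y hy h
    rw [(hx n).1] at h
    exact hn y hy h

end Gm

/-- coverings -/
structure Cover (G' G : Gm) where
  π : G'.P → G.P
  φ : Bool → G'.Strat → G.Strat
  len_π : ∀ p, G.len (π p) = G'.len p
  par_π : ∀ p, G.par (π p) = π (G'.par p)
  loc : ∀ b (σ σ' : G'.Strat) n, (∀ q, G'.len q ≤ n → σ.1 q = σ'.1 q) →
    ∀ p, G.len p ≤ n → (φ b σ).1 p = (φ b σ').1 p
  lift : ∀ b (σ : G'.Strat) x, G.IsRun x → G.Follows b (φ b σ) x →
    ∃ x', G'.IsRun x' ∧ G'.Follows b σ x' ∧ ∀ n, π (x' n) = x n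

structure Cover.IsK {G' G : Gm} (c : Cover G' G) (k : ℕ) : Prop where
  inj : ∀ p q, G'.len p ≤ k → c.π p = c.π q → p = q
  surj : ∀ p, G.len p ≤ k → ∃ q, c.π q = p
  agree : ∀ b (σ : G'.Strat) p, G'.len p < k → (c.φ b σ).1 (c.π p) = c.π (σ.1 p)

theorem Cover.child {G' G : Gm} (c : Cover G' G) {p q : G'.P} (h : G'.Child p q) :
    G.Child (c.π p) (c.π q) := by
  refine ⟨?_, ?_⟩
  · rw [c.par_π, h.1]
  · rw [c.len_π, c.len_π, h.2]

theorem Cover.run {G' G : Gm} (c : Cover G' G) {x : ℕ → G'.P} (h : G'.IsRun x) :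
    G.IsRun (fun n => c.π (x n)) := by
  intro n
  refine ⟨?_, ?_⟩
  · rw [c.len_π, (h n).1]
  · dsimp only; rw [c.par_π, (h n).2]

def Cover.refl (G : Gm) : Cover G G where
  π := id
  φ := fun _ σ => σ
  len_π := fun _ => rfl
  par_π := fun _ => rfl
  loc := fun _ _ _ _ h p hp => h p hp
  lift := fun _ _ x hx hf => ⟨x, hx, hf, fun _ => rfl⟩

def Cover.comp {G'' G' G : Gm} (c : Cover G'' G') (d : Cover G' G) : Cover G'' G where
  π := fun p => d.π (c.π p)
  φ := fun b σ => d.φ b (c.φ b σ)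
  len_π := fun p => by rw [d.len_π, c.len_π]
  par_π := fun p => by rw [d.par_π, c.par_π]
  loc := fun b σ σ' n h p hp => d.loc b _ _ n (fun q hq => c.loc b _ _ n h q hq) p hp
  lift := fun b σ x hx hf => by
    obtain ⟨x1, h1, h2, h3⟩ := d.lift b _ x hx hf
    obtain ⟨x2, h4, h5, h6⟩ := c.lift b _ x1 h1 h2
    exact ⟨x2, h4, h5, fun n => by rw [h6, h3]⟩

theorem Cover.IsK.comp {G'' G' G : Gm} {c : Cover G'' G'} {d : Cover G' G} {k : ℕ}
    (hc : c.IsK k) (hd : d.IsK k) : (c.comp d).IsK k where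
  inj := fun p q hp h => hc.inj p q hp (hd.inj _ _ (by rw [c.len_π]; exact hp) h)
  surj := fun p hp => by
    obtain ⟨q, hq⟩ := hd.surj p hp
    obtain ⟨q', hq'⟩ := hc.surj q (by rw [← d.len_π, hq]; exact hp)
    exact ⟨q', by show d.π (c.π q') = p; rw [hq', hq]⟩
  agree := fun b σ p hp => by
    show (d.φ b (c.φ b σ)).1 (d.π (c.π p)) = d.π (c.π (σ.1 p))
    rw [hd.agree b _ _ (by rw [c.len_π]; exact hp), hc.agree b _ _ hp]

theorem Cover.IsK.mono {G' G : Gm} {c : Cover G' G} {k l : ℕ} (h : c.IsK l) (hk : k ≤ l) :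
    c.IsK k where
  inj := fun p q hp => h.inj p q (hp.trans hk)
  surj := fun p hp => h.surj p (hp.trans hk)
  agree := fun b σ p hp => h.agree b σ p (hp.trans_le hk)

end BG

namespace BG
open Gm

section Limit
variable (G : ℕ → Gm) (c : ∀ i, Cover (G (i+1)) (G i))

abbrev Thr : Type := {p : ∀ i, (G i).P // ∀ i, (c i).π (p (i+1)) = p i}

variable {G c}

theorem Thr.len (p : Thr G c) (i : ℕ) : (G i).len (p.1 i) = (G 0).len (p.1 0) := by
  induction i with
  | zero => rfl
  | succ i ih => rw [← ih, ← p.2 i, (c i).len_π]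

theorem thr_surj0 {k : ℕ} (hK : ∀ i, (c i).IsK (k+i)) (q : (G 0).P) (hq : (G 0).len q ≤ k) :
    ∃ p : Thr G c, p.1 0 = q := by
  have step : ∀ i (a : {a : (G i).P // (G i).len a ≤ k}), ∃ b : {b : (G (i+1)).P // (G (i+1)).len b ≤ k},
      (c i).π b.1 = a.1 := by
    rintro i ⟨a, ha⟩
    obtain ⟨b, hb⟩ := (hK i).surj a (by omega)
    exact ⟨⟨b, by rw [← (c i).len_π, hb]; exact ha⟩, hb⟩
  choose f hf using step
  let r : ∀ i, {a : (G i).P // (G i).len a ≤ k} := fun i => Nat.rec ⟨q, hq⟩ f i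
  exact ⟨⟨fun i => (r i).1, fun i => hf i (r i)⟩, rfl⟩

theorem thr_surj (i : ℕ) : ∀ {G : ℕ → Gm} {c : ∀ i, Cover (G (i+1)) (G i)} {k : ℕ}
    (_ : ∀ i, (c i).IsK (k+i)) (q : (G i).P) (_ : (G i).len q ≤ k+i), ∃ p : Thr G c, p.1 i = q := by
  induction i with
  | zero => intro G c k hK q hq; exact thr_surj0 hK q hq
  | succ i ih =>
    intro G c k hK q hq
    obtain ⟨p, hp⟩ := ih (G := fun j => G (j+1)) (c := fun j => c (j+1)) (k := k+1)
      (fun j => by have := hK (j+1); rwa [show k + (j+1) = k+1+j by omega] at this) q (by omega)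
    refine ⟨⟨fun j => match j with
      | 0 => (c 0).π (p.1 0)
      | j+1 => p.1 j, ?_⟩, hp⟩
    intro j
    cases j with
    | zero => rfl
    | succ j => exact p.2 j

theorem thr_inj {k : ℕ} (hK : ∀ i, (c i).IsK (k+i)) {p q : Thr G c} {i : ℕ}
    (hl : (G 0).len (p.1 0) ≤ k+i) (h : p.1 i = q.1 i) : p = q := by
  have down : ∀ j, ∀ d, j + d = i → p.1 j = q.1 j := by
    intro j d
    induction d generalizing j with
    | zero => intro e; have : j = i := by omega
              subst this; exact h
    | succ d ih => intro e; rw [← p.2 j, ← q.2 j, ih (j+1) (by omega)]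
  have up : ∀ d, p.1 (i+d) = q.1 (i+d) := by
    intro d
    induction d with
    | zero => exact h
    | succ d ih =>
      apply (hK (i+d)).inj
      · have := Thr.len p (i+d+1)
        show (G (i+d+1)).len (p.1 (i+d+1)) ≤ _
        omega
      · exact ((p.2 (i+d)).trans ih).trans (q.2 (i+d)).symm
  apply Subtype.ext
  funext j
  rcases le_total j i with hj | hj
  · exact down j (i-j) (by omega)
  · have := up (j-i)
    rwa [show i + (j-i) = j by omega] at this

def Thr.par (p : Thr G c) : Thr G c :=
  ⟨fun i => (G i).par (p.1 i), fun i => by rw [← (c i).par_π, p.2]⟩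

theorem thr_child {k : ℕ} (hK : ∀ i, (c i).IsK (k+i)) {p q : Thr G c} {i : ℕ}
    (hl : (G 0).len (p.1 0) ≤ k+i) (h : (G i).Child (p.1 i) (q.1 i)) :
    Thr.par q = p ∧ (G 0).len (q.1 0) = (G 0).len (p.1 0) + 1 := by
  refine ⟨?_, ?_⟩
  · symm; exact thr_inj hK hl h.1.symm
  · rw [← Thr.len q i, ← Thr.len p i, h.2]

def Lim (k : ℕ) (hK : ∀ i, (c i).IsK (k+i)) : Gm where
  P := Thr G c
  len := fun p => (G 0).len (p.1 0)
  par := Thr.par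
  len_par := fun p => (G 0).len_par _
  par_zero := fun p h => Subtype.ext (funext fun i => (G i).par_zero _ (by rw [Thr.len p]; exact h))
  ext := fun p => by
    let m := (G 0).len (p.1 0)
    obtain ⟨q, hq⟩ := (G (m+1)).ext (p.1 (m+1))
    obtain ⟨q', hq'⟩ := thr_surj (m+1) hK q (by rw [hq.2, Thr.len p]; omega)
    exact ⟨q', thr_child hK (i := m+1) (by omega) (by rw [hq']; exact hq)⟩

variable {k : ℕ} (hK : ∀ i, (c i).IsK (k+i))

theorem lim_child {p q : Thr G c} (h : (Lim k hK).Child p q) (i : ℕ) :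
    (G i).Child (p.1 i) (q.1 i) := by
  refine ⟨?_, ?_⟩
  · have := congrArg (fun r : Thr G c => r.1 i) h.1
    exact this
  · rw [Thr.len q, Thr.len p]; exact h.2

open Classical in
noncomputable def sgi (σ : (Lim k hK).Strat) (i : ℕ) : (G i).Strat :=
  ⟨fun q => if h : (G i).len q + 1 ≤ k + i then
      (show Thr G c from σ.1 (thr_surj i hK q (by omega)).choose).1 i else (G i).dflt.1 q, fun q => by
    dsimp only
    split_ifs with h
    · have h1 := lim_child hK (σ.2 (thr_surj i hK q (by omega)).choose) i
      rwa [(thr_surj i hK q (by omega)).choose_spec] at h1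
    · exact (G i).dflt.2 q⟩

theorem sgi_eq (σ : (Lim k hK).Strat) (i : ℕ) (p : Thr G c) (h : (G i).len (p.1 i) + 1 ≤ k + i) :
    (sgi hK σ i).1 (p.1 i) = (show Thr G c from σ.1 p).1 i := by
  unfold sgi
  simp only
  rw [dif_pos h]
  have e : (thr_surj i hK (p.1 i) (by omega)).choose = p :=
    (thr_inj hK (i := i) (by rw [← Thr.len p i]; omega)
    (thr_surj i hK (p.1 i) (by omega)).choose_spec.symm).symm
  simp only [e]

theorem sgi_loc (σ σ' : (Lim k hK).Strat) (N : ℕ)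
    (h : ∀ q, (Lim k hK).len q ≤ N → σ.1 q = σ'.1 q) (i : ℕ) (q : (G i).P)
    (hq : (G i).len q ≤ N) : (sgi hK σ i).1 q = (sgi hK σ' i).1 q := by
  by_cases h1 : (G i).len q + 1 ≤ k + i
  · obtain ⟨p, rfl⟩ := thr_surj i hK q (by omega)
    rw [sgi_eq _ _ _ _ h1, sgi_eq _ _ _ _ h1, h p (by rw [Thr.len p] at hq; exact hq)]
  · unfold sgi; dsimp only; rw [dif_neg h1, dif_neg h1]

noncomputable def apx (b : Bool) (σ : (Lim k hK).Strat) : ℕ → ∀ n, (G n).Strat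
  | 0, n => sgi hK σ n
  | j+1, n => (c n).φ b (apx b σ j (n+1))

theorem apx_sgi (b : Bool) (σ : (Lim k hK).Strat) (j : ℕ) : ∀ n (q : (G n).P),
    (G n).len q + 1 ≤ k + n → (apx hK b σ j n).1 q = (sgi hK σ n).1 q := by
  induction j with
  | zero => intro n q _; rfl
  | succ j ih =>
    intro n q hq
    obtain ⟨p, rfl⟩ := thr_surj n hK q (by omega)
    have hl : (G (n+1)).len (p.1 (n+1)) = (G n).len (p.1 n) := by rw [Thr.len p (n+1), Thr.len p n]
    show ((c n).φ b (apx hK b σ j (n+1))).1 (p.1 n) = _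
    conv_lhs => rw [← p.2 n]
    rw [(hK n).agree b _ _ (by omega), ih (n+1) _ (by omega), sgi_eq _ _ _ _ (by omega),
      sgi_eq _ _ _ _ (by omega)]
    exact (show Thr G c from σ.1 p).2 n

theorem apx_succ (b : Bool) (σ : (Lim k hK).Strat) (j : ℕ) : ∀ n (q : (G n).P),
    (G n).len q + 1 ≤ k + n + j → (apx hK b σ (j+1) n).1 q = (apx hK b σ j n).1 q := by
  induction j with
  | zero => intro n q h; rw [apx_sgi _ _ _ _ _ _ h, apx_sgi _ _ _ _ _ _ h]
  | succ j ih =>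
    intro n q h
    exact (c n).loc b _ _ _ (fun r hr => ih (n+1) r (by omega)) q le_rfl

theorem apx_const (b : Bool) (σ : (Lim k hK).Strat) (j n : ℕ) (q : (G n).P)
    (h : (G n).len q + 1 ≤ k + n + j) (d : ℕ) :
    (apx hK b σ (j+d) n).1 q = (apx hK b σ j n).1 q := by
  induction d with
  | zero => rfl
  | succ d ih => rw [← ih]; exact apx_succ hK b σ (j+d) n q (by omega)

theorem apx_loc (b : Bool) (σ σ' : (Lim k hK).Strat) (N : ℕ)
    (h : ∀ q, (Lim k hK).len q ≤ N → σ.1 q = σ'.1 q) (j : ℕ) : ∀ (n : ℕ) (q : (G n).P)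
    (_ : (G n).len q ≤ N), (apx hK b σ j n).1 q = (apx hK b σ' j n).1 q := by
  induction j with
  | zero => intro n q hq; exact sgi_loc hK σ σ' N h n q hq
  | succ j ih => intro n q hq; exact (c n).loc b _ _ N (fun r hr => ih (n+1) r hr) q hq

noncomputable def tau (b : Bool) (σ : (Lim k hK).Strat) (n : ℕ) : (G n).Strat :=
  ⟨fun p => (apx hK b σ ((G n).len p + 1) n).1 p, fun p => (apx hK b σ _ n).2 p⟩

theorem tau_eq (b : Bool) (σ : (Lim k hK).Strat) (n j : ℕ) (q : (G n).P)
    (h : (G n).len q + 1 ≤ j) : (apx hK b σ j n).1 q = (tau hK b σ n).1 q := by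
  have := apx_const hK b σ ((G n).len q + 1) n q (by omega) (j - ((G n).len q + 1))
  rwa [show (G n).len q + 1 + (j - ((G n).len q + 1)) = j by omega] at this

theorem tau_phi (b : Bool) (σ : (Lim k hK).Strat) (n : ℕ) :
    (c n).φ b (tau hK b σ (n+1)) = tau hK b σ n := by
  apply Subtype.ext
  funext p
  rw [(c n).loc b _ (apx hK b σ ((G n).len p + 1) (n+1)) ((G n).len p)
    (fun q hq => (tau_eq hK b σ (n+1) _ q (by omega)).symm) p le_rfl]
  exact tau_eq hK b σ n ((G n).len p + 1 + 1) p (by omega)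

theorem tau_sgi (b : Bool) (σ : (Lim k hK).Strat) (n : ℕ) (p : Thr G c)
    (h : (G n).len (p.1 n) + 1 ≤ k + n) :
    (tau hK b σ n).1 (p.1 n) = (show Thr G c from σ.1 p).1 n := by
  rw [← sgi_eq hK σ n p h]
  exact apx_sgi hK b σ _ n _ h

noncomputable def limCover : Cover (Lim k hK) (G 0) where
  π := fun p : Thr G c => p.1 0
  φ := fun b σ => tau hK b σ 0
  len_π := fun p => rfl
  par_π := fun p => rfl
  loc := fun b σ σ' N h p hp => apx_loc hK b σ σ' N h _ 0 p hp
  lift := fun b σ x hx hf => by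
    have step : ∀ n (y : {y : ℕ → (G n).P // (G n).IsRun y ∧ (G n).Follows b (tau hK b σ n) y}),
        ∃ z : {z : ℕ → (G (n+1)).P // (G (n+1)).IsRun z ∧ (G (n+1)).Follows b (tau hK b σ (n+1)) z},
          ∀ m, (c n).π (z.1 m) = y.1 m := by
      rintro n ⟨y, hy, hyf⟩
      rw [← tau_phi] at hyf
      obtain ⟨z, h1, h2, h3⟩ := (c n).lift b _ y hy hyf
      exact ⟨⟨z, h1, h2⟩, h3⟩
    choose f hf' using step
    let X : ∀ n, {y : ℕ → (G n).P // (G n).IsRun y ∧ (G n).Follows b (tau hK b σ n) y} :=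
      fun n => Nat.rec ⟨x, hx, hf⟩ f n
    let x' : ℕ → Thr G c := fun m => ⟨fun n => (X n).1 m, fun n => hf' n (X n) m⟩
    have hrun : (Lim k hK).IsRun x' := by
      intro m
      refine ⟨(hx m).1, Subtype.ext (funext fun n => ((X n).2.1 m).2)⟩
    refine ⟨x', hrun, ?_, fun n => rfl⟩
    intro m hm
    have hl : (G (m+1)).len ((x' m).1 (m+1)) = m := ((X (m+1)).2.1 m).1
    refine thr_inj hK (i := m+1) ?_ ?_
    · rw [show (G 0).len ((x' (m+1)).1 0) = m+1 from (hx (m+1)).1]; omega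
    · rw [← tau_sgi hK b σ (m+1) (x' m) (by omega)]
      exact (X (m+1)).2.2 m hm

theorem limCover_isK : (limCover hK).IsK k where
  inj := fun p q hp h => thr_inj hK (i := 0) hp h
  surj := fun p hp => thr_surj0 hK p hp
  agree := fun b σ p hp => tau_sgi hK b σ 0 p hp

theorem lim_run {x : ℕ → Thr G c} (h : (Lim k hK).IsRun x) (i : ℕ) :
    (G i).IsRun (fun n => (x n).1 i) := by
  intro n
  refine ⟨?_, ?_⟩
  · dsimp only; rw [Thr.len (x n)]; exact (h n).1
  · have := congrArg (fun r : Thr G c => r.1 i) (h n).2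
    exact this

end Limit
end BG

namespace BG
open Gm

namespace Unr
variable (G : Gm) (O : Set (ℕ → G.P)) (K : ℕ)

def Dead (p : G.P) : Prop := ∀ y, G.IsRun y → y (G.len p) = p → y ∈ O

/-- `S` is a quasi-strategy for I rooted at `a` -/
structure VM (a : G.P) (S : Set G.P) : Prop where
  root : a ∈ S
  len : ∀ q ∈ S, K + 1 ≤ G.len q
  anc : ∀ q ∈ S, G.anc (K+1) q = a
  par : ∀ q ∈ S, K + 2 ≤ G.len q → G.par q ∈ S
  odd : ∀ q ∈ S, (G.len q).bodd = true → ∀ r, G.Child q r → r ∈ S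
  even : ∀ q ∈ S, (G.len q).bodd = false → ∃ r, G.Child q r ∧ r ∈ S

abbrev Opt := G.P ⊕ Set G.P

/-- option of II is legal with respect to `S` -/
def VC (S : Set G.P) : Opt G → Prop
  | Sum.inl u => u ∈ S ∧ Dead G O u ∧ K + 2 ≤ G.len u
  | Sum.inr T => (∀ q ∈ T, q ∈ S ∧ ¬ Dead G O q ∧ K + 2 ≤ G.len q) ∧
      (∀ q ∈ T, K + 3 ≤ G.len q → G.par q ∈ T) ∧
      (∀ q ∈ T, (G.len q).bodd = false → ∀ r, G.Child q r → r ∈ S → r ∈ T) ∧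
      (∀ q ∈ T, (G.len q).bodd = true → ∃ r, G.Child q r ∧ r ∈ T)

def Arena : Opt G → Set G.P
  | Sum.inl u => {q | G.anc (G.len u) q = G.anc (G.len q) u}
  | Sum.inr T => T

def V (p : G.P) (S : Set G.P) (o : Opt G) : Prop :=
  (K + 1 ≤ G.len p → VM G K (G.anc (K+1) p) S) ∧
  (K + 2 ≤ G.len p → VC G O K S o ∧ p ∈ Arena G o)

abbrev Tr := G.P × Set G.P × Opt G

open Classical in
noncomputable def norm (p : G.P) (S : Set G.P) (o : Opt G) : Tr G :=
  (p, if K + 1 ≤ G.len p then S else ∅, if K + 2 ≤ G.len p then o else Sum.inr ∅)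

abbrev UP : Type := {t : Tr G // norm G K t.1 t.2.1 t.2.2 = t ∧ V G O K t.1 t.2.1 t.2.2}

variable {G O K}

theorem norm_norm (p : G.P) (S : Set G.P) (o : Opt G) :
    norm G K (norm G K p S o).1 (norm G K p S o).2.1 (norm G K p S o).2.2 = norm G K p S o := by
  simp only [norm]
  congr 2
  · split_ifs <;> rfl
  · split_ifs <;> rfl

theorem V_norm {p : G.P} {S : Set G.P} {o : Opt G} (h : V G O K p S o) :
    V G O K (norm G K p S o).1 (norm G K p S o).2.1 (norm G K p S o).2.2 := by
  refine ⟨fun h1 => ?_, fun h1 => ?_⟩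
  · have h1' : K + 1 ≤ G.len p := h1
    simp only [norm, if_pos h1']
    exact h.1 h1
  · have h1' : K + 2 ≤ G.len p := h1
    have h1'' : K + 1 ≤ G.len p := by omega
    simp only [norm, if_pos h1', if_pos h1'']
    exact h.2 h1

noncomputable def mk (p : G.P) (S : Set G.P) (o : Opt G) (h : V G O K p S o) : UP G O K :=
  ⟨norm G K p S o, norm_norm p S o, V_norm h⟩

theorem mk_self (t : UP G O K) : mk t.1.1 t.1.2.1 t.1.2.2 t.2.2 = t := Subtype.ext t.2.1

theorem mk_fst {p : G.P} {S : Set G.P} {o : Opt G} (h : V G O K p S o) : (mk p S o h).1.1 = p := rfl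

theorem mk_S {p : G.P} {S : Set G.P} {o : Opt G} (h : V G O K p S o) (h1 : K + 1 ≤ G.len p) :
    (mk p S o h).1.2.1 = S := if_pos h1

theorem mk_o {p : G.P} {S : Set G.P} {o : Opt G} (h : V G O K p S o) (h1 : K + 2 ≤ G.len p) :
    (mk p S o h).1.2.2 = o := if_pos h1

theorem eq_mk (t : UP G O K) {p : G.P} {S : Set G.P} {o : Opt G} (h : V G O K p S o)
    (hp : t.1.1 = p) (hS : K + 1 ≤ G.len p → t.1.2.1 = S) (ho : K + 2 ≤ G.len p → t.1.2.2 = o) :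
    t = mk p S o h := by
  subst hp
  apply Subtype.ext
  refine t.2.1.symm.trans ?_
  show norm G K _ _ _ = norm G K _ _ _
  simp only [norm]
  congr 2
  · split_ifs with h1
    · exact hS h1
    · rfl
  · split_ifs with h1
    · exact ho h1
    · rfl

theorem V_par {p : G.P} {S : Set G.P} {o : Opt G} (h : V G O K p S o) : V G O K (G.par p) S o := by
  refine ⟨fun h1 => ?_, fun h1 => ?_⟩
  · rw [G.len_par] at h1
    rw [par_eq_anc, anc_anc _ (by omega)]
    exact h.1 (by omega)
  · rw [G.len_par] at h1
    obtain ⟨h2, h3⟩ := h.2 (by omega)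
    refine ⟨h2, ?_⟩
    cases o with
    | inl u =>
      have h3' : G.anc (G.len u) p = G.anc (G.len p) u := h3
      show G.anc (G.len u) (G.par p) = G.anc (G.len (G.par p)) u
      rw [G.len_par]
      rcases le_or_gt (G.len p) (G.len u) with hl | hl
      · rw [anc_of_le p hl] at h3'
        rw [anc_of_le _ (by rw [G.len_par]; omega), par_eq_anc]
        conv_lhs => rw [h3']
        rw [len_anc u hl, anc_anc _ (by omega)]
      · rw [anc_of_le u (by omega)] at h3' ⊢
        rw [par_eq_anc, anc_anc _ (by omega), h3']
    | inr T => exact h2.2.1 p h3 (by omega)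

theorem V_short {p : G.P} (h : G.len p ≤ K) (S : Set G.P) (o : Opt G) : V G O K p S o :=
  ⟨fun h1 => by omega, fun h1 => by omega⟩

theorem desc_VM {a : G.P} (ha : G.len a = K+1) : VM G K a {q | K+1 ≤ G.len q ∧ G.anc (K+1) q = a} where
  root := ⟨ha.ge, anc_of_le _ ha.le⟩
  len := fun q h => h.1
  anc := fun q h => h.2
  par := fun q h h2 => ⟨by rw [G.len_par]; omega, by rw [par_eq_anc, anc_anc _ (by omega)]; exact h.2⟩
  odd := fun q h _ r hr => ⟨by have := hr.2; have := h.1; omega, by rw [anc_child hr h.1]; exact h.2⟩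
  even := fun q h _ => by
    obtain ⟨r, hr⟩ := G.ext q
    exact ⟨r, hr, ⟨by have := hr.2; have := h.1; omega, by rw [anc_child hr h.1]; exact h.2⟩⟩

/-- children in the arena -/
theorem arena_ext {p : G.P} {S : Set G.P} {o : Opt G} (h : V G O K p S o) (hl : K + 2 ≤ G.len p) :
    ∃ q, G.Child p q ∧ V G O K q S o := by
  obtain ⟨h2, h3⟩ := h.2 hl
  suffices hs : ∃ q, G.Child p q ∧ q ∈ Arena G o by
    obtain ⟨q, hq, hqa⟩ := hs
    refine ⟨q, hq, fun _ => ?_, fun _ => ⟨h2, hqa⟩⟩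
    rw [anc_child hq (by omega)]; exact h.1 (by omega)
  cases o with
  | inl u =>
    have h3' : G.anc (G.len u) p = G.anc (G.len p) u := h3
    rcases lt_or_ge (G.len p) (G.len u) with hl | hl
    · rw [anc_of_le p hl.le] at h3'
      refine ⟨G.anc (G.len p + 1) u, ?_, ?_⟩
      · have := child_anc u (n := G.len p) hl
        rwa [← h3'] at this
      · show G.anc _ _ = G.anc _ _
        rw [len_anc u hl, anc_of_le _ (by rw [len_anc u hl]; exact hl)]
    · obtain ⟨q, hq⟩ := G.ext p
      refine ⟨q, hq, ?_⟩
      show G.anc _ _ = G.anc _ _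
      rw [anc_child hq hl, h3', anc_of_le u hl, anc_of_le u (by have := hq.2; omega)]
  | inr T =>
    cases hb : (G.len p).bodd with
    | true => exact h2.2.2.2 p h3 hb
    | false =>
      obtain ⟨r, hr, hrS⟩ := (h.1 (by omega)).even p (h2.1 p h3).1 hb
      exact ⟨r, hr, h2.2.2.1 p h3 hb r hr hrS⟩

end Unr

open Unr in
noncomputable def Unr.game (G : Gm) (O : Set (ℕ → G.P)) (K : ℕ) (hK : K.bodd = false) : Gm where
  P := UP G O K
  len := fun t => G.len t.1.1
  par := fun t => mk (G.par t.1.1) t.1.2.1 t.1.2.2 (V_par t.2.2)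
  len_par := fun t => G.len_par _
  par_zero := fun t h => by
    symm
    apply eq_mk
    · exact (G.par_zero _ h).symm
    · intros; rfl
    · intros; rfl
  ext := fun t => by
    obtain ⟨⟨p, S, o⟩, hn, hV⟩ := t
    have key : ∃ q S' o', G.Child p q ∧ V G O K q S' o' ∧ (K+1 ≤ G.len p → S' = S) ∧
        (K+2 ≤ G.len p → o' = o) := by
      rcases lt_trichotomy (G.len p) K with h | h | h
      · obtain ⟨q, hq⟩ := G.ext p
        exact ⟨q, S, o, hq, V_short (by have := hq.2; omega) _ _, fun _ => rfl, fun _ => rfl⟩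
      · obtain ⟨q, hq⟩ := G.ext p
        have hq2 := hq.2
        refine ⟨q, {r | K+1 ≤ G.len r ∧ G.anc (K+1) r = q}, o, hq, ⟨fun _ => ?_, fun h => by omega⟩,
          fun h => by omega, fun h => by omega⟩
        rw [anc_of_le q (by omega)]
        exact desc_VM (by omega)
      · rcases Nat.lt_or_ge (K+1) (G.len p) with h1 | h1
        · obtain ⟨q, h2, h3⟩ := arena_ext hV h1
          exact ⟨q, S, o, h2, h3, fun _ => rfl, fun _ => rfl⟩
        · have hl : G.len p = K+1 := by omega
          have hM : VM G K (G.anc (K+1) p) S := hV.1 h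
          rw [anc_of_le p h1] at hM
          by_cases hu : ∃ u ∈ S, Dead G O u ∧ K+2 ≤ G.len u
          · obtain ⟨u, hu1, hu2, hu3⟩ := hu
            refine ⟨G.anc (K+2) u, S, Sum.inl u, ?_, ⟨fun _ => ?_, fun _ => ⟨⟨hu1, hu2, hu3⟩, ?_⟩⟩,
              fun _ => rfl, fun h => by omega⟩
            · have := child_anc u (n := K+1) hu3
              rwa [hM.anc u hu1] at this
            · rw [anc_anc _ (by omega), hM.anc u hu1]; exact hM
            · show G.anc _ _ = G.anc _ _
              rw [len_anc u hu3, anc_of_le _ (by rw [len_anc u hu3]; exact hu3)]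
          · push Not at hu
            obtain ⟨q, hq⟩ := G.ext p
            have hb : (G.len p).bodd = true := by rw [hl]; simp [hK]
            have hqS : q ∈ S := hM.odd p hM.root hb q hq
            have hq2 := hq.2
            refine ⟨q, S, Sum.inr {r ∈ S | K+2 ≤ G.len r}, hq,
              ⟨fun _ => ?_, fun _ => ⟨⟨?_, ?_, ?_, ?_⟩, ?_⟩⟩, fun _ => rfl, fun h => by omega⟩
            · rw [anc_child hq hl.ge, anc_of_le p h1]; exact hM
            · rintro r ⟨hr, hr2⟩
              exact ⟨hr, fun hd => absurd hr2 (by have := hu r hr hd; omega), hr2⟩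
            · rintro r ⟨hr, hr2⟩ hr3
              exact ⟨hM.par r hr hr2, by rw [G.len_par]; omega⟩
            · rintro r ⟨hr, hr2⟩ _ s hs hsS
              exact ⟨hsS, by have := hs.2; omega⟩
            · rintro r ⟨hr, hr2⟩ hb
              obtain ⟨s, hs⟩ := G.ext r
              exact ⟨s, hs, hM.odd r hr hb s hs, by have := hs.2; omega⟩
            · exact ⟨hqS, by omega⟩
    obtain ⟨q, S', o', hq, hV', hS, ho⟩ := key
    refine ⟨mk q S' o' hV', ?_, hq.2⟩
    symm
    apply eq_mk
    · exact hq.1.symm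
    · intro h
      rw [mk_fst, hq.1] at h
      rw [mk_S hV' (by have := hq.2; omega)]
      exact (hS h).symm
    · intro h
      rw [mk_fst, hq.1] at h
      rw [mk_o hV' (by have := hq.2; omega)]
      exact (ho h).symm
end BG

namespace BG
open Gm

namespace Unr
variable {G : Gm} {O : Set (ℕ → G.P)} {K : ℕ} (hK : K.bodd = false)

theorem child_iff {t t' : UP G O K} (h : (game G O K hK).Child t t') :
    G.Child t.1.1 t'.1.1 ∧ (K+1 ≤ G.len t.1.1 → t'.1.2.1 = t.1.2.1) ∧
      (K+2 ≤ G.len t.1.1 → t'.1.2.2 = t.1.2.2) := by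
  obtain ⟨h1, h2⟩ := h
  have h1' : mk (G.par t'.1.1) t'.1.2.1 t'.1.2.2 (V_par t'.2.2) = t := h1
  rw [← h1']
  refine ⟨⟨rfl, ?_⟩, fun h => ?_, fun h => ?_⟩
  · rw [← h1'] at h2; exact h2
  · exact (mk_S (V_par t'.2.2) h).symm
  · exact (mk_o (V_par t'.2.2) h).symm

open Classical in
noncomputable def ev (σ : (game G O K hK).Strat) (p : G.P) (S : Set G.P) (o : Opt G) : Tr G :=
  if h : V G O K p S o then (show UP G O K from σ.1 (mk p S o h)).1 else (G.dflt.1 p, ∅, Sum.inr ∅)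

theorem ev_child (σ : (game G O K hK).Strat) (p : G.P) (S : Set G.P) (o : Opt G) :
    G.Child p (ev hK σ p S o).1 := by
  unfold ev
  split_ifs with h
  · exact (child_iff hK (σ.2 (mk p S o h))).1
  · exact G.dflt.2 p

theorem ev_loc (σ σ' : (game G O K hK).Strat) (N : ℕ)
    (h : ∀ q, (game G O K hK).len q ≤ N → σ.1 q = σ'.1 q) (p : G.P) (hp : G.len p ≤ N)
    (S : Set G.P) (o : Opt G) : ev hK σ p S o = ev hK σ' p S o := by
  unfold ev
  split_ifs with h1
  · rw [h (mk p S o h1) hp]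
  · rfl

theorem ev_spec (σ : (game G O K hK).Strat) {p : G.P} {S : Set G.P} {o : Opt G}
    (h : V G O K p S o) : V G O K (ev hK σ p S o).1 (ev hK σ p S o).2.1 (ev hK σ p S o).2.2 ∧
      (K+1 ≤ G.len p → (ev hK σ p S o).2.1 = S) ∧ (K+2 ≤ G.len p → (ev hK σ p S o).2.2 = o) := by
  unfold ev
  rw [dif_pos h]
  have := child_iff hK (σ.2 (mk p S o h))
  refine ⟨(show UP G O K from σ.1 (mk p S o h)).2.2, fun h1 => ?_, fun h1 => ?_⟩
  · exact (this.2.1 h1).trans (mk_S h h1)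
  · exact (this.2.2 h1).trans (mk_o h h1)

theorem V_irrel {p : G.P} {S S' : Set G.P} {o o' : Opt G} (h : V G O K p S o)
    (hS : K+1 ≤ G.len p → S = S') (ho : K+2 ≤ G.len p → o = o') : V G O K p S' o' := by
  refine ⟨fun h1 => ?_, fun h1 => ?_⟩
  · rw [← hS h1]; exact h.1 h1
  · rw [← hS (by omega), ← ho h1]; exact h.2 h1

theorem ev_irrel (σ : (game G O K hK).Strat) {p : G.P} {S S' : Set G.P} {o o' : Opt G}
    (hS : K+1 ≤ G.len p → S = S') (ho : K+2 ≤ G.len p → o = o') :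
    ev hK σ p S o = ev hK σ p S' o' := by
  unfold ev
  by_cases h : V G O K p S o
  · have h' := V_irrel h hS ho
    rw [dif_pos h, dif_pos h']
    have : mk p S o h = mk p S' o' h' :=
      eq_mk _ _ rfl (fun h1 => by rw [mk_S h h1, hS h1]) (fun h1 => by rw [mk_o h h1, ho h1])
    rw [this]
  · have h' : ¬ V G O K p S' o' :=
      fun h' => h (V_irrel h' (fun h1 => (hS h1).symm) (fun h1 => (ho h1).symm))
    rw [dif_neg h, dif_neg h']

theorem assemble (b : Bool) (σ : (game G O K hK).Strat) {x : ℕ → G.P} (hx : G.IsRun x)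
    (S : Set G.P) (o : Opt G) (hV : ∀ n, V G O K (x n) S o)
    (h1 : ∀ n, n.bodd = b → (ev hK σ (x n) S o).1 = x (n+1))
    (h2 : K.bodd = b → (ev hK σ (x K) S o).2.1 = S)
    (h3 : (K+1).bodd = b → (ev hK σ (x (K+1)) S o).2.2 = o) :
    ∃ x', (game G O K hK).IsRun x' ∧ (game G O K hK).Follows b σ x' ∧
      ∀ n, (show UP G O K from x' n).1.1 = x n := by
  refine ⟨fun n => mk (x n) S o (hV n), ?_, ?_, fun n => rfl⟩
  · intro n
    refine ⟨(hx n).1, ?_⟩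
    have hl := (hx n).1
    have hl' := (hx (n+1)).1
    apply eq_mk
    · exact (hx n).2
    · intro h
      refine (mk_S (V_par (hV (n+1)|> fun h => V_norm h)) ?_).trans (mk_S (hV (n+1)) (by omega))
      show _ ≤ G.len (G.par (x (n+1))); rw [(hx n).2]; exact h
    · intro h
      refine (mk_o (V_par (hV (n+1)|> fun h => V_norm h)) ?_).trans (mk_o (hV (n+1)) (by omega))
      show _ ≤ G.len (G.par (x (n+1))); rw [(hx n).2]; exact h
  · intro n hn
    symm
    have hl := (hx n).1
    have hl' := (hx (n+1)).1
    have e : (show UP G O K from σ.1 (mk (x n) S o (hV n))).1 = ev hK σ (x n) S o := by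
      unfold ev; rw [dif_pos (hV n)]
    apply eq_mk
    · exact (congrArg Prod.fst e).trans (h1 n hn)
    · intro h
      refine (congrArg (fun t => t.2.1) e).trans ?_
      rcases Nat.lt_or_ge K n with h4 | h4
      · exact (ev_spec hK σ (hV n)).2.1 (by omega)
      · have : n = K := by omega
        subst this
        exact h2 hn
    · intro h
      refine (congrArg (fun t => t.2.2) e).trans ?_
      rcases Nat.lt_or_ge (K+1) n with h4 | h4
      · exact (ev_spec hK σ (hV n)).2.2 (by omega)
      · have : n = K+1 := by omega
        subst this
        exact h3 hn

variable (G O K)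
def DS (S : Set G.P) : Set G.P := {q ∈ S | Dead G O q}

def Sig2 (S : Set G.P) (b : G.P) : Set G.P :=
  {q | q ∈ S ∧ K+2 ≤ G.len q ∧ G.anc (K+2) q = b ∧
    ∀ n, K+2 ≤ n → n ≤ G.len q → G.anc n q ∉ AttS G false S (DS G O S)}

open Classical in
noncomputable def PhiI (S : Set G.P) (e : Set G.P → Opt G → G.P) (p : G.P) : G.P :=
  if h : ∃ n, K+2 ≤ n ∧ n ≤ G.len p ∧ G.anc n p ∈ DS G O S then e S (Sum.inl (G.anc (Nat.find h) p))
  else if p ∈ AttS G false S (DS G O S) then amv G false S (DS G O S) p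
  else e S (Sum.inr (Sig2 G O K S (G.anc (K+2) p)))

def US (d : Set G.P → Tr G) (a : G.P) : Set G.P :=
  {u | K+2 ≤ G.len u ∧ ∃ S, VM G K a S ∧ (d S).2.2 = Sum.inl u}

open Classical in
noncomputable def selS (d : Set G.P → Tr G) (a u : G.P) : Set G.P :=
  if h : ∃ S, VM G K a S ∧ (d S).2.2 = Sum.inl u then h.choose else ∅

def SigS (U : Set G.P) (a : G.P) : Set G.P :=
  {q | K+1 ≤ G.len q ∧ G.anc (K+1) q = a ∧
    ∀ n, K+1 ≤ n → n ≤ G.len q → G.anc n q ∉ AttS G true Set.univ U}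

open Classical in
noncomputable def PhiII (d : Set G.P → Tr G) (e : Set G.P → Opt G → G.P) (a p : G.P) : G.P :=
  if h : ∃ n, K+2 ≤ n ∧ n ≤ G.len p ∧ G.anc n p ∈ US G K d a then
    e (selS G K d a (G.anc (Nat.find h) p)) (Sum.inl (G.anc (Nat.find h) p))
  else if p ∈ AttS G true Set.univ (US G K d a) then amv G true Set.univ (US G K d a) p
  else e (SigS G K (US G K d a) a) (d (SigS G K (US G K d a) a)).2.2

variable {G O K}

noncomputable def phi (b : Bool) (σ : (game G O K hK).Strat) (p : G.P) : G.P :=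
  if G.len p ≤ K then (ev hK σ p ∅ (Sum.inr ∅)).1 else
  match b with
  | false => PhiI G O K (ev hK σ (G.anc K p) ∅ (Sum.inr ∅)).2.1 (fun S o => (ev hK σ p S o).1) p
  | true => PhiII G K (fun S => ev hK σ (G.anc (K+1) p) S (Sum.inr ∅))
      (fun S o => (ev hK σ p S o).1) (G.anc (K+1) p) p

theorem phi_child (b : Bool) (σ : (game G O K hK).Strat) (p : G.P) : G.Child p (phi hK b σ p) := by
  unfold phi
  split_ifs with h
  · exact ev_child hK σ _ _ _
  · cases b with
    | false =>
      dsimp only [PhiI]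
      split_ifs with h1 h2
      · exact ev_child hK σ _ _ _
      · exact amv_child _ _ _ _
      · exact ev_child hK σ _ _ _
    | true =>
      dsimp only [PhiII]
      split_ifs with h1 h2
      · exact ev_child hK σ _ _ _
      · exact amv_child _ _ _ _
      · exact ev_child hK σ _ _ _

theorem phi_loc (b : Bool) (σ σ' : (game G O K hK).Strat) (N : ℕ)
    (h : ∀ q, (game G O K hK).len q ≤ N → σ.1 q = σ'.1 q) (p : G.P) (hp : G.len p ≤ N) :
    phi hK b σ p = phi hK b σ' p := by
  have he : ∀ S o, ev hK σ p S o = ev hK σ' p S o := fun S o => ev_loc hK σ σ' N h p hp S o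
  unfold phi
  split_ifs with h1
  · rw [he]
  · have h2 : ∀ S o, ev hK σ (G.anc K p) S o = ev hK σ' (G.anc K p) S o :=
      fun S o => ev_loc hK σ σ' N h _ (by rw [len_anc p (by omega)]; omega) S o
    have h3 : ∀ S o, ev hK σ (G.anc (K+1) p) S o = ev hK σ' (G.anc (K+1) p) S o :=
      fun S o => ev_loc hK σ σ' N h _ (by rw [len_anc p (by omega)]; omega) S o
    simp only [he, h2, h3]

theorem arena_next {u q r : G.P} (hc : G.Child q r) (hr : r ∈ Arena G (Sum.inl u))
    (hl : G.len q < G.len u) : r = G.anc (G.len q + 1) u := by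
  have h : G.anc (G.len u) r = G.anc (G.len r) u := hr
  rw [anc_of_le r (by have := hc.2; omega), hc.2] at h
  exact h

theorem run_arena {x : ℕ → G.P} (hx : G.IsRun x) (m n : ℕ) : x n ∈ Arena G (Sum.inl (x m)) := by
  show G.anc (G.len (x m)) (x n) = G.anc (G.len (x n)) (x m)
  rw [(hx m).1, (hx n).1]
  rcases le_total m n with h | h
  · rw [hx.anc h, anc_of_le _ (by rw [(hx m).1]; exact h)]
  · rw [hx.anc h, anc_of_le _ (by rw [(hx n).1]; exact h)]

theorem find_run {x : ℕ → G.P} (hx : G.IsRun x) {U : Set G.P} {m : ℕ} (hm : K+2 ≤ m)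
    (hmU : x m ∈ U) (hmin : ∀ j, K+2 ≤ j → j < m → x j ∉ U) {n : ℕ} (hn : m ≤ n) :
    ∃ h : (∃ j, K+2 ≤ j ∧ j ≤ G.len (x n) ∧ G.anc j (x n) ∈ U), 
      ∀ inst : DecidablePred (fun j => K+2 ≤ j ∧ j ≤ G.len (x n) ∧ G.anc j (x n) ∈ U),
      @Nat.find _ inst h = m := by
  have h0 : K+2 ≤ m ∧ m ≤ G.len (x n) ∧ G.anc m (x n) ∈ U :=
    ⟨hm, by rw [(hx n).1]; exact hn, by rw [hx.anc hn]; exact hmU⟩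
  refine ⟨⟨m, h0⟩, fun inst => ?_⟩
  rw [Nat.find_eq_iff]
  refine ⟨h0, fun j hj hc => ?_⟩
  obtain ⟨h1, h2, h3⟩ := hc
  rw [(hx n).1] at h2
  rw [hx.anc h2] at h3
  exact hmin j h1 hj h3

theorem nofind_run {x : ℕ → G.P} (hx : G.IsRun x) {U : Set G.P} 
    (hno : ∀ j, K+2 ≤ j → x j ∉ U) (n : ℕ) :
    ¬ (∃ j, K+2 ≤ j ∧ j ≤ G.len (x n) ∧ G.anc j (x n) ∈ U) := by
  rintro ⟨j, h1, h2, h3⟩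
  rw [(hx n).1] at h2
  rw [hx.anc h2] at h3
  exact hno j h1 h3

end Unr
end BG

namespace BG
open Gm

namespace Unr
variable {G : Gm} {O : Set (ℕ → G.P)} {K : ℕ} (hK : K.bodd = false)

theorem even_gt {n : ℕ} (hK : K.bodd = false) (hn : n.bodd = false) (h : K < n) : K + 2 ≤ n := by
  by_contra hc
  have : n = K+1 := by omega
  subst this
  simp [hK] at hn

theorem Sig2_VC {S : Set G.P} {a b : G.P} (hM : VM G K a S) :
    VC G O K S (Sum.inr (Sig2 G O K S b)) := by
  refine ⟨?_, ?_, ?_, ?_⟩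
  · rintro q ⟨h1, h2, h3, h4⟩
    refine ⟨h1, fun hd => h4 (G.len q) h2 le_rfl ?_, h2⟩
    rw [anc_len]
    exact AttS.base ⟨h1, hd⟩
  · rintro q ⟨h1, h2, h3, h4⟩ h5
    refine ⟨hM.par q h1 h2, by rw [G.len_par]; omega, ?_, ?_⟩
    · rw [par_eq_anc, anc_anc _ (by omega)]; exact h3
    · intro n hn hn2
      rw [G.len_par] at hn2
      rw [par_eq_anc, anc_anc _ hn2]
      exact h4 n hn (by omega)
  · rintro q ⟨h1, h2, h3, h4⟩ hb r hr hrS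
    have hr2 := hr.2
    refine ⟨hrS, by omega, by rw [anc_child hr h2]; exact h3, fun n hn hn2 => ?_⟩
    rcases Nat.lt_or_ge (G.len q) n with h | h
    · rw [anc_of_le r (by omega)]
      intro hA
      have := h4 _ h2 le_rfl
      rw [anc_len] at this
      exact this (AttS.own hb hr hrS hA)
    · rw [anc_child hr h]; exact h4 n hn h
  · rintro q ⟨h1, h2, h3, h4⟩ hb
    have hnA := h4 _ h2 le_rfl
    rw [anc_len] at hnA
    have : ∃ r, G.Child q r ∧ r ∉ AttS G false S (DS G O S) := by
      by_contra hc
      push Not at hc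
      exact hnA (AttS.opp (by rw [hb]; simp) hc)
    obtain ⟨r, hr, hrA⟩ := this
    have hr2 := hr.2
    refine ⟨r, hr, hM.odd q h1 hb r hr, by omega, by rw [anc_child hr h2]; exact h3, fun n hn hn2 => ?_⟩
    rcases Nat.lt_or_ge (G.len q) n with h | h
    · rw [anc_of_le r (by omega)]; exact hrA
    · rw [anc_child hr h]; exact h4 n hn h

theorem SigS_VM {U : Set G.P} {a : G.P} (hl : G.len a = K+1) (ha : a ∉ AttS G true Set.univ U) :
    VM G K a (SigS G K U a) where
  root := ⟨hl.ge, anc_of_le _ hl.le, fun n hn hn2 => by rw [anc_of_le a (by omega)]; exact ha⟩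
  len := fun q h => h.1
  anc := fun q h => h.2.1
  par := by
    rintro q ⟨h1, h2, h3⟩ h4
    refine ⟨by rw [G.len_par]; omega, by rw [par_eq_anc, anc_anc _ (by omega)]; exact h2, ?_⟩
    intro n hn hn2
    rw [G.len_par] at hn2
    rw [par_eq_anc, anc_anc _ hn2]
    exact h3 n hn (by omega)
  odd := by
    rintro q ⟨h1, h2, h3⟩ hb r hr
    have hr2 := hr.2
    refine ⟨by omega, by rw [anc_child hr h1]; exact h2, fun n hn hn2 => ?_⟩
    rcases Nat.lt_or_ge (G.len q) n with h | h
    · rw [anc_of_le r (by omega)]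
      intro hA
      have := h3 _ h1 le_rfl
      rw [anc_len] at this
      exact this (AttS.own hb hr trivial hA)
    · rw [anc_child hr h]; exact h3 n hn h
  even := by
    rintro q ⟨h1, h2, h3⟩ hb
    have hnA := h3 _ h1 le_rfl
    rw [anc_len] at hnA
    have : ∃ r, G.Child q r ∧ r ∉ AttS G true Set.univ U := by
      by_contra hc
      push Not at hc
      exact hnA (AttS.opp (by rw [hb]; simp) hc)
    obtain ⟨r, hr, hrA⟩ := this
    have hr2 := hr.2
    refine ⟨r, hr, by omega, by rw [anc_child hr h1]; exact h2, fun n hn hn2 => ?_⟩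
    rcases Nat.lt_or_ge (G.len q) n with h | h
    · rw [anc_of_le r (by omega)]; exact hrA
    · rw [anc_child hr h]; exact h3 n hn h

theorem liftI (σ : (game G O K hK).Strat) {x : ℕ → G.P} (hx : G.IsRun x)
    (hf : ∀ n, n.bodd = false → x (n+1) = phi hK false σ (x n)) :
    ∃ x', (game G O K hK).IsRun x' ∧ (game G O K hK).Follows false σ x' ∧
      ∀ n, (show UP G O K from x' n).1.1 = x n := by
  classical
  have hl : ∀ n, G.len (x n) = n := fun n => (hx n).1
  set t1 := ev hK σ (x K) ∅ (Sum.inr ∅) with ht1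
  set S := t1.2.1 with hS
  have hVK : V G O K (x K) ∅ (Sum.inr ∅) := V_short (hl K).le _ _
  have hlow : ∀ n, n ≤ K → n.bodd = false → ∀ S o, (ev hK σ (x n) S o).1 = x (n+1) := by
    intro n hn hb S o
    rw [hf n hb, phi, if_pos (by rw [hl]; exact hn)]
    rw [ev_irrel hK σ (S := S) (S' := ∅) (o := o) (o' := Sum.inr ∅)]
    · rw [hl]; intro h; omega
    · rw [hl]; intro h; omega
  have hx1 : t1.1 = x (K+1) := hlow K le_rfl hK _ _
  have hM : VM G K (x (K+1)) S := by
    have h := (ev_spec hK σ hVK).1.1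
    rw [← ht1, hx1, hl, anc_of_le _ (hl _).le] at h
    exact h le_rfl
  have hMn : ∀ n, K+1 ≤ n → VM G K (G.anc (K+1) (x n)) S := by
    intro n hn; rw [hx.anc hn]; exact hM
  have hhigh : ∀ n, K < n → n.bodd = false →
      x (n+1) = PhiI G O K S (fun S o => (ev hK σ (x n) S o).1) (x n) := by
    intro n hn hb
    rw [hf n hb, phi, if_neg (by rw [hl]; omega)]
    rw [hx.anc hn.le]
  have hS2 : ∀ o, (ev hK σ (x K) S o).2.1 = S := by
    intro o
    rw [ev_irrel hK σ (S := S) (S' := ∅) (o := o) (o' := Sum.inr ∅)]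
    · rw [hl]; intro h; omega
    · rw [hl]; intro h; omega
  have hodd : ∀ o, (K+1).bodd = false → (ev hK σ (x (K+1)) S o).2.2 = o := by
    intro o h; simp [hK] at h
  by_cases hA : ∃ m, K+2 ≤ m ∧ x m ∈ DS G O S
  · let m := Nat.find hA
    obtain ⟨hm1, hm2⟩ : K+2 ≤ m ∧ x m ∈ DS G O S := Nat.find_spec hA
    have hmin : ∀ j, K+2 ≤ j → j < m → x j ∉ DS G O S :=
      fun j h1 h2 h3 => Nat.find_min hA h2 ⟨h1, h3⟩
    have hV : ∀ n, V G O K (x n) S (Sum.inl (x m)) := by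
      intro n
      refine ⟨fun h => hMn n (by rw [hl] at h; exact h), fun h => ⟨⟨hm2.1, hm2.2, by rw [hl]; exact hm1⟩, run_arena hx m n⟩⟩
    refine assemble hK false σ hx S (Sum.inl (x m)) hV ?_ (fun _ => hS2 _) (hodd _)
    intro n hb
    rcases Nat.lt_or_ge K n with hn | hn
    · have hn2 := even_gt hK hb hn
      rcases Nat.lt_or_ge n m with hnm | hnm
      · have hsp := ev_spec hK σ (hV n)
        have hc := ev_child hK σ (x n) S (Sum.inl (x m))
        have h1 := (hsp.1.2 (by rw [hc.2, hl]; omega)).2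
        rw [hsp.2.2 (by rw [hl]; exact hn2)] at h1
        rw [arena_next hc h1 (by rw [hl, hl]; exact hnm), hl, hx.anc hnm]
      · rw [hhigh n hn hb]
        obtain ⟨h, hfind⟩ := find_run hx hm1 hm2 hmin hnm
        unfold PhiI
        rw [dif_pos h, hfind, hx.anc hnm]
    · exact hlow n hn hb _ _
  · push Not at hA
    have hno := nofind_run hx hA
    have hnA : ∀ n, K+2 ≤ n → x n ∉ AttS G false S (DS G O S) := by
      intro n hn hat
      obtain ⟨m, hm1, hm2⟩ := att_hits hx hat (fun m hm hb hat _ => by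
        rw [hhigh m (by omega) hb, PhiI, dif_neg (hno m), if_pos hat])
      exact hA m (by omega) hm2
    set T := Sig2 G O K S (x (K+2)) with hT
    have hmem : ∀ n, K+1 ≤ n → x n ∈ S → K + 2 ≤ n → x n ∈ T := by
      intro n _ hn hn2
      refine ⟨hn, by rw [hl]; exact hn2, hx.anc hn2, fun j hj hj2 => ?_⟩
      rw [hl] at hj2
      rw [hx.anc hj2]; exact hnA j hj
    have hVof : ∀ n, x n ∈ S ∨ n ≤ K → V G O K (x n) S (Sum.inr T) := by
      intro n hn
      refine ⟨fun h => hMn n (by rw [hl] at h; exact h), fun h => ⟨Sig2_VC hM, ?_⟩⟩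
      rw [hl] at h
      exact hmem n (by omega) (by rcases hn with hn | hn; exact hn; omega) h
    have hnext : ∀ n, K < n → n.bodd = false → (ev hK σ (x n) S (Sum.inr T)).1 = x (n+1) := by
      intro n hn hb
      have hn2 := even_gt hK hb hn
      rw [hhigh n hn hb, PhiI, dif_neg (hno n), if_neg (hnA n hn2), hx.anc hn2]
    have hxS : ∀ n, K+1 ≤ n → x n ∈ S := by
      intro n hn
      induction n, hn using Nat.le_induction with
      | base => exact hM.root
      | succ n hn ih =>
        cases hb : n.bodd with
        | true => exact hM.odd _ ih (by rw [hl]; exact hb) _ (hx.child n)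
        | false =>
          have hn2 := even_gt hK hb hn
          have hsp := ev_spec hK σ (hVof n (Or.inl ih))
          have h1 := (hsp.1.2 (by rw [hnext n hn hb, hl]; omega)).2
          rw [hsp.2.2 (by rw [hl]; exact hn2), hnext n hn hb] at h1
          exact h1.1
    have hV : ∀ n, V G O K (x n) S (Sum.inr T) := by
      intro n
      apply hVof
      rcases Nat.lt_or_ge K n with hn | hn
      · exact Or.inl (hxS n hn)
      · exact Or.inr hn
    refine assemble hK false σ hx S (Sum.inr T) hV ?_ (fun _ => hS2 _) (hodd _)
    intro n hb
    rcases Nat.lt_or_ge K n with hn | hn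
    · exact hnext n hn hb
    · exact hlow n hn hb _ _

theorem liftII (σ : (game G O K hK).Strat) {x : ℕ → G.P} (hx : G.IsRun x)
    (hf : ∀ n, n.bodd = true → x (n+1) = phi hK true σ (x n)) :
    ∃ x', (game G O K hK).IsRun x' ∧ (game G O K hK).Follows true σ x' ∧
      ∀ n, (show UP G O K from x' n).1.1 = x n := by
  classical
  have hl : ∀ n, G.len (x n) = n := fun n => (hx n).1
  have hlow : ∀ n, n ≤ K → n.bodd = true → ∀ S o, (ev hK σ (x n) S o).1 = x (n+1) := by
    intro n hn hb S o
    rw [hf n hb, phi, if_pos (by rw [hl]; exact hn)]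
    rw [ev_irrel hK σ (S := S) (S' := ∅) (o := o) (o' := Sum.inr ∅)]
    · rw [hl]; intro h; omega
    · rw [hl]; intro h; omega
  set a := x (K+1) with ha
  set d : Set G.P → Tr G := fun S => ev hK σ a S (Sum.inr ∅) with hd
  have hla : G.len a = K+1 := hl _
  have hanca : G.anc (K+1) a = a := anc_of_le _ hla.le
  have hdo : ∀ S o, ev hK σ a S o = d S := by
    intro S o
    exact ev_irrel hK σ (fun _ => rfl) (fun h => by omega)
  have hVa : ∀ S, VM G K a S → ∀ o, V G O K a S o := by
    intro S hS o
    exact ⟨fun _ => by rw [hanca]; exact hS, fun h => by omega⟩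
  have hdV : ∀ S, VM G K a S → VC G O K S (d S).2.2 ∧ (d S).1 ∈ Arena G (d S).2.2 := by
    intro S hS
    have hsp := ev_spec hK σ (hVa S hS (Sum.inr ∅))
    have hc := ev_child hK σ a S (Sum.inr ∅)
    have h1 := hsp.1.2 (by rw [hc.2]; omega)
    rw [hsp.2.1 (by omega)] at h1
    exact h1
  set U := US G K d a with hU
  have hhigh : ∀ n, K < n → n.bodd = true →
      x (n+1) = PhiII G K d (fun S o => (ev hK σ (x n) S o).1) a (x n) := by
    intro n hn hb
    rw [hf n hb, phi, if_neg (by rw [hl]; omega)]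
    rw [hx.anc hn]
  have heven : ∀ S o, K.bodd = true → (ev hK σ (x K) S o).2.1 = S := by
    intro S o h; simp [hK] at h
  by_cases hA : ∃ m, K+2 ≤ m ∧ x m ∈ U
  · let m := Nat.find hA
    obtain ⟨hm1, hm2⟩ : K+2 ≤ m ∧ x m ∈ U := Nat.find_spec hA
    have hmin : ∀ j, K+2 ≤ j → j < m → x j ∉ U :=
      fun j h1 h2 h3 => Nat.find_min hA h2 ⟨h1, h3⟩
    set S := selS G K d a (x m) with hS
    have hSsp : VM G K a S ∧ (d S).2.2 = Sum.inl (x m) := by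
      rw [hS, selS, dif_pos hm2.2]
      exact hm2.2.choose_spec
    have hC : VC G O K S (Sum.inl (x m)) := by
      have := (hdV S hSsp.1).1
      rwa [hSsp.2] at this
    have hV : ∀ n, V G O K (x n) S (Sum.inl (x m)) := by
      intro n
      refine ⟨fun h => ?_, fun h => ⟨hC, run_arena hx m n⟩⟩
      rw [hl] at h
      rw [hx.anc h]; exact hSsp.1
    refine assemble hK true σ hx S (Sum.inl (x m)) hV ?_ (heven _ _) ?_
    · intro n hb
      rcases Nat.lt_or_ge K n with hn | hn
      · rcases Nat.lt_or_ge n m with hnm | hnm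
        · have hsp := ev_spec hK σ (hV n)
          have hc := ev_child hK σ (x n) S (Sum.inl (x m))
          have h1 := (hsp.1.2 (by rw [hc.2, hl]; omega)).2
          have h2 : (ev hK σ (x n) S (Sum.inl (x m))).2.2 = Sum.inl (x m) := by
            rcases Nat.lt_or_ge (K+1) n with h3 | h3
            · exact hsp.2.2 (by rw [hl]; exact h3)
            · have : n = K+1 := by omega
              subst this
              rw [← ha, hdo]; exact hSsp.2
          rw [h2] at h1
          rw [arena_next hc h1 (by rw [hl, hl]; exact hnm), hl, hx.anc hnm]
        · rw [hhigh n hn hb]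
          obtain ⟨h, hfind⟩ := find_run hx hm1 hm2 hmin hnm
          unfold PhiII
          rw [dif_pos h, hfind, hx.anc hnm]
      · exact hlow n hn hb _ _
    · intro _
      rw [← ha, hdo]; exact hSsp.2
  · push Not at hA
    have hno := nofind_run hx hA
    have hUlen : ∀ m, x m ∈ U → K+2 ≤ m := fun m hm => by have := hm.1; rwa [hl] at this
    have hnA : ∀ n, K+1 ≤ n → x n ∉ AttS G true Set.univ U := by
      intro n hn hat
      obtain ⟨m, hm1, hm2⟩ := att_hits hx hat (fun m hm hb hat _ => by
        rw [hhigh m (by omega) hb, PhiII, dif_neg (hno m), if_pos hat])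
      exact hA m (hUlen m hm2) hm2
    set S := SigS G K U a with hS
    have hM : VM G K a S := SigS_VM hla (hnA _ le_rfl)
    have hxS : ∀ n, K+1 ≤ n → x n ∈ S := by
      intro n hn
      refine ⟨by rw [hl]; exact hn, hx.anc hn, fun j hj hj2 => ?_⟩
      rw [hl] at hj2
      rw [hx.anc hj2]; exact hnA j hj
    obtain ⟨T, hT⟩ : ∃ T, (d S).2.2 = Sum.inr T := by
      rcases ho : (d S).2.2 with u | T
      · exfalso
        have h1 := (hdV S hM).1
        rw [ho] at h1
        have h2 := h1.1.2.2 (G.len u) (h1.1.1) le_rfl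
        rw [anc_len] at h2
        exact h2 (AttS.base ⟨h1.2.2, S, hM, ho⟩)
      · exact ⟨T, rfl⟩
    have hC := (hdV S hM).1
    have hAr := (hdV S hM).2
    rw [hT] at hC hAr
    have hnext : ∀ n, K < n → n.bodd = true → (ev hK σ (x n) S (Sum.inr T)).1 = x (n+1) := by
      intro n hn hb
      rw [hhigh n hn hb, PhiII, dif_neg (hno n), if_neg (hnA n hn), ← hU, ← hS, hT]
    have hVof : ∀ n, (K + 2 ≤ n → x n ∈ T) → V G O K (x n) S (Sum.inr T) := by
      intro n hn
      refine ⟨fun h => ?_, fun h => ⟨hC, ?_⟩⟩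
      · rw [hl] at h; rw [hx.anc h]; exact hM
      · rw [hl] at h; exact hn h
    have hxT : ∀ n, K+2 ≤ n → x n ∈ T := by
      intro n hn
      induction n, hn using Nat.le_induction with
      | base =>
        have h1 := hnext (K+1) (by omega) (by simp [hK])
        rw [← ha, hdo] at h1
        rw [← h1]; exact hAr
      | succ n hn ih =>
        cases hb : n.bodd with
        | false => exact hC.2.2.1 _ ih (by rw [hl]; exact hb) _ (hx.child n) (hxS _ (by omega))
        | true =>
          have hsp := ev_spec hK σ (hVof n (fun _ => ih))
          have h1 := (hsp.1.2 (by rw [hnext n (by omega) hb, hl]; omega)).2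
          rw [hsp.2.2 (by rw [hl]; exact hn), hnext n (by omega) hb] at h1
          exact h1
    refine assemble hK true σ hx S (Sum.inr T) (fun n => hVof n (hxT n)) ?_ (heven _ _) ?_
    · intro n hb
      rcases Nat.lt_or_ge K n with hn | hn
      · exact hnext n hn hb
      · exact hlow n hn hb _ _
    · intro _
      rw [← ha, hdo]; exact hT

noncomputable def cover : Cover (game G O K hK) G where
  π := fun t : UP G O K => t.1.1
  φ := fun b σ => ⟨phi hK b σ, phi_child hK b σ⟩
  len_π := fun _ => rfl
  par_π := fun _ => rfl
  loc := fun b σ σ' n h p hp => phi_loc hK b σ σ' n h p hp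
  lift := fun b σ x hx hf => by
    cases b with
    | false => exact liftI hK σ hx hf
    | true => exact liftII hK σ hx hf

theorem cover_isK : (cover (G := G) (O := O) hK).IsK K where
  inj := fun (p : UP G O K) (q : UP G O K) hp h => by
    have hp' : G.len p.1.1 ≤ K := hp
    have h' : p.1.1 = q.1.1 := h
    rw [← mk_self q]
    exact eq_mk _ _ h (fun h1 => by rw [← h'] at h1; omega) (fun h1 => by rw [← h'] at h1; omega)
  surj := fun p hp => ⟨mk p ∅ (Sum.inr ∅) (V_short hp _ _), rfl⟩
  agree := fun b σ (p : UP G O K) hp => by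
    have hp' : G.len p.1.1 < K := hp
    show phi hK b σ p.1.1 = _
    unfold phi
    rw [if_pos hp'.le, ev, dif_pos (V_short hp'.le _ _)]
    have : mk p.1.1 ∅ (Sum.inr ∅) (V_short hp'.le _ _) = p :=
      (eq_mk p _ rfl (fun h => by omega) (fun h => by omega)).symm
    rw [this]
    rfl

theorem run_opt {x : ℕ → UP G O K} (hx : (game G O K hK).IsRun x) {n : ℕ} (hn : K+2 ≤ n) :
    (x n).1.2.2 = (x (K+2)).1.2.2 := by
  induction n, hn using Nat.le_induction with
  | base => rfl
  | succ n hn ih =>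
    rw [← ih]
    exact (child_iff hK (hx.child n)).2.2 (hn.trans (hx n).1.ge)

theorem pull_op (hO : G.IsOp O) {G' : Gm} (c : Cover G' G) :
    G'.IsOp {x | (fun n => c.π (x n)) ∈ O} := by
  intro x hx hxO
  obtain ⟨n, hn⟩ := hO _ (c.run hx) hxO
  exact ⟨n, fun y hy h => hn _ (c.run hy) (congrArg c.π h)⟩

theorem cover_clopen (hO : G.IsOp O) :
    (game G O K hK).IsOp {x | (fun n => (cover (G := G) (O := O) hK).π (x n)) ∈ O}ᶜ := by
  intro (x : ℕ → UP G O K) hx hxO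
  have hr := (cover (G := G) (O := O) hK).run hx
  refine ⟨K+2, fun (y : ℕ → UP G O K) hy hxy hyO => ?_⟩
  have hry := (cover (G := G) (O := O) hK).run hy
  change (fun n => (y n).1.1) ∈ O at hyO
  change G.IsRun (fun n => (y n).1.1) at hry
  change G.IsRun (fun n => (x n).1.1) at hr
  have hl : ∀ n, G.len (y n).1.1 = n := fun n => (hry n).1
  have hlx : ∀ n, G.len (x n).1.1 = n := fun n => (hr n).1
  have hV := fun n (hn : K + 2 ≤ n) => (y n).2.2.2 (by rw [hl]; exact hn)
  have hVx := fun n (hn : K + 2 ≤ n) => (x n).2.2.2 (by rw [hlx]; exact hn)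
  rcases ho : (x (K+2)).1.2.2 with u | T
  · apply hxO
    show (fun n => (x n).1.1) ∈ O
    obtain ⟨h1, h2⟩ := hVx (K+2) le_rfl
    rw [ho] at h1
    have h3 := (hVx (G.len u) h1.2.2).2
    rw [run_opt hK hx h1.2.2, ho] at h3
    have h4 : G.anc (G.len u) (x (G.len u)).1.1 = G.anc (G.len (x (G.len u)).1.1) u := h3
    rw [hlx, anc_len, anc_of_le _ (hlx _).le] at h4
    exact h1.2.1 _ hr h4
  · obtain ⟨n, hn⟩ := hO _ hry hyO
    let m := max n (K+2)
    have h1 := hV m (le_max_right _ _)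
    have hoy : (y (K+2)).1.2.2 = Sum.inr T := by rw [hxy]; exact ho
    rw [run_opt hK hy (le_max_right _ _), hoy] at h1
    refine (h1.1.1 _ h1.2).2.1 ?_
    intro z hz hzm
    rw [hl] at hzm
    exact hn z hz (hz.eq_of_eq hry hzm (le_max_left _ _))

end Unr

/-- every open set is unravelled by a k-cover -/
theorem unravel_open (G : Gm) (O : Set (ℕ → G.P)) (hO : G.IsOp O) (k : ℕ) :
    ∃ (G' : Gm) (c : Cover G' G), c.IsK k ∧ G'.IsOp {x | (fun n => c.π (x n)) ∈ O} ∧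
      G'.IsOp {x | (fun n => c.π (x n)) ∈ O}ᶜ := by
  have hK : (2*k).bodd = false := by simp
  exact ⟨_, Unr.cover (O := O) hK, (Unr.cover_isK hK).mono (by omega), Unr.pull_op hO _,
    Unr.cover_clopen hK hO⟩
end BG

namespace BG
open Gm

def G0 : Gm where
  P := List ℕ
  len := List.length
  par := List.tail
  len_par := fun p => by simp
  par_zero := fun p h => by
    have : p = [] := List.length_eq_zero_iff.mp h
    subst this; rfl
  ext := fun p => ⟨0 :: p, rfl, rfl⟩

def val (x : ℕ → List ℕ) (n : ℕ) : ℕ := (x (n+1)).headD 0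

theorem val_run {x : ℕ → List ℕ} (hx : G0.IsRun x) (n : ℕ) : x (n+1) = val x n :: x n := by
  have h1 : (x (n+1)).length = n+1 := (hx (n+1)).1
  have h2 : (x (n+1)).tail = x n := (hx n).2
  rw [← h2]
  unfold val
  cases hxx : x (n+1) with
  | nil => rw [hxx] at h1; simp at h1
  | cons a l => rfl

theorem val_eq {x y : ℕ → List ℕ} (hx : G0.IsRun x) (hy : G0.IsRun y) {n : ℕ} (h : x n = y n)
    {m : ℕ} (hm : m < n) : val x m = val y m := by
  unfold val
  rw [Gm.IsRun.eq_of_eq hx hy h hm]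

def Unrav (A : Set (ℕ → ℕ)) : Prop :=
  ∀ (G : Gm) (c : Cover G G0) (k : ℕ), ∃ (G' : Gm) (c' : Cover G' G), c'.IsK k ∧
    G'.IsOp {x | val (fun n => c.π (c'.π (x n))) ∈ A} ∧
    G'.IsOp {x | val (fun n => c.π (c'.π (x n))) ∈ A}ᶜ

theorem unrav_open (A : Set (ℕ → ℕ)) (hA : IsOpen A) : Unrav A := by
  intro G c k
  have hO : G.IsOp {x | val (fun n => c.π (x n)) ∈ A} := by
    intro x hx hxA
    have hxA' : val (fun n => c.π (x n)) ∈ A := hxA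
    obtain ⟨_, ⟨⟨a, n, rfl⟩, ha1, ha2⟩⟩ :=
      (PiNat.isTopologicalBasis_cylinders (fun _ => ℕ)).exists_subset_of_mem_open hxA' hA
    refine ⟨n, fun y hy hyx => ha2 (fun i hi => ?_)⟩
    rw [← ha1 i hi]
    exact val_eq (c.run hy) (c.run hx) (n := n) (congrArg c.π hyx) hi
  obtain ⟨G', c', h1, h2, h3⟩ := unravel_open G _ hO k
  exact ⟨G', c', h1, h2, h3⟩

theorem unrav_compl {A : Set (ℕ → ℕ)} (hA : Unrav A) : Unrav Aᶜ := by
  intro G c k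
  obtain ⟨G', c', h1, h2, h3⟩ := hA G c k
  refine ⟨G', c', h1, h3, ?_⟩
  have : {x : ℕ → G'.P | val (fun n => c.π (c'.π (x n))) ∈ Aᶜ}ᶜ = {x | val (fun n => c.π (c'.π (x n))) ∈ A} := by
    ext x; simp
  rw [this]; exact h2

theorem unrav_iUnion {A : ℕ → Set (ℕ → ℕ)} (hA : ∀ n, Unrav (A n)) : Unrav (⋃ n, A n) := by
  intro G c k
  choose gG gc h1 h2 h3 using hA
  let st : ℕ → Σ G : Gm, Cover G G0 := fun n => Nat.rec ⟨G, c⟩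
    (fun n s => ⟨gG n s.1 s.2 (k+n), (gc n s.1 s.2 (k+n)).comp s.2⟩) n
  let GG : ℕ → Gm := fun n => (st n).1
  let cc : ∀ n, Cover (GG (n+1)) (GG n) := fun n => gc n (st n).1 (st n).2 (k+n)
  have hK : ∀ n, (cc n).IsK (k+n) := fun n => h1 n _ _ _
  have compat : ∀ (p : Thr GG cc) n, (st n).2.π (p.1 n) = c.π (p.1 0) := by
    intro p n
    induction n with
    | zero => rfl
    | succ n ih =>
      rw [← ih]
      show (st n).2.π ((cc n).π (p.1 (n+1))) = _
      rw [p.2 n]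
  have hO : (Lim k hK).IsOp {x | val (fun n => c.π ((limCover hK).π (x n))) ∈ ⋃ n, A n} := by
    intro (x : ℕ → Thr GG cc) hx hxA
    change val (fun n => c.π ((x n).1 0)) ∈ ⋃ n, A n at hxA
    obtain ⟨i, hi⟩ := Set.mem_iUnion.mp hxA
    have h := h2 i (st i).1 (st i).2 (k+i) (fun n => (x n).1 (i+1)) (lim_run hK hx (i+1))
    have key : ∀ y : ℕ → Thr GG cc, (fun n => (st i).2.π ((cc i).π ((y n).1 (i+1)))) =
      fun n => c.π ((y n).1 0) := by
      intro y
      funext n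
      rw [(y n).2 i, compat]
    obtain ⟨n, hn⟩ := h (by
      show val (fun n => (st i).2.π ((cc i).π ((x n).1 (i+1)))) ∈ A i
      rw [key x]; exact hi)
    refine ⟨n, fun (y : ℕ → Thr GG cc) hy hyx => Set.mem_iUnion.mpr ⟨i, ?_⟩⟩
    have := hn (fun n => (y n).1 (i+1)) (lim_run hK hy (i+1)) (congrArg (fun p : Thr GG cc => p.1 (i+1)) hyx)
    change val (fun n => (st i).2.π ((cc i).π ((y n).1 (i+1)))) ∈ A i at this
    rw [key y] at this
    exact this
  obtain ⟨G', c', h4, h5, h6⟩ := unravel_open (Lim k hK) _ hO k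
  exact ⟨G', c'.comp (limCover hK), h4.comp (limCover_isK hK), h5, h6⟩

theorem unrav_borel {A : Set (ℕ → ℕ)} (hA : MeasurableSet A) : Unrav A := by
  induction A, hA using MeasurableSet.induction_on_open with
  | isOpen U hU => exact unrav_open U hU
  | compl t ht ih => exact unrav_compl ih
  | iUnion f _ _ ih => exact unrav_iUnion ih

theorem borel_det {A : Set (ℕ → ℕ)} (hA : MeasurableSet A) :
    (∃ σ : G0.Strat, ∀ x, G0.IsRun x → G0.Follows false σ x → val x ∈ A) ∨
    (∃ σ : G0.Strat, ∀ x, G0.IsRun x → G0.Follows true σ x → val x ∉ A) := by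
  obtain ⟨G', c, h1, h2, h3⟩ := unrav_borel hA G0 (Cover.refl G0) 0
  obtain ⟨r, hr⟩ := h1.surj ([] : List ℕ) le_rfl
  have hr0 : G'.len r = 0 := by rw [← c.len_π, hr]; rfl
  have x0 : ∀ x' : ℕ → G'.P, G'.IsRun x' → x' 0 = r := by
    intro x' hx'
    apply h1.inj _ _ (hx' 0).1.le
    rw [hr]
    have : (c.π (x' 0) : List ℕ).length = 0 := (c.run hx' 0).1
    exact List.length_eq_zero_iff.mp this
  rcases det_open _ h2 r hr0 with ⟨σ, hσ⟩ | ⟨σ, hσ⟩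
  · left
    refine ⟨c.φ false σ, fun x hx hf => ?_⟩
    obtain ⟨x', h4, h5, h6⟩ := c.lift false σ x hx hf
    have := hσ x' h4 (x0 x' h4) h5
    change val (fun n => c.π (x' n)) ∈ A at this
    rwa [show (fun n => c.π (x' n)) = x from funext h6] at this
  · right
    refine ⟨c.φ true σ, fun x hx hf => ?_⟩
    obtain ⟨x', h4, h5, h6⟩ := c.lift true σ x hx hf
    have := hσ x' h4 (x0 x' h4) h5
    change ¬ val (fun n => c.π (x' n)) ∈ A at this
    rwa [show (fun n => c.π (x' n)) = x from funext h6] at this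

def sap (σ : G0.Strat) (l : List ℕ) : List ℕ := σ.1 l

/-- play of `y` against `σ` -/
def ply (b : Bool) (σ : G0.Strat) (y : ℕ → ℕ) : ℕ → List ℕ
  | 0 => []
  | n+1 => if n.bodd = b then sap σ (ply b σ y n) else y (n/2) :: ply b σ y n

theorem ply_run (b : Bool) (σ : G0.Strat) (y : ℕ → ℕ) : G0.IsRun (ply b σ y) := by
  have h : ∀ n, (ply b σ y n).length = n := by
    intro n
    induction n with
    | zero => rfl
    | succ n ih =>
      by_cases hb : n.bodd = b
      · rw [ply, if_pos hb]
        exact (σ.2 (ply b σ y n)).2.trans (by show (ply b σ y n).length + 1 = _; rw [ih])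
      · rw [ply, if_neg hb, List.length_cons, ih]
  intro n
  refine ⟨h n, ?_⟩
  show (ply b σ y (n+1)).tail = _
  by_cases hb : n.bodd = b
  · rw [ply, if_pos hb]; exact (σ.2 (ply b σ y n)).1
  · rw [ply, if_neg hb]; rfl

theorem ply_follows (b : Bool) (σ : G0.Strat) (y : ℕ → ℕ) : G0.Follows b σ (ply b σ y) := by
  intro n hn
  show ply b σ y (n+1) = sap σ (ply b σ y n)
  rw [ply, if_pos hn]

theorem ply_val (b : Bool) (σ : G0.Strat) (y : ℕ → ℕ) {n : ℕ} (hn : n.bodd ≠ b) :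
    val (ply b σ y) n = y (n/2) := by
  rw [val, ply, if_neg hn]; rfl

theorem ply_dep (b : Bool) (σ : G0.Strat) {y y' : ℕ → ℕ} {n : ℕ}
    (h : ∀ i < n, i.bodd ≠ b → y (i/2) = y' (i/2)) : ply b σ y n = ply b σ y' n := by
  induction n with
  | zero => rfl
  | succ n ih =>
    have ih' := ih (fun i hi => h i (by omega))
    rw [ply, ply, ih']
    split_ifs with hb
    · rfl
    · rw [h n (by omega) hb]

abbrev E := ℕ → ℕ

theorem wadge_game {A B : Set E} (hA : MeasurableSet A) (hB : MeasurableSet B) :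
    (∃ f : E → E, (∀ n x x', (∀ i ≤ n, x i = x' i) → f x n = f x' n) ∧ ∀ x, x ∈ A ↔ f x ∈ B) ∨
    (∃ g : E → E, (∀ n x x', (∀ i < n, x i = x' i) → g x n = g x' n) ∧ ∀ x, x ∈ B ↔ g x ∉ A) := by
  let ev : E → E := fun z n => z (2*n)
  let od : E → E := fun z n => z (2*n+1)
  have hev : Measurable ev := by
    apply measurable_pi_lambda; intro n; exact measurable_pi_apply _
  have hod : Measurable od := by
    apply measurable_pi_lambda; intro n; exact measurable_pi_apply _
  let W : Set E := {z | ¬ (ev z ∈ A ↔ od z ∈ B)}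
  have hW : MeasurableSet W := by
    have : W = ((ev ⁻¹' A ∩ od ⁻¹' B) ∪ ((ev ⁻¹' A)ᶜ ∩ (od ⁻¹' B)ᶜ))ᶜ := by
      ext z; simp only [W, Set.mem_setOf_eq, Set.mem_compl_iff, Set.mem_union, Set.mem_inter_iff,
        Set.mem_preimage]; tauto
    rw [this]
    exact (((hev hA).inter (hod hB)).union ((hev hA).compl.inter (hod hB).compl)).compl
  rcases borel_det hW with ⟨σ, hσ⟩ | ⟨σ, hσ⟩
  · right
    refine ⟨fun y => ev (val (ply false σ y)), fun n x x' h => ?_, fun y => ?_⟩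
    · show val _ (2*n) = val _ (2*n)
      rw [val, val, ply_dep false σ (y := x) (y' := x')]
      intro i hi hb
      apply h
      have : i ≠ 2*n := by rintro rfl; simp at hb
      omega
    · have h := hσ _ (ply_run false σ y) (ply_follows false σ y)
      have e : od (val (ply false σ y)) = y := by
        funext n
        show val _ (2*n+1) = _
        rw [ply_val _ _ _ (by simp)]; congr 1; omega
      have h' : ¬ (ev (val (ply false σ y)) ∈ A ↔ od (val (ply false σ y)) ∈ B) := h
      rw [e] at h'
      tauto
  · left
    refine ⟨fun y => od (val (ply true σ y)), fun n x x' h => ?_, fun y => ?_⟩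
    · show val _ (2*n+1) = val _ (2*n+1)
      rw [val, val, ply_dep true σ (y := x) (y' := x')]
      intro i hi hb
      apply h
      omega
    · have h := hσ _ (ply_run true σ y) (ply_follows true σ y)
      have e : ev (val (ply true σ y)) = y := by
        funext n
        show val _ (2*n) = _
        rw [ply_val _ _ _ (by simp)]; congr 1; omega
      have h' : ¬¬ (ev (val (ply true σ y)) ∈ A ↔ od (val (ply true σ y)) ∈ B) := h
      rw [e] at h'
      tauto
end BG

namespace BG
open Set Topology PiNat

abbrev C := ℕ → Bool

theorem cyl_mem_open {X : ℕ → Type*} [∀ n, TopologicalSpace (X n)] [∀ n, DiscreteTopology (X n)]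
    {U : Set (∀ n, X n)} (hU : IsOpen U) {x : ∀ n, X n} (hx : x ∈ U) : ∃ m, cylinder x m ⊆ U := by
  obtain ⟨_, ⟨a, n, rfl⟩, h1, h2⟩ := (PiNat.isTopologicalBasis_cylinders X).exists_subset_of_mem_open hx hU
  refine ⟨n, ?_⟩
  rw [mem_cylinder_iff_eq.mp h1]; exact h2

def dec (y : E) : C := fun n => decide ((Nat.unpair (y n)).1 = 1)

theorem dec_cont : Continuous dec := by
  refine continuous_pi fun n => ?_
  exact (continuous_of_discreteTopology (f := fun k : ℕ => decide ((Nat.unpair k).1 = 1))).comp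
    (continuous_apply n)

theorem retract {T : Set C} (hT : IsGδ T) (hne : T.Nonempty) :
    ∃ (ι : C → E) (r : E → C), ContinuousOn ι T ∧ Continuous r ∧ (∀ y, r y ∈ T) ∧
      ∀ x ∈ T, r (ι x) = x := by
  classical
  obtain ⟨U, hU, rfl⟩ := hT.eq_iInter_nat
  set F : Set E := {y | ∀ n, cylinder (dec y) (Nat.unpair (y n)).2 ⊆ U n} with hF
  have hFc : IsClosed F := by
    rw [hF, ofPred_forall]
    refine isClosed_iInter fun n => ?_
    rw [← isOpen_compl_iff, isOpen_iff_mem_nhds]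
    intro y hy
    have h1 : {y' : E | y' n = y n} ∈ 𝓝 y := by
      have := (continuous_apply (A := fun _ : ℕ => ℕ) n).continuousAt (x := y)
      exact this (by simp : {y n} ∈ 𝓝 (y n))
    have h2 : dec ⁻¹' (cylinder (dec y) (Nat.unpair (y n)).2) ∈ 𝓝 y :=
      dec_cont.continuousAt ((isOpen_cylinder _ _ _).mem_nhds (self_mem_cylinder _ _))
    filter_upwards [h1, h2] with y' h1 h2
    intro h3
    apply hy
    simp only [mem_ofPred_eq] at h1 h3 ⊢
    rw [h1] at h3
    rwa [← mem_cylinder_iff_eq.mp h2]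
  have hex : ∀ x ∈ ⋂ n, U n, ∀ n, ∃ m, cylinder x m ⊆ U n := fun x hx n =>
    cyl_mem_open (hU n) (mem_iInter.mp hx n)
  set ι : C → E := fun x n => Nat.pair (if x n then 1 else 0)
    (if h : ∃ m, cylinder x m ⊆ U n then Nat.find h else 0) with hι
  have hdec : ∀ x, dec (ι x) = x := by
    intro x; funext n; simp [dec, hι]
  have hιF : ∀ x ∈ ⋂ n, U n, ι x ∈ F := by
    intro x hx n
    rw [hdec]
    simp only [hι, Nat.unpair_pair, dif_pos (hex x hx n)]
    exact Nat.find_spec (hex x hx n)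
  obtain ⟨x0, hx0⟩ := hne
  obtain ⟨ρ, hρ1, hρ2, hρ3⟩ := exists_retraction_of_isClosed hFc ⟨ι x0, hιF x0 hx0⟩
  refine ⟨ι, dec ∘ ρ, ?_, dec_cont.comp hρ3, ?_, ?_⟩
  · rw [continuousOn_pi]
    intro n x hx
    apply ContinuousAt.continuousWithinAt
    have hx := hex x hx n
    set m := Nat.find hx with hm
    have : (fun x : C => ι x n) =ᶠ[𝓝 x] fun _ => ι x n := by
      filter_upwards [(isOpen_cylinder _ x (max m (n+1))).mem_nhds (self_mem_cylinder _ _)] with y hy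
      have hyc : ∀ k ≤ m, cylinder y k = cylinder x k := fun k hk =>
        mem_cylinder_iff_eq.mp (cylinder_anti _ (by omega : k ≤ max m (n+1)) hy)
      have hyn : y n = x n := hy n (by omega)
      have hfy : ∃ k, cylinder y k ⊆ U n := ⟨m, by rw [hyc m le_rfl]; exact Nat.find_spec hx⟩
      simp only [hι, hyn, dif_pos hx, dif_pos hfy]
      congr 1
      rw [← hm, Nat.find_eq_iff]
      refine ⟨by rw [hyc m le_rfl]; exact Nat.find_spec hx, fun k hk => ?_⟩
      rw [hyc k hk.le]; exact Nat.find_min hx hk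
    exact continuousAt_const.congr this.symm
  · intro y
    have : ρ y ∈ F := hρ2 ▸ mem_range_self y
    rw [mem_iInter]; intro n
    exact this n (self_mem_cylinder _ _)
  · intro x hx
    simp [hρ1 _ (hιF x hx), hdec]

def W (T A T' B : Set C) : Prop :=
  ∃ f : C → C, ContinuousOn f T ∧ MapsTo f T T' ∧ ∀ x ∈ T, x ∈ A ↔ f x ∈ B

theorem W.trans {T A T' B T'' D : Set C} (h : W T A T' B) (h' : W T' B T'' D) : W T A T'' D := by
  obtain ⟨f, hf, hf', hf''⟩ := h
  obtain ⟨g, hg, hg', hg''⟩ := h'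
  exact ⟨g ∘ f, hg.comp hf hf', hg'.comp hf', fun x hx => (hf'' x hx).trans (hg'' _ (hf' hx))⟩

theorem W.compl {T A T' B : Set C} (h : W T A T' B) : W T Aᶜ T' Bᶜ := by
  obtain ⟨f, hf, hf', hf''⟩ := h
  exact ⟨f, hf, hf', fun x hx => not_congr (hf'' x hx)⟩

theorem W.mono {T A T' B R R' : Set C} (h : W T A T' B) (h1 : R ⊆ T) (h2 : T' ⊆ R') : W R A R' B := by
  obtain ⟨f, hf, hf', hf''⟩ := h
  exact ⟨f, hf.mono h1, fun x hx => h2 (hf' (h1 hx)), fun x hx => hf'' x (h1 hx)⟩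

theorem W.congr {T A T' B A' B' : Set C} (h : W T A T' B) (h1 : ∀ x ∈ T, x ∈ A ↔ x ∈ A')
    (h2 : ∀ x ∈ T', x ∈ B ↔ x ∈ B') : W T A' T' B' := by
  obtain ⟨f, hf, hf', hf''⟩ := h
  exact ⟨f, hf, hf', fun x hx => by rw [← h1 x hx, hf'' x hx, h2 _ (hf' hx)]⟩

theorem cont_of_lip {f : E → E} (h : ∀ n x x', (∀ i ≤ n, x i = x' i) → f x n = f x' n) :
    Continuous f := by
  refine continuous_pi fun n => continuous_iff_continuousAt.mpr fun x => ?_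
  have : (fun y => f y n) =ᶠ[𝓝 x] fun _ => f x n := by
    filter_upwards [(isOpen_cylinder _ x (n+1)).mem_nhds (self_mem_cylinder _ _)] with y hy
    exact h n _ _ fun i hi => hy i (by omega)
  exact continuousAt_const.congr this.symm

theorem W_of_E {T A T' B : Set C} {ι : C → E} {r : E → C} (hι : ContinuousOn ι T)
    (hr : ∀ x ∈ T, r (ι x) = x) {r' : E → C} (hr' : Continuous r') (hr'' : ∀ y, r' y ∈ T')
    {f : E → E} (hf : Continuous f) (h : ∀ x, x ∈ r ⁻¹' A ↔ f x ∈ r' ⁻¹' B) : W T A T' B :=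
  ⟨fun x => r' (f (ι x)), (hr'.comp hf).comp_continuousOn hι, fun x _ => hr'' _, fun x hx => by
    have := h (ι x)
    simpa [hr x hx] using this⟩

theorem wadge {T T' A B : Set C} (hT : IsGδ T) (hT' : IsGδ T') (hne : T.Nonempty)
    (hne' : T'.Nonempty) (hA : MeasurableSet A) (hB : MeasurableSet B) :
    W T A T' B ∨ W T' B T Aᶜ := by
  obtain ⟨ι, r, h1, h2, h3, h4⟩ := retract hT hne
  obtain ⟨ι', r', h1', h2', h3', h4'⟩ := retract hT' hne'
  rcases wadge_game (h2.measurable hA) (h2'.measurable hB) with ⟨f, hf, hf'⟩ | ⟨g, hg, hg'⟩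
  · exact Or.inl (W_of_E h1 h4 h2' h3' (cont_of_lip hf) hf')
  · exact Or.inr (W_of_E h1' h4' h2 h3
      (cont_of_lip fun n x x' h => hg n x x' fun i hi => h i hi.le) hg')

def flip (n : ℕ) (z : C) : C := Function.update z n (!z n)

theorem flip_flip (n : ℕ) (z : C) : flip n (flip n z) = z := by
  funext k; by_cases h : k = n
  · subst h; simp [flip]
  · simp [flip, h]

theorem flip_cont (n : ℕ) : Continuous (flip n) := by
  unfold flip
  exact continuous_id.update n ((continuous_of_discreteTopology (f := not)).comp (continuous_apply n))

def flipH (n : ℕ) : C ≃ₜ C where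
  toFun := flip n
  invFun := flip n
  left_inv := flip_flip n
  right_inv := flip_flip n
  continuous_toFun := flip_cont n
  continuous_invFun := flip_cont n

theorem no_flip {M : Set C} (hM : MeasurableSet M) (h : ∀ z n, flip n z ∈ M ↔ z ∉ M) : False := by
  have key : ∀ M : Set C, MeasurableSet M → (∀ z n, flip n z ∈ M ↔ z ∉ M) → ∀ U, IsOpen U →
      M =ᶠ[residual C] U → ¬ U.Nonempty := by
    rintro M hM h U hU hMU ⟨z, hz⟩
    obtain ⟨n, hn⟩ := cyl_mem_open hU hz
    have h1 : ∀ᶠ z in residual C, z ∈ M ↔ z ∈ U := hMU.mono fun z hz => by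
      exact iff_of_eq hz
    have h2 : ∀ᶠ z in residual C, flip n z ∈ M ↔ flip n z ∈ U := by
      have := tendsto_residual_of_isOpenMap (flipH n).continuous (flipH n).isOpenMap
      exact this.eventually h1
    obtain ⟨y, hy1, hy2⟩ := (dense_of_mem_residual (h1.and h2)).exists_mem_open
      (isOpen_cylinder _ z n) ⟨z, self_mem_cylinder _ _⟩
    have hyU := hn hy2
    have hfU : flip n y ∈ U := hn (fun i hi => by simp [flip, hi.ne, hy2 i hi])
    have := h y n
    have := hy1.1; have := hy1.2
    tauto
  obtain ⟨U, hU, hMU⟩ := hM.residualEq_isOpen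
  obtain ⟨U', hU', hMU'⟩ := hM.compl.residualEq_isOpen
  have e1 := key M hM h U hU hMU
  have e2 := key Mᶜ hM.compl (fun z n => not_congr (h z n)) U' hU' hMU'
  rw [not_nonempty_iff_eq_empty] at e1 e2
  subst e1 e2
  obtain ⟨y, hy⟩ := (dense_of_mem_residual (hMU.and hMU')).nonempty
  have h1 : (y ∈ M) = (y ∈ (∅ : Set C)) := hy.1
  have h2 : (y ∈ Mᶜ) = (y ∈ (∅ : Set C)) := hy.2
  simp at h1 h2
  exact h1 h2

/-- abstract Martin-Monk -/
theorem martin_monk {A : ℕ → Set E} {g : ℕ → Bool → E → E} {x : ℕ → C → E}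
    (hA : MeasurableSet (A 0)) (hg : ∀ n i y, y ∈ A (n+1) ↔ (g n i y ∈ A n ↔ i = false))
    (hx : ∀ n z, x n z = g n (z n) (x (n+1) z))
    (hdep : ∀ n z z', (∀ k, n ≤ k → z k = z' k) → x n z = x n z')
    (hmeas : Measurable (x 0)) : False := by
  refine no_flip (M := x 0 ⁻¹' (A 0)) (hmeas hA) fun z n => ?_
  have h1 : ∀ k ≤ n, (x k (flip n z) ∈ A k ↔ x k z ∉ A k) := by
    intro k hk
    induction hk using Nat.decreasingInduction with
    | self =>
      have e : x (n+1) (flip n z) = x (n+1) z := hdep _ _ _ fun k hk => by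
        exact Function.update_of_ne (by omega) _ _
      have a := hg n (flip n z n) (x (n+1) (flip n z))
      have b := hg n (z n) (x (n+1) z)
      rw [← hx] at a b
      rw [e] at a
      have : flip n z n = !z n := by simp [flip]
      rw [this] at a
      cases h : z n <;> simp [h] at a b <;> tauto
    | of_succ k hk ih =>
      have a := hg k (flip n z k) (x (k+1) (flip n z))
      have b := hg k (z k) (x (k+1) z)
      rw [← hx] at a b
      have : flip n z k = z k := Function.update_of_ne (by omega) _ _
      rw [this] at a
      tauto
  exact h1 0 (Nat.zero_le _)

def mma (g : ℕ → Bool → E → E) (p : E) : ℕ → ℕ → C → E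
  | _, 0, _ => p
  | n, d+1, z => g n (z n) (mma g p (n+1) d z)

theorem mm_limit {A : ℕ → Set E} {g : ℕ → Bool → E → E} (p : E)
    (hA : MeasurableSet (A 0)) (hg : ∀ n i y, y ∈ A (n+1) ↔ (g n i y ∈ A n ↔ i = false))
    (hc : ∀ n i, Continuous (g n i))
    (hs : ∀ n d z m, m < d → mma g p n (d+1) z m = mma g p n d z m) : False := by
  have hs' : ∀ n d z m, m < d → mma g p n d z m = mma g p n (m+1) z m := by
    intro n d z m hm
    induction d, hm using Nat.le_induction with
    | base => rfl
    | succ d hd ih => rw [hs n d z m hd, ih]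
  set x : ℕ → C → E := fun n z m => mma g p n (m+1) z m with hx
  have hlim : ∀ n z, Filter.Tendsto (fun d => mma g p n d z) Filter.atTop (𝓝 (x n z)) := by
    intro n z
    rw [tendsto_pi_nhds]
    intro m
    apply tendsto_const_nhds.congr'
    filter_upwards [Filter.eventually_gt_atTop m] with d hd
    exact (hs' n d z m hd).symm
  have hcont : ∀ d n, Continuous (mma g p n d) := by
    intro d
    induction d with
    | zero => intro n; exact continuous_const
    | succ d ih =>
      intro n
      have : Continuous fun q : Bool × E => g n q.1 q.2 :=
        continuous_prod_of_discrete_left.mpr (hc n)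
      exact this.comp ((continuous_apply n).prodMk (ih (n+1)))
  refine martin_monk (x := x) hA hg (fun n z => ?_) ?_ ?_
  · have h1 := (hlim n z).comp (Filter.tendsto_add_atTop_nat 1)
    have h2 := ((hc n (z n)).tendsto _).comp (hlim (n+1) z)
    exact tendsto_nhds_unique h1 h2
  · have : ∀ d n z z', (∀ k, n ≤ k → z k = z' k) → mma g p n d z = mma g p n d z' := by
      intro d
      induction d with
      | zero => intros; rfl
      | succ d ih =>
        intro n z z' h
        simp only [mma]
        rw [h n le_rfl, ih (n+1) z z' fun k hk => h k (by omega)]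
    intro n z z' h
    funext m
    exact congrFun (this (m+1) n z z' h) m
  · have : Continuous (x 0) := continuous_pi fun m => (continuous_apply m).comp (hcont (m+1) 0)
    exact this.measurable

theorem mm_contraction {A : ℕ → Set E} {g : ℕ → Bool → E → E}
    (hA : MeasurableSet (A 0)) (hg : ∀ n i y, y ∈ A (n+1) ↔ (g n i y ∈ A n ↔ i = false))
    (hc : ∀ n i, ∀ m x x', (∀ k < m, x k = x' k) → g n i x m = g n i x' m) : False := by
  refine mm_limit (fun _ => 0) hA hg
    (fun n i => cont_of_lip fun m x x' h => hc n i m x x' fun k hk => h k hk.le) ?_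
  intro n d
  induction d generalizing n with
  | zero => intro z m hm; omega
  | succ d ih =>
    intro z m hm
    exact hc n (z n) m _ _ fun k hk => ih (n+1) z k (by omega)

theorem no_sd {Y : Set E} (hY : MeasurableSet Y) (x : E)
    (h : ∀ m i, ∃ g : E → E, Continuous g ∧ (∀ y, g y ∈ cylinder x m) ∧
      ∀ y, y ∈ Y ↔ (g y ∈ Y ↔ i = false)) : False := by
  choose gg g1 g2 g3 using h
  let S := {H : Set (E → E) // H.Finite ∧ ∀ h ∈ H, Continuous h}
  have hk : ∀ (n : ℕ) (H : S), ∃ k, ∀ h ∈ H.1, ∀ y ∈ cylinder x k, h y ∈ cylinder (h x) n := by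
    intro n H
    have : IsOpen (⋂ h ∈ H.1, h ⁻¹' cylinder (h x) n) :=
      H.2.1.isOpen_biInter fun h hh => (isOpen_cylinder _ _ _).preimage (H.2.2 h hh)
    obtain ⟨k, hk⟩ := cyl_mem_open this (x := x) (by simp)
    exact ⟨k, fun h hh y hy => by simpa using mem_iInter₂.mp (hk hy) h hh⟩
  choose k hk using hk
  let step : ℕ → S → S := fun n H =>
    ⟨insert id (⋃ i : Bool, (fun h => h ∘ gg (k n H) i) '' H.1),
      (Set.finite_iUnion fun i => H.2.1.image _).insert _, by
        rintro h (rfl | hh)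
        · exact continuous_id
        · simp only [mem_iUnion, mem_image] at hh
          obtain ⟨i, h', hh', rfl⟩ := hh
          exact (H.2.2 h' hh').comp (g1 _ _)⟩
  let H : ℕ → S := fun n => Nat.rec ⟨{id}, by simp, by simp [continuous_id]⟩ step n
  have hid : ∀ n, id ∈ (H n).1 := by
    rintro (_ | n)
    · exact rfl
    · exact Or.inl rfl
  set g : ℕ → Bool → E → E := fun n i => gg (k n (H n)) i with hg
  have hcmp : ∀ d n z, ∃ h ∈ (H (n+d)).1, ∀ p, mma g p n d z = h p := by
    have hshift : ∀ p d n z, mma g p n (d+1) z = mma g (g (n+d) (z (n+d)) p) n d z := by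
      intro p d
      induction d with
      | zero => intro n z; rfl
      | succ d ih =>
        intro n z
        rw [mma, ih (n+1) z, mma, show n + 1 + d = n + (d+1) by omega]
    intro d n z
    induction d with
    | zero => exact ⟨id, hid _, fun p => rfl⟩
    | succ d ih =>
      obtain ⟨h, h1, h2⟩ := ih
      refine ⟨h ∘ g (n+d) (z (n+d)), Or.inr ?_, fun p => ?_⟩
      · exact mem_iUnion.mpr ⟨z (n+d), h, h1, rfl⟩
      · rw [hshift, h2]; rfl
  refine mm_limit (A := fun _ => Y) (g := g) x hY (fun n i y => g3 _ i y) (fun n i => g1 _ _) ?_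
  intro n d z m hm
  obtain ⟨h, h1, h2⟩ := hcmp d n z
  have : mma g x n (d+1) z = mma g (g (n+d) (z (n+d)) x) n d z := by
    have hshift : ∀ p d n z, mma g p n (d+1) z = mma g (g (n+d) (z (n+d)) p) n d z := by
      intro p d
      induction d with
      | zero => intro n z; rfl
      | succ d ih =>
        intro n z
        rw [mma, ih (n+1) z, mma, show n + 1 + d = n + (d+1) by omega]
    exact hshift x d n z
  rw [this, h2, h2]
  exact hk (n+d) (H (n+d)) h h1 _ (g2 _ _ _) m (by omega)

end BG

namespace BG
open Set Topology PiNat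

theorem gdelta_polish {X : Type*} [TopologicalSpace X] [PolishSpace X] {T : Set X} (hT : IsGδ T) :
    PolishSpace T := by
  obtain ⟨U, hU, rfl⟩ := hT.eq_iInter_nat
  have : ∀ n, PolishSpace (U n) := fun n => (hU n).polishSpace
  let f : (⋂ n, U n : Set X) → ∀ n, U n := fun x n => ⟨x.1, mem_iInter.mp x.2 n⟩
  have hf : Continuous f := continuous_pi fun n => continuous_subtype_val.subtype_mk _
  have hcl : IsClosedEmbedding f := by
    refine ⟨⟨?_, ?_⟩, ?_⟩
    · refine IsInducing.of_comp hf (g := fun y => (y 0).1) (by fun_prop) ?_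
      exact IsInducing.subtypeVal
    · intro x y h
      have := congrArg (fun z => (z 0).1) h
      exact Subtype.ext this
    · have : range f = {y | ∀ n, (y n).1 = (y 0).1} := by
        ext y; constructor
        · rintro ⟨x, rfl⟩ n; rfl
        · intro hy
          refine ⟨⟨(y 0).1, mem_iInter.mpr fun n => hy n ▸ (y n).2⟩, ?_⟩
          funext n; exact Subtype.ext (hy n).symm
      rw [this, ofPred_forall]
      exact isClosed_iInter fun n => isClosed_eq (by fun_prop) (by fun_prop)
  exact hcl.polishSpace

theorem HH.congr {A B : Type*} [TopologicalSpace A] [TopologicalSpace B] (h : HHomogeneous A)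
    (e : A ≃ₜ B) : HHomogeneous B := by
  intro U hU hne
  obtain ⟨k⟩ := h (e ⁻¹' U) (hU.preimage e.continuous) (hne.preimage e.surjective)
  have e1 : (e ⁻¹' U : Set A) ≃ₜ U := (e.isEmbedding.homeomorphImage _).trans
    (Homeomorph.setCongr (image_preimage_eq _ e.surjective))
  exact ⟨e1.symm.trans (k.trans e)⟩

theorem HH.subsingleton {A : Type*} [TopologicalSpace A] [Subsingleton A] : HHomogeneous A := by
  intro U hU ⟨x, hx⟩
  have : U = univ := eq_univ_of_forall fun y => by rwa [Subsingleton.elim y x]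
  subst this
  exact ⟨Homeomorph.Set.univ A⟩

/-- countable partition into h-homogeneous Gδ pieces -/
def SHH (Y : Type*) [TopologicalSpace Y] : Prop :=
  ∃ f : ℕ → Set Y, Pairwise (Function.onFun Disjoint f) ∧ (∀ i, IsGδ (f i)) ∧
    (∀ i, HHomogeneous (f i)) ∧ ⋃ i, f i = univ

theorem SHH.of_countable {Y : Type*} [TopologicalSpace Y] {ι : Type*} [Countable ι] (f : ι → Set Y)
    (h1 : Pairwise (Function.onFun Disjoint f)) (h2 : ∀ i, IsGδ (f i))
    (h3 : ∀ i, HHomogeneous (f i)) (h4 : ⋃ i, f i = univ) : SHH Y := by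
  obtain ⟨enc, henc⟩ := exists_injective_nat ι
  refine ⟨fun n => ⋃ (i) (_ : enc i = n), f i, ?_, ?_, ?_, ?_⟩
  · intro a b hab
    simp only [Function.onFun, disjoint_iUnion_left, disjoint_iUnion_right]
    intro i hi j hj
    exact h1 (by rintro rfl; exact hab (hj.symm.trans hi))
  · intro n
    by_cases h : ∃ i, enc i = n
    · obtain ⟨i, rfl⟩ := h
      have : (⋃ (j) (_ : enc j = enc i), f j) = f i := by
        ext x; simp [henc.eq_iff]
      beta_reduce; rw [this]; exact h2 i
    · have : (⋃ (j) (_ : enc j = n), f j) = ∅ := by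
        ext x; simp; intro i hi; exact absurd ⟨i, hi⟩ h
      beta_reduce; rw [this]; exact isOpen_empty.isGδ
  · intro n
    by_cases h : ∃ i, enc i = n
    · obtain ⟨i, rfl⟩ := h
      have : (⋃ (j) (_ : enc j = enc i), f j) = f i := by
        ext x; simp [henc.eq_iff]
      beta_reduce; rw [this]; exact h3 i
    · have : (⋃ (j) (_ : enc j = n), f j) = ∅ := by
        ext x; simp; intro i hi; exact absurd ⟨i, hi⟩ h
      beta_reduce; rw [this]; exact HH.subsingleton
  · rw [← h4]; ext x; simp

theorem SHH.congr {A B : Type*} [TopologicalSpace A] [TopologicalSpace B] (h : SHH A)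
    (e : A ≃ₜ B) : SHH B := by
  obtain ⟨f, h1, h2, h3, h4⟩ := h
  refine ⟨fun i => e.symm ⁻¹' f i, fun i j hij => (h1 hij).preimage _,
    fun i => (h2 i).preimage e.symm.continuous, fun i => ?_, ?_⟩
  · refine HH.congr (h3 i) ?_
    exact ((e.symm.isEmbedding.homeomorphImage _).trans
      (Homeomorph.setCongr (image_preimage_eq _ e.symm.surjective))).symm
  · rw [← preimage_iUnion, h4, preimage_univ]

/-- preimage in a subspace -/
noncomputable def preHomeo {X : Type*} [TopologicalSpace X] (Y T : Set X) :
    (Subtype.val ⁻¹' T : Set Y) ≃ₜ (Y ∩ T : Set X) :=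
  (IsEmbedding.subtypeVal.homeomorphImage _).trans
    (Homeomorph.setCongr (Subtype.image_preimage_coe _ _))

theorem SHH.clopen {A : Type*} [TopologicalSpace A] (h : SHH A) {U : Set A} (hU : IsClopen U) :
    SHH U := by
  obtain ⟨f, h1, h2, h3, h4⟩ := h
  refine ⟨fun i => Subtype.val ⁻¹' f i, fun i j hij => (h1 hij).preimage _,
    fun i => (h2 i).preimage continuous_subtype_val, fun i => ?_, ?_⟩
  · by_cases hne : (Subtype.val ⁻¹' U : Set (f i)).Nonempty
    · obtain ⟨k⟩ := h3 i (Subtype.val ⁻¹' U) (hU.preimage continuous_subtype_val) hne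
      refine HH.congr (h3 i) ?_
      exact k.symm.trans ((preHomeo (f i) U).trans
        ((Homeomorph.setCongr (inter_comm _ _)).trans (preHomeo U (f i)).symm))
    · have : (Subtype.val ⁻¹' f i : Set U) = ∅ := by
        rw [eq_empty_iff_forall_notMem]
        intro x hx
        exact hne ⟨⟨x.1, hx⟩, x.2⟩
      beta_reduce
      rw [this]
      exact HH.subsingleton
  · rw [← preimage_iUnion, h4, preimage_univ]

theorem gdelta_image {X : Type*} [TopologicalSpace X] {T : Set X} (hT : IsGδ T) {S : Set T}
    (hS : IsGδ S) : IsGδ (Subtype.val '' S) := by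
  obtain ⟨U, hU, rfl⟩ := hS.eq_iInter_nat
  choose V hV hV' using fun n => isOpen_induced_iff.mp (hU n)
  have : (Subtype.val '' ⋂ n, U n) = T ∩ ⋂ n, V n := by
    simp_rw [← hV', ← preimage_iInter, Subtype.image_preimage_coe]
  rw [this]
  exact hT.inter (IsGδ.iInter_of_isOpen hV)

theorem SHH.assemble {X : Type*} [TopologicalSpace X] {ι : Type*} [Countable ι] (T : ι → Set X)
    (h1 : Pairwise (Function.onFun Disjoint T)) (h2 : ∀ i, IsGδ (T i))
    (h3 : ∀ i, SHH (T i)) (h4 : ⋃ i, T i = univ) : SHH X := by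
  choose f f1 f2 f3 f4 using h3
  refine SHH.of_countable (fun p : ι × ℕ => Subtype.val '' f p.1 p.2) ?_ ?_ ?_ ?_
  · rintro ⟨i, n⟩ ⟨j, m⟩ hne
    simp only [Function.onFun]
    by_cases hij : i = j
    · subst hij
      have : n ≠ m := fun h => hne (by rw [h])
      exact (disjoint_image_iff Subtype.val_injective).mpr (f1 i this)
    · refine (h1 hij).mono ?_ ?_ <;> exact Subtype.coe_image_subset _ _
  · rintro ⟨i, n⟩
    exact gdelta_image (h2 i) (f2 i n)
  · rintro ⟨i, n⟩
    exact HH.congr (f3 i n) (IsEmbedding.subtypeVal.homeomorphImage _)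
  · rw [eq_univ_iff_forall]
    intro x
    have : x ∈ ⋃ i, T i := h4 ▸ mem_univ x
    obtain ⟨i, hi⟩ := mem_iUnion.mp this
    have : (⟨x, hi⟩ : T i) ∈ ⋃ n, f i n := f4 i ▸ mem_univ _
    obtain ⟨n, hn⟩ := mem_iUnion.mp this
    exact mem_iUnion.mpr ⟨(i, n), _, hn, rfl⟩

theorem SHH.assemble_set {X : Type*} [TopologicalSpace X] {ι : Type*} [Countable ι] {Y : Set X}
    (T : ι → Set X)
    (h1 : Pairwise (Function.onFun Disjoint T)) (h2 : ∀ i, IsGδ (T i))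
    (h3 : ∀ i, SHH (Y ∩ T i : Set X)) (h4 : Y ⊆ ⋃ i, T i) : SHH Y := by
  refine SHH.assemble (fun i => Subtype.val ⁻¹' T i) (fun i j hij => (h1 hij).preimage _)
    (fun i => (h2 i).preimage continuous_subtype_val) (fun i => (h3 i).congr (preHomeo Y (T i)).symm) ?_
  rw [← preimage_iUnion, eq_univ_iff_forall]
  exact fun x => h4 x.2

theorem SHH.of_HH {A : Type*} [TopologicalSpace A] (h : HHomogeneous A) : SHH A := by
  refine SHH.of_countable (ι := Unit) (fun _ => univ) (fun i j h => absurd rfl h) (fun _ => IsGδ.univ)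
    (fun _ => HH.congr h (Homeomorph.Set.univ A).symm) (iUnion_const _)

def ZD (X : Type*) [TopologicalSpace X] : Prop :=
  ∀ (x : X) (O : Set X), IsOpen O → x ∈ O → ∃ B, IsClopen B ∧ x ∈ B ∧ B ⊆ O

theorem ZD.sub {X : Type*} [TopologicalSpace X] (h : ZD X) (Y : Set X) : ZD Y := by
  intro x O hO hx
  obtain ⟨V, hV, rfl⟩ := isOpen_induced_iff.mp hO
  obtain ⟨B, h1, h2, h3⟩ := h x V hV hx
  exact ⟨_, h1.preimage continuous_subtype_val, h2, preimage_mono h3⟩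

theorem clopen_cyl {X : ℕ → Type*} [∀ n, TopologicalSpace (X n)] [∀ n, DiscreteTopology (X n)]
    (x : ∀ n, X n) (n : ℕ) : IsClopen (cylinder x n) := by
  refine ⟨?_, isOpen_cylinder _ _ _⟩
  rw [cylinder_eq_pi]
  exact isClosed_set_pi fun i _ => isClosed_discrete _

theorem ZD_C : ZD C := by
  intro x O hO hx
  obtain ⟨m, hm⟩ := cyl_mem_open hO hx
  exact ⟨_, clopen_cyl x m, self_mem_cylinder _ _, hm⟩

/-- splitting a non compact clopen set -/
theorem split_nc {X : Type*} [MetricSpace X] [SecondCountableTopology X] (hz : ZD X)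
    {P : Set X} (hP : IsClopen P) (hnc : ¬ IsCompact P) (ε : ENNReal) (hε : 0 < ε) :
    ∃ D : ℕ → Set X, (∀ n, IsClopen (D n) ∧ (D n).Nonempty ∧ Metric.ediam (D n) ≤ ε) ∧
      Pairwise (Function.onFun Disjoint D) ∧ ⋃ n, D n = P := by
  classical
  have hnc' : ∃ (ι : Type _) (U : ι → Set X), (∀ i, IsOpen (U i)) ∧ P ⊆ ⋃ i, U i ∧
      ¬ ∃ t : Finset ι, P ⊆ ⋃ i ∈ t, U i := by
    by_contra hcon
    push Not at hcon
    exact hnc (isCompact_of_finite_subcover fun {ι} U hU hPU => hcon ι U hU hPU)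
  obtain ⟨ι, U, hU, hPU, hfin⟩ := hnc'
  have hB : ∀ x ∈ P, ∃ B : Set X, IsClopen B ∧ x ∈ B ∧ B ⊆ P ∧ Metric.ediam B ≤ ε ∧ ∃ i, B ⊆ U i := by
    intro x hx
    obtain ⟨i, hi⟩ := mem_iUnion.mp (hPU hx)
    obtain ⟨B, h1, h2, h3⟩ := hz x (P ∩ U i ∩ Metric.eball x (ε/2))
      ((hP.isOpen.inter (hU i)).inter Metric.isOpen_eball)
      ⟨⟨hx, hi⟩, Metric.mem_eball_self (ENNReal.half_pos hε.ne')⟩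
    refine ⟨B, h1, h2, fun y hy => (h3 hy).1.1, ?_, i, fun y hy => (h3 hy).1.2⟩
    calc Metric.ediam B ≤ Metric.ediam (Metric.eball x (ε/2)) := Metric.ediam_mono fun y hy => (h3 hy).2
      _ ≤ 2 * (ε/2) := Metric.ediam_eball_le
      _ = ε := ENNReal.mul_div_cancel (by norm_num) (by norm_num)
  choose! B b1 b2 b3 b4 b5 using hB
  obtain ⟨t, htP, htc, htU⟩ := TopologicalSpace.countable_cover_nhdsWithin (s := P) (f := B)
    fun x hx => mem_nhdsWithin_of_mem_nhds ((b1 x hx).isOpen.mem_nhds (b2 x hx))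
  have hPne : P.Nonempty := by
    by_contra h
    rw [not_nonempty_iff_eq_empty] at h
    exact hnc (h ▸ isCompact_empty)
  have htne : t.Nonempty := by
    obtain ⟨x, hx⟩ := hPne
    obtain ⟨y, hy, -⟩ := mem_iUnion₂.mp (htU hx)
    exact ⟨y, hy⟩
  obtain ⟨s, hs⟩ := htc.exists_eq_range htne
  have hsP : ∀ n, s n ∈ P := fun n => htP (hs ▸ mem_range_self n)
  set G : ℕ → Set X := fun n => B (s n) with hG
  have hGU : ⋃ n, G n = P := by
    apply Subset.antisymm
    · exact iUnion_subset fun n => b3 _ (hsP n)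
    · refine htU.trans ?_
      rw [hs, biUnion_range]
  have hDc : ∀ n, IsClopen (disjointed G n) := by
    intro n
    rw [disjointed_eq_inter_compl]
    exact (b1 _ (hsP n)).inter ⟨isClosed_biInter fun i _ => (b1 _ (hsP i)).compl.isClosed,
      (Set.finite_lt_nat n).isOpen_biInter fun i _ => (b1 _ (hsP i)).compl.isOpen⟩
  have hinf : {n | (disjointed G n).Nonempty}.Infinite := by
    intro hf
    apply hfin
    choose i hi using fun n => b5 (s n) (hsP n)
    refine ⟨hf.toFinset.image i, fun x hx => ?_⟩
    rw [← hGU, ← iUnion_disjointed] at hx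
    obtain ⟨n, hn⟩ := mem_iUnion.mp hx
    refine mem_iUnion₂.mpr ⟨i n, Finset.mem_image_of_mem _ (hf.mem_toFinset.mpr ⟨x, hn⟩), ?_⟩
    exact hi n (disjointed_subset G n hn)
  have := hinf.to_subtype
  let o := Nat.Subtype.orderIsoOfNat {n | (disjointed G n).Nonempty}
  refine ⟨fun n => disjointed G (o n), fun n => ⟨hDc _, (o n).2, ?_⟩, ?_, ?_⟩
  · exact (Metric.ediam_mono (disjointed_subset _ _)).trans (b4 _ (hsP _))
  · intro a b hab
    exact disjoint_disjointed G fun h => hab (o.injective (Subtype.ext h))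
  · rw [← hGU, ← iUnion_disjointed (f := G)]
    apply Subset.antisymm
    · exact iUnion_subset fun n => subset_iUnion _ _
    · refine iUnion_subset fun n x hx => ?_
      obtain ⟨m, hm⟩ := o.surjective ⟨n, ⟨x, hx⟩⟩
      exact mem_iUnion.mpr ⟨m, by rw [hm]; exact hx⟩

end BG

namespace BG
open Set Topology PiNat

theorem alex_urysohn {X : Type*} [TopologicalSpace X] [PolishSpace X] (hz : ZD X) [Nonempty X]
    (hnc : ∀ U : Set X, IsClopen U → U.Nonempty → ¬ IsCompact U) : Nonempty (E ≃ₜ X) := by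
  classical
  let _ := TopologicalSpace.upgradeIsCompletelyMetrizable X
  have hsp : ∀ (P : Set X) (n : ℕ), IsClopen P ∧ P.Nonempty → ∃ D : ℕ → Set X,
      (∀ k, IsClopen (D k) ∧ (D k).Nonempty ∧ Metric.ediam (D k) ≤ (2⁻¹ : ENNReal) ^ n) ∧
      Pairwise (Function.onFun Disjoint D) ∧ ⋃ k, D k = P := fun P n hP =>
    split_nc hz hP.1 (hnc P hP.1 hP.2) _ (ENNReal.pow_pos (by simp) n)
  choose! D d1 d2 d3 using hsp
  let A : List ℕ → Set X := fun l => List.rec univ (fun k l P => D P l.length k) l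
  have hA0 : A [] = univ := rfl
  have hAs : ∀ k l, A (k :: l) = D (A l) l.length k := fun k l => rfl
  have hA : ∀ l, IsClopen (A l) ∧ (A l).Nonempty := by
    intro l
    induction l with
    | nil => exact ⟨isClopen_univ, univ_nonempty⟩
    | cons k l ih => exact ⟨(d1 (A l) l.length ih k).1, (d1 (A l) l.length ih k).2.1⟩
  have hU : ∀ l, ⋃ k, A (k :: l) = A l := fun l => d3 (A l) l.length (hA l)
  have hanti : CantorScheme.Antitone A := fun l a => by
    rw [← hU l]; exact subset_iUnion (fun k => A (k :: l)) a
  have hdisj : CantorScheme.Disjoint A := fun l a b hab => d2 (A l) l.length (hA l) hab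
  have hcl := hanti.closureAntitone fun l => (hA l).1.isClosed
  have hvan : CantorScheme.VanishingDiam A := by
    intro x
    refine (Filter.tendsto_add_atTop_iff_nat 1).mp ?_
    refine tendsto_of_tendsto_of_tendsto_of_le_of_le tendsto_const_nhds
      (ENNReal.tendsto_pow_atTop_nhds_zero_of_lt_one (r := 2⁻¹) (by simp)) (fun n => zero_le) ?_
    intro n
    have := (d1 (A (res x n)) (res x n).length (hA _) (x n)).2.2
    rw [res_length] at this
    simpa [res_succ, hAs] using this
  have hdom := hcl.map_of_vanishingDiam hvan (fun l => (hA l).2)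
  let f : E → X := fun x => (CantorScheme.inducedMap A).2 ⟨x, hdom ▸ mem_univ x⟩
  have hfm : ∀ x n, f x ∈ A (res x n) := fun x n => CantorScheme.map_mem (A := A) ⟨x, hdom ▸ mem_univ x⟩ n
  have hfc : Continuous f := hvan.map_continuous.comp (by fun_prop)
  have hinj : Function.Injective f := fun x y h => by
    have := hdisj.map_injective h
    exact congrArg Subtype.val this
  have hcode : ∀ l : List ℕ, ∀ y ∈ A l, ∃ x, f x = y ∧ res x l.length = l := by
    intro l y hy
    have hst : ∀ l : List ℕ, y ∈ A l → ∃ k, y ∈ A (k :: l) := fun l hl => by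
      rw [← hU l] at hl; exact mem_iUnion.mp hl
    choose! nx hnx using hst
    -- branch through the given list then following `nx`
    let L : ℕ → List ℕ := fun n => Nat.rec l (fun _ l => nx l :: l) n
    have hLs : ∀ n, L (n+1) = nx (L n) :: L n := fun n => rfl
    have hL : ∀ n, y ∈ A (L n) := by
      intro n
      induction n with
      | zero => exact hy
      | succ n ih => exact hnx _ ih
    let x : E := fun i => if h : i < l.length then l.reverse[i]'(by simpa using h) else nx (L (i - l.length))
    have hx0 : ∀ i ≤ l.length, res x i = (l.drop (l.length - i)) := by
      intro i hi
      induction i with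
      | zero => simp
      | succ i ih =>
        rw [res_succ, ih (by omega)]
        have hlt : l.length - (i+1) < l.length := by omega
        rw [List.drop_eq_getElem_cons hlt]
        congr 1
        · simp only [x]
          rw [dif_pos (by omega)]
          rw [List.getElem_reverse]
          congr 1
          omega
        · congr 1; omega
    have hxl : res x l.length = l := by rw [hx0 _ le_rfl]; simp
    have hx1 : ∀ n, res x (l.length + n) = L n := by
      intro n
      induction n with
      | zero => exact hxl
      | succ n ih =>
        rw [← add_assoc, res_succ, ih, hLs]
        congr 1
        simp only [x]
        rw [dif_neg (by omega)]
        congr 2; omega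
    refine ⟨x, ?_, hxl⟩
    by_contra hne
    obtain ⟨n, hn⟩ := hvan.dist_lt (dist (f x) y) (dist_pos.mpr hne) x
    have hm : ∀ k, A (res x (n + k)) ⊆ A (res x n) := by
      intro k
      induction k with
      | zero => exact le_rfl
      | succ k ih => exact (hanti _ _).trans ih
    have : y ∈ A (res x n) := by
      have h1 := hL n
      rw [← hx1, add_comm] at h1
      exact hm _ h1
    exact lt_irrefl _ (hn _ (hfm x n) _ this)
  have hsurj : Function.Surjective f := fun y => by
    obtain ⟨x, hx, -⟩ := hcode [] y (mem_univ _)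
    exact ⟨x, hx⟩
  have hopen : IsOpenMap f := by
    refine (PiNat.isTopologicalBasis_cylinders (fun _ => ℕ)).isOpenMap_iff.mpr ?_
    rintro _ ⟨x, n, rfl⟩
    have : f '' cylinder x n = A (res x n) := by
      apply Subset.antisymm
      · rintro _ ⟨y, hy, rfl⟩
        rw [cylinder_eq_res] at hy
        have := hfm y n
        rw [hy] at this
        exact this
      · intro y hy
        obtain ⟨x', h1, h2⟩ := hcode _ y hy
        rw [res_length] at h2
        refine ⟨x', ?_, h1⟩
        rw [cylinder_eq_res]; exact h2
    rw [this]; exact (hA _).1.isOpen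
  exact ⟨(Equiv.ofBijective f ⟨hinj, hsurj⟩).toHomeomorphOfContinuousOpen hfc hopen⟩

theorem HH_nc {X : Type*} [TopologicalSpace X] [PolishSpace X] (hz : ZD X)
    (hnc : ∀ U : Set X, IsClopen U → U.Nonempty → ¬ IsCompact U) : HHomogeneous X := by
  intro U hU hne
  have : Nonempty X := hne.to_type
  have : Nonempty U := hne.to_subtype
  have : PolishSpace U := hU.isClosed.polishSpace
  obtain ⟨e⟩ := alex_urysohn hz hnc
  obtain ⟨e'⟩ := alex_urysohn (hz.sub U) (fun V hV hVne hc => by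
    refine hnc (Subtype.val '' V) ⟨?_, ?_⟩ (hVne.image _) (hc.image continuous_subtype_val)
    · exact hU.isClosed.isClosedEmbedding_subtypeVal.isClosedMap _ hV.isClosed
    · exact hU.isOpen.isOpenEmbedding_subtypeVal.isOpenMap _ hV.isOpen)
  exact ⟨e'.symm.trans e⟩

theorem SHH_perfect {X : Type*} [TopologicalSpace X] [PolishSpace X] (hz : ZD X) [PerfectSpace X] :
    SHH X := by
  obtain ⟨Q, hQ, hQd⟩ := TopologicalSpace.exists_countable_dense X
  have := hQ.to_subtype
  have hQg : IsGδ Qᶜ := hQ.isGδ_compl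
  have hQcd : Dense Qᶜ := by
    have : Qᶜ = ⋂ q ∈ Q, ({q}ᶜ : Set X) := by
      ext x; simp only [mem_compl_iff, mem_iInter, mem_singleton_iff]
      exact ⟨fun h i hi e => h (e ▸ hi), fun h hx => h x hx rfl⟩
    rw [this]
    refine dense_biInter_of_isOpen (fun q _ => isOpen_compl_singleton) hQ fun q _ => ?_
    have := perfectSpace_iff_forall_not_isolated.mp ‹PerfectSpace X› q
    exact dense_compl_singleton q
  have : PolishSpace (Qᶜ : Set X) := gdelta_polish hQg
  have hS : HHomogeneous (Qᶜ : Set X) := by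
    refine HH_nc (hz.sub _) ?_
    rintro U hU ⟨⟨x, hx⟩, hxU⟩ hc
    obtain ⟨O, hO, rfl⟩ := isOpen_induced_iff.mp hU.isOpen
    have hc' := hc.image continuous_subtype_val
    rw [Subtype.image_preimage_coe] at hc'
    have hcl := hc'.isClosed
    have : (O ∩ (Qᶜ ∩ O)ᶜ).Nonempty := by
      obtain ⟨q, hq1, hq2⟩ := hQd.exists_mem_open hO ⟨x, hxU⟩
      exact ⟨q, hq2, fun h => h.1 hq1⟩
    obtain ⟨y, hy1, hy2⟩ := hQcd.exists_mem_open (hO.inter hcl.isOpen_compl) this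
    exact hy2.2 ⟨hy1, hy2.1⟩
  refine SHH.of_countable (ι := Option Q) (fun o => o.elim Qᶜ (fun q => {q.1})) ?_ ?_ ?_ ?_
  · rintro (_ | a) (_ | b) hab
    · exact absurd rfl hab
    · simp [Function.onFun]
    · simp [Function.onFun]
    · simp only [Function.onFun, Option.elim, disjoint_singleton]
      exact fun h => hab (by rw [Subtype.ext h])
  · rintro (_ | a)
    · exact hQg
    · exact isClosed_singleton.isGδ
  · rintro (_ | a)
    · exact hS
    · exact HH.subsingleton (A := ({a.1} : Set X))
  · rw [eq_univ_iff_forall]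
    intro x
    by_cases h : x ∈ Q
    · exact mem_iUnion.mpr ⟨some ⟨x, h⟩, rfl⟩
    · exact mem_iUnion.mpr ⟨none, h⟩

theorem SHH_polish {X : Type*} [TopologicalSpace X] [PolishSpace X] (hz : ZD X) : SHH X := by
  obtain ⟨V, D, hV, hD, hVD⟩ := exists_countable_union_perfect_of_isClosed (isClosed_univ (X := X))
  have : PolishSpace D := hD.closed.polishSpace
  have : PerfectSpace D := by
    refine ⟨preperfect_iff_nhds.mpr fun x _ U hU => ?_⟩
    obtain ⟨V, hV, hVU⟩ := mem_nhds_subtype _ _ _ |>.mp hU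
    obtain ⟨y, hy, hne⟩ := preperfect_iff_nhds.mp hD.acc x x.2 V hV
    exact ⟨⟨y, hy.2⟩, ⟨hVU hy.1, mem_univ _⟩, fun h => hne (congrArg Subtype.val h)⟩
  have := hV.to_subtype
  have : Countable (V \ D : Set X) := (hV.mono sdiff_subset).to_subtype
  refine SHH.assemble (ι := Option (V \ D : Set X)) (fun o => o.elim D (fun q => {q.1})) ?_ ?_ ?_ ?_
  · rintro (_ | a) (_ | b) hab
    · exact absurd rfl hab
    · simpa [Function.onFun] using b.2.2
    · simpa [Function.onFun] using a.2.2
    · simp only [Function.onFun, Option.elim, disjoint_singleton]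
      exact fun h => hab (by rw [Subtype.ext h])
  · rintro (_ | a)
    · exact hD.closed.isGδ
    · exact isClosed_singleton.isGδ
  · rintro (_ | a)
    · exact SHH_perfect (X := D) (hz.sub D)
    · exact SHH.of_HH (HH.subsingleton (A := ({a.1} : Set X)))
  · rw [eq_univ_iff_forall]
    intro x
    by_cases h : x ∈ D
    · exact mem_iUnion.mpr ⟨none, h⟩
    · have : x ∈ V ∪ D := hVD ▸ mem_univ x
      exact mem_iUnion.mpr ⟨some ⟨x, this.resolve_right h, h⟩, rfl⟩

instance polishC : PolishSpace C where

theorem SHH_gdelta {T : Set C} (hT : IsGδ T) : SHH T := by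
  have := gdelta_polish hT
  exact SHH_polish (ZD_C.sub T)

end BG

namespace BG
open Set Topology PiNat

theorem SHH_local {A : Type*} [TopologicalSpace A] [SecondCountableTopology A]
    (h : ∀ x : A, ∃ B : Set A, IsClopen B ∧ x ∈ B ∧ SHH B) : SHH A := by
  choose B b1 b2 b3 using h
  obtain ⟨t, htc, htU⟩ := TopologicalSpace.countable_cover_nhds fun x => (b1 x).isOpen.mem_nhds (b2 x)
  rcases t.eq_empty_or_nonempty with rfl | htne
  · refine SHH.of_HH ?_
    intro U _ ⟨x, _⟩
    have : x ∈ ⋃ y ∈ (∅ : Set A), B y := htU ▸ mem_univ x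
    simp at this
  obtain ⟨s, hs⟩ := htc.exists_eq_range htne
  have hDc : ∀ n, IsClopen (disjointed (fun n => B (s n)) n) := by
    intro n
    rw [disjointed_eq_inter_compl]
    exact (b1 _).inter ⟨isClosed_biInter fun i _ => (b1 _).compl.isClosed,
      (Set.finite_lt_nat n).isOpen_biInter fun i _ => (b1 _).compl.isOpen⟩
  refine SHH.assemble (disjointed fun n => B (s n)) (disjoint_disjointed _)
    (fun n => (hDc n).isOpen.isGδ) (fun n => ?_) ?_
  · have h1 := (b3 (s n)).clopen ((hDc n).preimage continuous_subtype_val)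
    refine h1.congr ((preHomeo _ _).trans (Homeomorph.setCongr ?_))
    exact inter_eq_right.mpr (disjointed_subset (fun n => B (s n)) n)
  · rw [iUnion_disjointed, ← htU, hs, biUnion_range]

theorem gdelta_preOn {T R : Set C} {f : C → C} (hT : IsGδ T) (hf : ContinuousOn f T) (hR : IsGδ R) :
    IsGδ (T ∩ f ⁻¹' R) := by
  obtain ⟨U, hU, rfl⟩ := hR.eq_iInter_nat
  choose u hu hu' using fun n => continuousOn_iff'.mp hf (U n) (hU n)
  have : T ∩ f ⁻¹' (⋂ n, U n) = T ∩ ⋂ n, u n := by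
    ext x
    simp only [mem_inter_iff, mem_preimage, mem_iInter]
    refine and_congr_right fun hx => forall_congr' fun n => ?_
    have := Set.ext_iff.mp (hu' n) x
    simpa [hx] using this
  rw [this]
  exact hT.inter (IsGδ.iInter_of_isOpen hu)

theorem bad_ne {T B : Set C} (hT : IsGδ T) (h : ¬ SHH (B ∩ T : Set C)) :
    (B ∩ T).Nonempty ∧ (T \ B).Nonempty := by
  constructor
  · by_contra hne
    rw [not_nonempty_iff_eq_empty] at hne
    apply h; rw [hne]; exact SHH.of_HH HH.subsingleton
  · by_contra hne
    rw [not_nonempty_iff_eq_empty, sdiff_eq_empty] at hne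
    apply h; rw [inter_eq_right.mpr hne]; exact SHH_gdelta hT

structure IsBad (T B : Set C) : Prop where
  g : IsGδ T
  m : MeasurableSet B
  n : ¬ SHH (B ∩ T : Set C)

structure Min (S Y : Set C) : Prop extends IsBad S Y where
  min : ∀ T B, IsBad T B → W S Y T B ∨ W S Y T Bᶜ

theorem exists_min {B : Set C} (hB : MeasurableSet B) (h : ¬ SHH B) : ∃ S Y, Min S Y := by
  by_contra hcon
  have hst : ∀ p : {p : Set C × Set C // IsBad p.1 p.2}, ∃ q : {p : Set C × Set C // IsBad p.1 p.2},
      ¬ W p.1.1 p.1.2 q.1.1 q.1.2 ∧ ¬ W p.1.1 p.1.2 q.1.1 q.1.2ᶜ := by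
    intro p
    by_contra hp
    push Not at hp
    refine hcon ⟨p.1.1, p.1.2, p.2, fun T B hTB => ?_⟩
    by_cases hw : W p.1.1 p.1.2 T B
    · exact Or.inl hw
    · exact Or.inr (hp ⟨(T, B), hTB⟩ hw)
  choose nx n1 n2 using hst
  let p : ℕ → {p : Set C × Set C // IsBad p.1 p.2} := fun n =>
    Nat.rec ⟨(univ, B), IsGδ.univ, hB, by rwa [inter_univ]⟩ (fun _ p => nx p) n
  have hp : ∀ n, p (n+1) = nx (p n) := fun n => rfl
  choose ι r r1 r2 r3 r4 using fun n => retract (p n).2.g (bad_ne (p n).2.g (p n).2.n).1.right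
  have hm : ∀ n, MeasurableSet (r n ⁻¹' (p n).1.2) := fun n => (r2 n).measurable (p n).2.m
  have hg : ∀ n (i : Bool), ∃ g : E → E, (∀ m x x', (∀ k < m, x k = x' k) → g x m = g x' m) ∧
      ∀ y, y ∈ r (n+1) ⁻¹' (p (n+1)).1.2 ↔ (g y ∈ r n ⁻¹' (p n).1.2 ↔ i = false) := by
    rintro n (_ | _)
    · rcases wadge_game (hm n) (hm (n+1)).compl with ⟨f, hf, hf'⟩ | ⟨g, hg, hg'⟩
      · exact absurd (W_of_E (r1 n) (r4 n) (r2 (n+1)) (r3 (n+1)) (cont_of_lip hf) hf') (n2 (p n))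
      · refine ⟨g, hg, fun y => ?_⟩
        have := hg' y
        rw [mem_compl_iff] at this
        simp only [iff_true]
        tauto
    · rcases wadge_game (hm n) (hm (n+1)) with ⟨f, hf, hf'⟩ | ⟨g, hg, hg'⟩
      · exact absurd (W_of_E (r1 n) (r4 n) (r2 (n+1)) (r3 (n+1)) (cont_of_lip hf) hf') (n1 (p n))
      · refine ⟨g, hg, fun y => ?_⟩
        have := hg' y
        simp only [reduceCtorEq, iff_false]
        exact this
  choose g g1 g2 using hg
  exact mm_contraction (A := fun n => r n ⁻¹' (p n).1.2) (g := g) (hm 0) g2 g1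

theorem Min.no_self {S Y : Set C} (h : Min S Y) : ¬ W S Y S Yᶜ := by
  intro hW
  obtain ⟨ι, r, r1, r2, r3, r4⟩ := retract h.g (bad_ne h.g h.n).1.right
  have hz : ∃ z : (Y ∩ S : Set C), ∀ B : Set (Y ∩ S : Set C), IsClopen B → z ∈ B → ¬ SHH B := by
    by_contra hcon
    push Not at hcon
    exact h.n (SHH_local hcon)
  obtain ⟨z, hz⟩ := hz
  have hS : ∀ m, IsBad (S ∩ ι ⁻¹' cylinder (ι z) m) Y := by
    intro m
    refine ⟨?_, h.m, ?_⟩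
    · obtain ⟨u, hu, hu'⟩ := continuousOn_iff'.mp r1 _ (isOpen_cylinder _ (ι z) m)
      rw [inter_comm, hu']
      exact hu.isGδ.inter h.g
    · have hc : Continuous fun w : (Y ∩ S : Set C) => ι w.1 := by
        have := (r1.mono (inter_subset_right (s := Y))).domRestrict
        exact this
      have := hz _ ((clopen_cyl (ι z) m).preimage hc) (self_mem_cylinder _ _)
      intro hsh
      apply this
      refine hsh.congr ?_
      rw [← inter_assoc]
      exact (preHomeo (Y ∩ S) (ι ⁻¹' cylinder (ι z) m)).symm
  refine no_sd (r2.measurable h.m) (ι z) fun m i => ?_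
  set Sm := S ∩ ι ⁻¹' cylinder (ι z) m with hSm
  have hboth : W S Y Sm Y ∧ W S Y Sm Yᶜ := by
    rcases h.min _ _ (hS m) with h1 | h1
    · exact ⟨h1, hW.trans h1.compl⟩
    · refine ⟨?_, h1⟩
      have := hW.trans h1.compl
      rwa [compl_compl] at this
  have : ∃ g : C → C, ContinuousOn g S ∧ MapsTo g S Sm ∧ ∀ x ∈ S, x ∈ Y ↔ (g x ∈ Y ↔ i = false) := by
    cases i
    · obtain ⟨g, g1, g2, g3⟩ := hboth.1
      exact ⟨g, g1, g2, by simpa using g3⟩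
    · obtain ⟨g, g1, g2, g3⟩ := hboth.2
      exact ⟨g, g1, g2, by simpa using g3⟩
  obtain ⟨g, g1, g2, g3⟩ := this
  refine ⟨fun y => ι (g (r y)), ?_, fun y => (g2 (r3 y)).2, fun y => ?_⟩
  · have h1 : Continuous fun y => g (r y) := g1.comp_continuous r2 r3
    exact r1.comp_continuous h1 fun y => (g2 (r3 y)).1
  · have := g3 (r y) (r3 y)
    simp only [mem_preimage]
    rw [r4 _ (g2 (r3 y)).1]
    exact this

theorem Min.closure {S Y T A : Set C} (h : Min S Y) (hTS : T ⊆ S) (hT : IsBad T Y)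
    (hA : MeasurableSet A) {κ : Type*} [Countable κ] (R : κ → Set C)
    (hR1 : Pairwise (Function.onFun Disjoint R)) (hR2 : ∀ i, IsGδ (R i)) (hR3 : ⋃ i, R i = univ)
    (hR4 : ∀ i, W (R i) A S Y) : W univ A T Y := by
  rcases wadge IsGδ.univ hT.g univ_nonempty (bad_ne hT.g hT.n).1.right hA hT.m with h1 | ⟨f, f1, f2, f3⟩
  · exact h1
  exfalso
  have : ∃ i, ¬ SHH ((Y ∩ T) ∩ (T ∩ f ⁻¹' R i) : Set C) := by
    by_contra hcon
    push Not at hcon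
    refine hT.n (SHH.assemble_set (fun i => T ∩ f ⁻¹' R i) ?_ (fun i => gdelta_preOn hT.g f1 (hR2 i)) hcon ?_)
    · intro i j hij
      exact ((hR1 hij).preimage f).mono inter_subset_right inter_subset_right
    · rintro x ⟨-, hx⟩
      have : f x ∈ ⋃ i, R i := hR3 ▸ mem_univ _
      obtain ⟨i, hi⟩ := mem_iUnion.mp this
      exact mem_iUnion.mpr ⟨i, hx, hi⟩
  obtain ⟨i, hi⟩ := this
  have hb : IsBad (T ∩ f ⁻¹' R i) Y := ⟨gdelta_preOn hT.g f1 (hR2 i), h.m, by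
    rwa [inter_assoc, ← inter_assoc T T, inter_self] at hi⟩
  rcases h.min _ _ hb with h1 | h1
  · have h2 : W (T ∩ f ⁻¹' R i) Y (R i) Aᶜ :=
      ⟨f, f1.mono inter_subset_left, fun x hx => hx.2, fun x hx => f3 x hx.1⟩
    exact h.no_self (h1.trans (h2.trans (hR4 i).compl))
  · exact h.no_self (h1.mono le_rfl (inter_subset_left.trans hTS))

theorem W_const {R A S Y : Set C} (hA : (∀ x ∈ R, x ∈ A) ∨ (∀ x ∈ R, x ∉ A))
    (h : (Y ∩ S).Nonempty ∧ (S \ Y).Nonempty) : W R A S Y := by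
  obtain ⟨⟨a, ha⟩, ⟨b, hb⟩⟩ := h
  rcases hA with hA | hA
  · exact ⟨fun _ => a, continuousOn_const, fun _ _ => ha.2, fun x hx => by simp [hA x hx, ha.1]⟩
  · exact ⟨fun _ => b, continuousOn_const, fun _ _ => hb.1, fun x hx => by simp [hA x hx, hb.2]⟩

theorem exists_minC {B : Set C} (hB : MeasurableSet B) (h : ¬ SHH B) : ∃ Y, Min univ Y := by
  obtain ⟨S, Y, hY⟩ := exists_min hB h
  obtain ⟨U, hU, hSU⟩ := hY.g.eq_iInter_nat
  have hSm : MeasurableSet S := hY.g.measurableSet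
  have hw : W univ (Y ∩ S) S Y := by
    refine hY.closure le_rfl hY.toIsBad (hY.m.inter hSm) (κ := Option ℕ)
      (fun o => o.elim S (disjointed fun n => (U n)ᶜ)) ?_ ?_ ?_ ?_
    · have hd : ∀ n, Disjoint S (disjointed (fun n => (U n)ᶜ) n) := by
        intro n
        refine Set.disjoint_left.mpr fun x hx hx' => ?_
        exact disjointed_subset (fun n => (U n)ᶜ) n hx' (mem_iInter.mp (hSU ▸ hx) n)
      rintro (_ | a) (_ | b) hab
      · exact absurd rfl hab
      · exact hd b
      · exact (hd a).symm
      · exact disjoint_disjointed (fun n => (U n)ᶜ) (fun h : a = b => hab (by rw [h]))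
    · rintro (_ | a)
      · exact hY.g
      · change IsGδ (disjointed (fun n => (U n)ᶜ) a)
        rw [disjointed_eq_inter_compl]
        simp only [compl_compl]
        exact (hU a).isClosed_compl.isGδ.inter
          ((Set.finite_lt_nat a).isOpen_biInter fun i _ => hU i).isGδ
    · rw [eq_univ_iff_forall]
      intro x
      by_cases hx : x ∈ S
      · exact mem_iUnion.mpr ⟨none, hx⟩
      · have : x ∈ ⋃ n, disjointed (fun n => (U n)ᶜ) n := by
          rw [iUnion_disjointed, ← compl_iInter, ← hSU]; exact hx
        obtain ⟨n, hn⟩ := mem_iUnion.mp this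
        exact mem_iUnion.mpr ⟨some n, hn⟩
    · rintro (_ | a)
      · exact ⟨id, continuousOn_id, fun x hx => hx, fun x hx => ⟨fun h => h.1, fun h => ⟨h, hx⟩⟩⟩
      · refine W_const (Or.inr fun x hx hx' => ?_) (bad_ne hY.g hY.n)
        exact disjointed_subset (fun n => (U n)ᶜ) a hx (mem_iInter.mp (hSU ▸ hx'.2) a)
  refine ⟨Y ∩ S, ⟨IsGδ.univ, hY.m.inter hSm, by rw [inter_univ]; exact hY.n⟩, fun T B hTB => ?_⟩
  rcases hY.min T B hTB with h1 | h1
  · exact Or.inl (hw.trans h1)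
  · exact Or.inr (hw.trans h1)

end BG

namespace BG
open Set Topology PiNat

def ev (x : C) : C := fun n => x (2*n)
def od (x : C) : C := fun n => x (2*n+1)
def join (z w : C) : C := fun n => if n % 2 = 0 then z (n/2) else w (n/2)

theorem ev_join (z w : C) : ev (join z w) = z := by
  funext n; simp [ev, join]
theorem od_join (z w : C) : od (join z w) = w := by
  funext n; simp only [od, join]
  rw [if_neg (by omega)]; congr 1; omega

theorem ev_cont : Continuous ev := continuous_pi fun n => continuous_apply (2*n)
theorem od_cont : Continuous od := continuous_pi fun n => continuous_apply (2*n+1)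
theorem join_cont : Continuous fun p : C × C => join p.1 p.2 := by
  refine continuous_pi fun n => ?_
  unfold join
  split_ifs
  · exact (continuous_apply _).comp continuous_fst
  · exact (continuous_apply _).comp continuous_snd

def Infn (w : C) : Prop := ∀ n, ∃ m, n ≤ m ∧ w m = true
def Lst (m : ℕ) (w : C) : Prop := w m = true ∧ ∀ k, m < k → w k = false

theorem bit_clopen (n : ℕ) (b : Bool) : IsClopen {w : C | w n = b} :=
  (isClopen_discrete {b}).preimage (continuous_apply n)

theorem gdelta_Infn : IsGδ {w : C | Infn w} := by
  have : {w : C | Infn w} = ⋂ n, ⋃ m, {w : C | n ≤ m ∧ w m = true} := by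
    ext w; simp [Infn]
  rw [this]
  refine IsGδ.iInter_of_isOpen fun n => isOpen_iUnion fun m => ?_
  by_cases h : n ≤ m
  · simp only [h, true_and]; exact (bit_clopen m true).isOpen
  · simp [h]

theorem closed_Lst (m : ℕ) : IsClosed {w : C | Lst m w} := by
  have : {w : C | Lst m w} = {w | w m = true} ∩ ⋂ k, {w : C | m < k → w k = false} := by
    ext w; simp [Lst]
  rw [this]
  refine (bit_clopen m true).isClosed.inter (isClosed_iInter fun k => ?_)
  by_cases h : m < k
  · simp only [h, true_imp_iff]; exact (bit_clopen k false).isClosed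
  · simp [h]

theorem Lst.uniq {m m' : ℕ} {w : C} (h : Lst m w) (h' : Lst m' w) : m = m' := by
  rcases lt_trichotomy m m' with hlt | rfl | hlt
  · have := h.2 m' hlt; rw [h'.1] at this; cases this
  · rfl
  · have := h'.2 m hlt; rw [h.1] at this; cases this

theorem Lst.not_inf {m : ℕ} {w : C} (h : Lst m w) : ¬ Infn w := by
  intro hi
  obtain ⟨k, hk, hk'⟩ := hi (m+1)
  have := h.2 k hk; rw [hk'] at this; cases this

theorem infn_or (w : C) : Infn w ∨ (∃ m, Lst m w) ∨ w = fun _ => false := by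
  classical
  by_cases hi : Infn w
  · exact Or.inl hi
  right
  by_cases hz : w = fun _ => false
  · exact Or.inr hz
  left
  have hb : ∃ n, ∀ m, n ≤ m → w m = false := by
    unfold Infn at hi; push Not at hi; simpa using hi
  have h0 : Nat.find hb ≠ 0 := by
    intro h0
    have := Nat.find_spec hb
    rw [h0] at this
    exact hz (funext fun m => this m (Nat.zero_le _))
  obtain ⟨m, hm⟩ := Nat.exists_eq_succ_of_ne_zero h0
  have h1 := Nat.find_spec hb
  have h2 := Nat.find_min hb (m := m) (by omega)
  rw [hm] at h1
  push Not at h2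
  obtain ⟨k, hk, hk'⟩ := h2
  refine ⟨m, ?_, fun k hk => h1 k hk⟩
  rcases hk.eq_or_lt with rfl | hlt
  · simpa using hk'
  · exact absurd (h1 k hlt) hk'

def AS (A : Set C) : Set C := {x | (Infn (od x) ∧ ev x ∈ A) ∨ ∃ m, Even m ∧ Lst m (od x)}

theorem AS_meas {A : Set C} (hA : MeasurableSet A) : MeasurableSet (AS A) := by
  have : AS A = (od ⁻¹' {w | Infn w} ∩ ev ⁻¹' A) ∪ ⋃ m, ⋃ (_ : Even m), od ⁻¹' {w | Lst m w} := by
    ext x; simp [AS]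
  rw [this]
  refine ((od_cont.measurable gdelta_Infn.measurableSet).inter (ev_cont.measurable hA)).union ?_
  exact MeasurableSet.iUnion fun m => MeasurableSet.iUnion fun _ =>
    od_cont.measurable (closed_Lst m).measurableSet

theorem AS_lst {A : Set C} {m : ℕ} {x : C} (h : Lst m (od x)) : x ∈ AS A ↔ Even m := by
  constructor
  · rintro (⟨hi, -⟩ | ⟨m', he, h'⟩)
    · exact absurd hi h.not_inf
    · rwa [h.uniq h']
  · exact fun he => Or.inr ⟨m, he, h⟩

theorem AS_inf {A : Set C} {x : C} (h : Infn (od x)) : x ∈ AS A ↔ ev x ∈ A := by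
  constructor
  · rintro (⟨-, hi⟩ | ⟨m', he, h'⟩)
    · exact hi
    · exact absurd h h'.not_inf
  · exact fun he => Or.inl ⟨h, he⟩

theorem red_AS {Y T A : Set C} (h : Min univ Y) (hT : IsBad T Y) (hA : MeasurableSet A)
    (hW : W univ A univ Y) : W univ (AS A) T Y := by
  have hbn := bad_ne h.g h.n
  refine h.closure (subset_univ _) hT (AS_meas hA) (κ := Option (Option ℕ))
    (fun o => od ⁻¹' (o.elim {w | Infn w} (fun o => o.elim {fun _ => false} (fun m => {w | Lst m w}))))
    ?_ ?_ ?_ ?_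
  · have d1 : Disjoint {w : C | Infn w} {fun _ => false} := by
      refine disjoint_singleton_right.mpr fun h => ?_
      obtain ⟨m, -, hm⟩ := h 0
      cases hm
    have d2 : ∀ m, Disjoint {w : C | Infn w} {w | Lst m w} := fun m =>
      Set.disjoint_left.mpr fun w hw hw' => hw'.not_inf hw
    have d3 : ∀ m, Disjoint ({fun _ => false} : Set C) {w | Lst m w} := fun m => by
      refine disjoint_singleton_left.mpr fun h => ?_
      cases h.1
    rintro (_ | _ | a) (_ | _ | b) hab
    · exact absurd rfl hab
    · exact d1.preimage _
    · exact (d2 b).preimage _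
    · exact d1.symm.preimage _
    · exact absurd rfl hab
    · exact (d3 b).preimage _
    · exact (d2 a).symm.preimage _
    · exact (d3 a).symm.preimage _
    · refine Disjoint.preimage _ (Set.disjoint_left.mpr fun w hw hw' => hab ?_)
      rw [Lst.uniq hw hw']
  · rintro (_ | _ | a)
    · exact gdelta_Infn.preimage od_cont
    · exact (isClosed_singleton.preimage od_cont).isGδ
    · exact ((closed_Lst a).preimage od_cont).isGδ
  · rw [eq_univ_iff_forall]
    intro x
    rcases infn_or (od x) with h | ⟨m, h⟩ | h
    · exact mem_iUnion.mpr ⟨none, h⟩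
    · exact mem_iUnion.mpr ⟨some (some m), h⟩
    · exact mem_iUnion.mpr ⟨some none, h⟩
  · rintro (_ | _ | a)
    · obtain ⟨f, f1, f2, f3⟩ := hW
      refine ⟨f ∘ ev, (f1.comp_continuous ev_cont fun _ => mem_univ _).continuousOn,
        fun _ _ => mem_univ _, fun x hx => ?_⟩
      rw [AS_inf hx, f3 _ (mem_univ _)]; rfl
    · refine W_const (Or.inr ?_) hbn
      rintro x (hx : od x = _) (⟨hi, -⟩ | ⟨m, -, hm⟩)
      · rw [hx] at hi; obtain ⟨m, -, hm⟩ := hi 0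
        cases hm
      · rw [hx] at hm; cases hm.1
    · by_cases ha : Even a
      · exact W_const (Or.inl fun x hx => (AS_lst hx).mpr ha) hbn
      · exact W_const (Or.inr fun x hx hx' => ha ((AS_lst hx).mp hx')) hbn

theorem emb_step {g : C → C} (hg : Continuous g) {A Y : Set C} (h : ∀ x, x ∈ AS A ↔ g x ∈ Y) (b : ℕ) :
    ∃ b', b + 2 ≤ b' ∧ ∀ x x', od x b = true → (∀ j, b < j → j < b' → od x j = false) →
      od x' (b+1) = true → (∀ j, b+1 < j → j < b' → od x' j = false) → g x ≠ g x' := by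
  by_contra hcon
  push Not at hcon
  let F : ℕ → Set (C × C) := fun n => {p | od p.1 b = true ∧ od p.2 (b+1) = true ∧ g p.1 = g p.2} ∩
    ⋂ j, ({p | b < j → j < b+2+n → od p.1 j = false} ∩ {p | b+1 < j → j < b+2+n → od p.2 j = false})
  have c1 : ∀ j b, IsClosed {p : C × C | od p.1 j = b} := fun j b =>
    (bit_clopen j b).isClosed.preimage (od_cont.comp continuous_fst)
  have c2 : ∀ j b, IsClosed {p : C × C | od p.2 j = b} := fun j b =>
    (bit_clopen j b).isClosed.preimage (od_cont.comp continuous_snd)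
  have hFc : ∀ n, IsClosed (F n) := by
    intro n
    refine ((c1 b true).inter ((c2 (b+1) true).inter (isClosed_eq (hg.comp continuous_fst)
      (hg.comp continuous_snd)))).inter (isClosed_iInter fun j => IsClosed.inter ?_ ?_)
    · by_cases h1 : b < j <;> by_cases h2 : j < b+2+n <;> simp [h1, h2]; exact c1 j false
    · by_cases h1 : b+1 < j <;> by_cases h2 : j < b+2+n <;> simp [h1, h2]; exact c2 j false
  obtain ⟨p, hp⟩ := IsCompact.nonempty_iInter_of_sequence_nonempty_isCompact_isClosed F
    (fun n p hp => ⟨hp.1, mem_iInter.mpr fun j => ⟨fun h1 h2 => (mem_iInter.mp hp.2 j).1 h1 (by omega),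
      fun h1 h2 => (mem_iInter.mp hp.2 j).2 h1 (by omega)⟩⟩)
    (fun n => by
      obtain ⟨x, x', h1, h2, h3, h4, h5⟩ := hcon (b+2+n) (by omega)
      exact ⟨(x, x'), ⟨h1, h3, h5⟩, mem_iInter.mpr fun j => ⟨h2 j, h4 j⟩⟩)
    (hFc 0).isCompact hFc
  have hp' := fun n => mem_iInter.mp hp n
  have l1 : Lst b (od p.1) := ⟨(hp' 0).1.1, fun k hk => (mem_iInter.mp (hp' k).2 k).1 hk (by omega)⟩
  have l2 : Lst (b+1) (od p.2) := ⟨(hp' 0).1.2.1, fun k hk => (mem_iInter.mp (hp' k).2 k).2 hk (by omega)⟩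
  have e1 := (AS_lst (A := A) l1).symm.trans (h p.1)
  have e2 := (AS_lst (A := A) l2).symm.trans (h p.2)
  rw [(hp' 0).1.2.2, ← e2, Nat.even_add_one] at e1
  tauto

theorem emb {Y T A : Set C} (h : Min univ Y) (hT : IsBad T Y) (hA : MeasurableSet A)
    (hW : W univ A univ Y) : ∃ f : C → C, Continuous f ∧ Function.Injective f ∧ (∀ x, f x ∈ T) ∧
      ∀ x, f x ∈ Y ↔ x ∈ A := by
  classical
  obtain ⟨g, g1, g2, g3⟩ := red_AS h hT hA hW
  rw [continuousOn_univ] at g1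
  choose nb nb1 nb2 using emb_step g1 (A := A) (Y := Y) (fun x => g3 x (mem_univ x))
  obtain ⟨b, hb⟩ : ∃ b : ℕ → ℕ, ∀ k, b (k+1) = nb (b k) :=
    ⟨fun n => Nat.rec 0 (fun _ b => nb b) n, fun k => rfl⟩
  have hb2 : ∀ k, b k + 2 ≤ b (k+1) := fun k => hb k ▸ nb1 _
  have hmono : StrictMono b := strictMono_nat_of_lt_succ fun k => by have := hb2 k; omega
  have hbw : ∀ k k' j, b k < j → j < b (k+1) → j ≠ b k' := by
    rintro k k' j h1 h2 rfl
    have := hmono.lt_iff_lt.mp h1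
    have := hmono.lt_iff_lt.mp h2
    omega
  have hb1 : ∀ k k' j, b k < j → j < b (k+1) → j = b k' + 1 → k' = k := by
    rintro k k' j h1 h2 rfl
    have h3 : k' < k+1 := hmono.lt_iff_lt.mp (by omega : b k' < b (k+1))
    by_contra hne
    have h4 : b (k'+1) ≤ b k := hmono.monotone (by omega)
    have := hb2 k'
    omega
  let w : C → C := fun z j => if ∃ k, j = b k then true else
    if h : ∃ k, j = b k + 1 then z h.choose else false
  have hwc : Continuous w := by
    refine continuous_pi fun j => ?_
    simp only [w]
    by_cases h1 : ∃ k, j = b k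
    · simp only [if_pos h1]; exact continuous_const
    · by_cases h2 : ∃ k, j = b k + 1
      · simp only [if_neg h1, dif_pos h2]; exact continuous_apply _
      · simp only [if_neg h1, dif_neg h2]; exact continuous_const
  have w1 : ∀ z k, w z (b k) = true := fun z k => if_pos ⟨k, rfl⟩
  have w2 : ∀ z k, w z (b k + 1) = z k := by
    intro z k
    have hlt : b k + 1 < b (k+1) := by have := hb2 k; omega
    have hn : ¬ ∃ k', b k + 1 = b k' := fun ⟨k', h⟩ => hbw k k' _ (by omega) hlt h
    have hp : ∃ k', b k + 1 = b k' + 1 := ⟨k, rfl⟩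
    simp only [w]
    rw [if_neg hn, dif_pos hp, hb1 k _ _ (by omega) hlt hp.choose_spec]
  have w3 : ∀ z k j, b k + 1 < j → j < b (k+1) → w z j = false := by
    intro z k j h1 h2
    have hn : ¬ ∃ k', j = b k' := fun ⟨k', h⟩ => hbw k k' _ (by omega) h2 h
    have hn' : ¬ ∃ k', j = b k' + 1 := fun ⟨k', h⟩ => by
      have := hb1 k k' j (by omega) h2 h
      subst this; omega
    simp only [w]
    rw [if_neg hn, dif_neg hn']
  refine ⟨fun z => g (join z (w z)), ?_, ?_, fun z => g2 (mem_univ _), fun z => ?_⟩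
  · exact g1.comp (join_cont.comp (continuous_id.prodMk hwc))
  · have key : ∀ z z' k, z k = false → z' k = true → g (join z (w z)) ≠ g (join z' (w z')) := by
      intro z z' k h1 h2
      refine nb2 (b k) _ _ ?_ ?_ ?_ ?_ <;> try rw [← hb]
      · rw [od_join, w1]
      · intro j hj hj'
        rw [od_join]
        rcases (show b k + 1 ≤ j from hj).eq_or_lt with rfl | hlt
        · rw [w2, h1]
        · exact w3 z k j hlt hj'
      · rw [od_join, w2, h2]
      · intro j hj hj'
        rw [od_join]; exact w3 z' k j hj hj'
    intro z z' heq
    funext k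
    cases h1 : z k <;> cases h2 : z' k
    · rfl
    · exact absurd heq (key z z' k h1 h2)
    · exact absurd heq.symm (key z' z k h2 h1)
    · rfl
  · rw [← g3 _ (mem_univ _), AS_inf, ev_join]
    rw [od_join]
    exact fun n => ⟨b n, hmono.id_le n, w1 z n⟩

theorem emb_nwd {Y T V : Set C} (h : Min univ Y) (hT : IsBad T Y) (hTV : T ⊆ V) :
    ∃ e : C → C, Continuous e ∧ Function.Injective e ∧ (∀ x, e x ∈ T) ∧ (∀ x, e x ∈ Y ↔ x ∈ Y) ∧
      ∀ u, IsOpen u → (u ∩ V).Nonempty → ∃ p ∈ u ∩ V, p ∉ range e := by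
  obtain ⟨f, f1, f2, f3, f4⟩ := emb h hT (A := ev ⁻¹' Y) (ev_cont.measurable h.m)
    ⟨ev, ev_cont.continuousOn, fun _ _ => mem_univ _, fun _ _ => Iff.rfl⟩
  have hj : ∀ t, Continuous fun z => join z t := fun t =>
    join_cont.comp (continuous_id.prodMk continuous_const)
  refine ⟨fun z => f (join z fun _ => false), f1.comp (hj _), ?_, fun x => f3 _, fun x => ?_, ?_⟩
  · intro a b hab
    have := congrArg ev (f2 hab)
    rwa [ev_join, ev_join] at this
  · rw [f4, mem_preimage, ev_join]
  · rintro u hu ⟨p, hpu, hpV⟩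
    by_contra hcon
    push Not at hcon
    obtain ⟨z, rfl⟩ := hcon p ⟨hpu, hpV⟩
    have hc : Continuous fun t => f (join z t) := f1.comp (join_cont.comp (continuous_const.prodMk continuous_id))
    obtain ⟨m, hm⟩ := cyl_mem_open (hu.preimage hc) (x := fun _ => false) hpu
    let t : C := fun k => decide (k = m)
    have ht : t ∈ cylinder (fun _ => false : C) m := fun i hi => by simp [t, hi.ne]
    obtain ⟨z', hz'⟩ := hcon _ ⟨hm ht, hTV (f3 _)⟩
    have := congrArg od (f2 hz')
    rw [od_join, od_join] at this
    have := congrFun this m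
    simp [t] at this

end BG

namespace BG
open Set Topology PiNat

structure BF (Y : Set C) (V : Bool → Set C) (L : Bool → ℕ → Set C) (b : Prop) : Prop where
  min : Min univ Y
  clV : ∀ s, IsClosed (V s)
  neV : ∀ s, (V s).Nonempty
  bad : ∀ s u, IsClopen u → (u ∩ V s).Nonempty → IsBad (u ∩ V s) Y
  sub : ∀ s n, L s n ⊆ V s
  clL : ∀ s n, IsClosed (L s n)
  mono : ∀ s, Monotone (L s)
  nwd : ∀ s n O, IsOpen O → (O ∩ V s).Nonempty → ∃ x ∈ O ∩ V s, x ∉ L s n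
  st : ∀ s x, x ∈ V s → (∀ n, x ∉ L s n) → (x ∈ Y ↔ b)

structure Node where
  u : Bool → Set C
  H : Set (Bool → C)

structure Good (Y : Set C) (V : Bool → Set C) (N : Node) : Prop where
  clp : ∀ s, IsClopen (N.u s)
  ne : ∀ s, (N.u s ∩ V s).Nonempty
  clH : IsClosed N.H
  mem : ∀ p ∈ N.H, ∀ s, p s ∈ N.u s ∩ V s
  inj : ∀ p ∈ N.H, ∀ q ∈ N.H, ∀ s, p s = q s → p = q
  st : ∀ p ∈ N.H, ∀ s t, (p s ∈ Y ↔ p t ∈ Y)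
  nwd : ∀ s O, IsOpen O → (O ∩ V s).Nonempty → ∃ x ∈ O ∩ V s, ∀ p ∈ N.H, p s ≠ x

structure Cov (Y : Set C) (V : Bool → Set C) (N : Node) (D : Set Node) : Prop where
  good : ∀ M ∈ D, Good Y V M
  sub : ∀ M ∈ D, ∀ s, M.u s ⊆ N.u s
  ex : ∀ s, ∀ x ∈ N.u s ∩ V s, ∃ M ∈ D, x ∈ M.u s
  uq : ∀ s x, x ∈ V s → ∀ M ∈ D, ∀ M' ∈ D, x ∈ M.u s → x ∈ M'.u s → M = M'
  coh : ∀ p ∈ N.H, ∀ M ∈ D, ∀ s t, p s ∈ M.u s → p t ∈ M.u t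

structure Ref (Y : Set C) (V : Bool → Set C) (N : Node) (D : Set Node) : Prop extends Cov Y V N D where
  H : ∀ M ∈ D, ∀ p, p ∈ M.H ↔ p ∈ N.H ∧ ∀ s, p s ∈ M.u s

def restr (N : Node) (D : Bool → Set C) : Node := ⟨fun t => N.u t ∩ D t, {p | p ∈ N.H ∧ ∀ t, p t ∈ D t}⟩

theorem Good.restr {Y : Set C} {V : Bool → Set C} {N : Node} (h : Good Y V N) {D : Bool → Set C}
    (hD : ∀ t, IsClopen (D t)) (hne : ∀ t, (N.u t ∩ D t ∩ V t).Nonempty) : Good Y V (restr N D) where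
  clp s := (h.clp s).inter (hD s)
  ne := hne
  clH := by
    have : (BG.restr N D).H = N.H ∩ ⋂ t, (fun p : Bool → C => p t) ⁻¹' D t := by
      ext p; simp only [BG.restr, mem_inter_iff, mem_iInter, mem_preimage, mem_ofPred_eq]
    rw [this]
    exact h.clH.inter (isClosed_iInter fun t => (hD t).1.preimage (continuous_apply t))
  mem p hp s := ⟨⟨(h.mem p hp.1 s).1, hp.2 s⟩, (h.mem p hp.1 s).2⟩
  inj p hp q hq s := h.inj p hp.1 q hq.1 s
  st p hp := h.st p hp.1
  nwd s O h1 h2 := by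
    obtain ⟨x, hx, hx'⟩ := h.nwd s O h1 h2
    exact ⟨x, hx, fun p hp => hx' p hp.1⟩

theorem ref_one {Y : Set C} {V : Bool → Set C} {N : Node} (h : Good Y V N) {D : Bool → Set C}
    (hD : ∀ t, IsClopen (D t)) (hs : ∀ t, N.u t ∩ V t ⊆ D t) : Ref Y V N {restr N D} where
  good := by
    rintro M rfl
    refine h.restr hD fun t => ?_
    obtain ⟨x, hx⟩ := h.ne t
    exact ⟨x, ⟨hx.1, hs t hx⟩, hx.2⟩
  sub := by
    rintro M rfl s
    exact inter_subset_left
  ex s x hx := ⟨_, rfl, hx.1, hs s hx⟩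
  uq := by
    rintro s x hx M rfl M' rfl _ _; rfl
  coh := by
    rintro p hp M rfl s t -
    have := h.mem p hp t
    exact ⟨this.1, hs t this⟩
  H := by
    rintro M rfl p
    constructor
    · intro hp
      exact ⟨hp.1, fun s => ⟨(h.mem p hp.1 s).1, hp.2 s⟩⟩
    · intro hp
      exact ⟨hp.1, fun s => (hp.2 s).2⟩

theorem ref_two {Y : Set C} {V : Bool → Set C} {N : Node} (h : Good Y V N) {D : Bool → Set C}
    (hD : ∀ t, IsClopen (D t)) (h1 : ∀ t, (N.u t ∩ D t ∩ V t).Nonempty)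
    (h2 : ∀ t, (N.u t ∩ (D t)ᶜ ∩ V t).Nonempty) (hc : ∀ p ∈ N.H, ∀ s t, p s ∈ D s → p t ∈ D t) :
    Ref Y V N {restr N D, restr N fun t => (D t)ᶜ} where
  good := by
    rintro M (rfl | rfl)
    · exact h.restr hD h1
    · exact h.restr (fun t => (hD t).compl) h2
  sub := by
    rintro M (rfl | rfl) s
    · exact inter_subset_left
    · exact inter_subset_left
  ex s x hx := by
    by_cases hx' : x ∈ D s
    · exact ⟨_, Or.inl rfl, hx.1, hx'⟩
    · exact ⟨_, Or.inr rfl, hx.1, hx'⟩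
  uq := by
    rintro s x hx M (rfl | rfl) M' (rfl | rfl) h1 h2
    · rfl
    · exact absurd h1.2 h2.2
    · exact absurd h2.2 h1.2
    · rfl
  coh := by
    rintro p hp M (rfl | rfl) s t h1
    · exact ⟨(h.mem p hp t).1, hc p hp s t h1.2⟩
    · exact ⟨(h.mem p hp t).1, fun h3 => h1.2 (hc p hp t s h3)⟩
  H := by
    rintro M (rfl | rfl) p
    · exact ⟨fun hp => ⟨hp.1, fun s => ⟨(h.mem p hp.1 s).1, hp.2 s⟩⟩, fun hp => ⟨hp.1, fun s => (hp.2 s).2⟩⟩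
    · exact ⟨fun hp => ⟨hp.1, fun s => ⟨(h.mem p hp.1 s).1, hp.2 s⟩⟩, fun hp => ⟨hp.1, fun s => (hp.2 s).2⟩⟩

theorem Ref.trans {Y : Set C} {V : Bool → Set C} {N : Node} {D : Set Node} {F : Node → Set Node}
    (h : Ref Y V N D) (hF : ∀ M ∈ D, Ref Y V M (F M)) : Ref Y V N (⋃ M ∈ D, F M) where
  good := by
    intro M hM
    simp only [mem_iUnion] at hM
    obtain ⟨K, hK, hM⟩ := hM
    exact (hF K hK).good M hM
  sub := by
    intro M hM s
    simp only [mem_iUnion] at hM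
    obtain ⟨K, hK, hM⟩ := hM
    exact ((hF K hK).sub M hM s).trans (h.sub K hK s)
  ex := by
    intro s x hx
    obtain ⟨K, hK, hx1⟩ := h.ex s x hx
    obtain ⟨M, hM, hx2⟩ := (hF K hK).ex s x ⟨hx1, hx.2⟩
    exact ⟨M, by simp only [mem_iUnion]; exact ⟨K, hK, hM⟩, hx2⟩
  uq := by
    intro s x hx M hM M' hM' h1 h2
    simp only [mem_iUnion] at hM hM'
    obtain ⟨K, hK, hM⟩ := hM
    obtain ⟨K', hK', hM'⟩ := hM'
    have : K = K' := h.uq s x hx K hK K' hK' ((hF K hK).sub M hM s h1) ((hF K' hK').sub M' hM' s h2)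
    subst this
    exact (hF K hK).uq s x hx M hM M' hM' h1 h2
  coh := by
    intro p hp M hM s t h1
    simp only [mem_iUnion] at hM
    obtain ⟨K, hK, hM⟩ := hM
    have h2 : ∀ t, p t ∈ K.u t := fun t => h.coh p hp K hK s t ((hF K hK).sub M hM s h1)
    exact (hF K hK).coh p (((h.H K hK p).2 ⟨hp, h2⟩)) M hM s t h1
  H := by
    intro M hM p
    simp only [mem_iUnion] at hM
    obtain ⟨K, hK, hM⟩ := hM
    rw [(hF K hK).H M hM, h.H K hK]
    constructor
    · rintro ⟨⟨h1, _⟩, h2⟩; exact ⟨h1, h2⟩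
    · rintro ⟨h1, h2⟩; exact ⟨⟨h1, fun s => (hF K hK).sub M hM s (h2 s)⟩, h2⟩

theorem exists_off {Y : Set C} {V : Bool → Set C} {L : Bool → ℕ → Set C} {b : Prop} (hb : BF Y V L b)
    {N : Node} (h : Good Y V N) (s : Bool) : ∃ x ∈ N.u s ∩ V s, ∃ y ∈ N.u s ∩ V s, x ≠ y ∧
      (∀ p ∈ N.H, p s ≠ x) ∧ ∀ p ∈ N.H, p s ≠ y := by
  obtain ⟨x, hx, hx'⟩ := h.nwd s _ (h.clp s).2 (h.ne s)
  have hbad := hb.bad s _ (h.clp s) (h.ne s)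
  obtain ⟨⟨z, hz1, hz2⟩, ⟨w, hw1, hw2⟩⟩ := bad_ne hbad.g hbad.n
  have hne : ((N.u s ∩ {x}ᶜ) ∩ V s).Nonempty := by
    by_cases hzx : z = x
    · have : w ≠ x := by
        rintro rfl
        rw [hzx] at hz1
        exact hw2 hz1
      exact ⟨w, ⟨hw1.1, this⟩, hw1.2⟩
    · exact ⟨z, ⟨hz2.1, hzx⟩, hz2.2⟩
  obtain ⟨y, hy, hy'⟩ := h.nwd s _ ((h.clp s).2.inter isOpen_compl_singleton) hne
  exact ⟨x, hx, y, ⟨hy.1.1, hy.2⟩, fun hxy => hy.1.2 hxy.symm, hx', hy'⟩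

theorem split {Y : Set C} {V : Bool → Set C} {L : Bool → ℕ → Set C} {b : Prop} (hb : BF Y V L b)
    {N : Node} (h : Good Y V N) {B : Set C} (hB : IsClopen B) (s : Bool) :
    ∃ D, Ref Y V N D ∧ ∀ M ∈ D, M.u s ⊆ B ∨ M.u s ⊆ Bᶜ := by
  by_cases c1 : (N.u s ∩ B ∩ V s).Nonempty
  swap
  · refine ⟨{restr N fun t => if t = s then Bᶜ else univ}, ref_one h (fun t => ?_) (fun t => ?_), ?_⟩
    · by_cases ht : t = s
      · rw [if_pos ht]; exact hB.compl
      · rw [if_neg ht]; exact isClopen_univ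
    · by_cases ht : t = s
      · rw [if_pos ht]; subst ht
        intro x hx hxB
        exact c1 ⟨x, ⟨hx.1, hxB⟩, hx.2⟩
      · rw [if_neg ht]; exact subset_univ _
    · rintro M rfl
      right
      intro x hx
      have := hx.2
      beta_reduce at this
      rwa [if_pos rfl] at this
  by_cases c2 : (N.u s ∩ Bᶜ ∩ V s).Nonempty
  swap
  · refine ⟨{restr N fun t => if t = s then B else univ}, ref_one h (fun t => ?_) (fun t => ?_), ?_⟩
    · by_cases ht : t = s
      · rw [if_pos ht]; exact hB
      · rw [if_neg ht]; exact isClopen_univ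
    · by_cases ht : t = s
      · rw [if_pos ht]; subst ht
        intro x hx
        by_contra hxB
        exact c2 ⟨x, ⟨hx.1, hxB⟩, hx.2⟩
      · rw [if_neg ht]; exact subset_univ _
    · rintro M rfl
      left
      intro x hx
      have := hx.2
      beta_reduce at this
      rwa [if_pos rfl] at this
  obtain ⟨x, hx, y, hy, hxy, hx', hy'⟩ := exists_off hb h (!s)
  have hcl : ∀ A : Set C, IsClosed A → IsClosed ((fun p : Bool → C => p (!s)) '' {p | p ∈ N.H ∧ p s ∈ A}) := by
    intro A hA
    have : IsClosed {p | p ∈ N.H ∧ p s ∈ A} := h.clH.inter (hA.preimage (continuous_apply s))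
    exact (this.isCompact.image (continuous_apply (!s))).isClosed
  set K1 := (fun p : Bool → C => p (!s)) '' {p | p ∈ N.H ∧ p s ∈ B} with hK1
  set K2 := (fun p : Bool → C => p (!s)) '' {p | p ∈ N.H ∧ p s ∈ Bᶜ} with hK2
  have hd : K1 ∪ {x} ⊆ (K2 ∪ {y})ᶜ := by
    rintro z (⟨p, ⟨hp, hpB⟩, rfl⟩ | rfl) (⟨q, ⟨hq, hqB⟩, hqz⟩ | hzy)
    · have := h.inj q hq p hp _ hqz
      subst this
      exact hqB hpB
    · exact hy' p hp hzy
    · exact hx' q hq hqz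
    · exact hxy hzy
  obtain ⟨B', hB', hs1, hs2⟩ := exists_clopen_of_closed_subset_open
    ((hcl B hB.1).union isClosed_singleton) ((hcl Bᶜ hB.compl.1).union isClosed_singleton).isOpen_compl hd
  have hall : ∀ t, t = s ∨ t = !s := by intro t; cases t <;> cases s <;> simp
  have hns : (!s) ≠ s := by cases s <;> simp
  set D : Bool → Set C := fun t => if t = s then B else B' with hDdef
  have hDs : D s = B := by simp [hDdef]
  have hDn : D (!s) = B' := by simp [hDdef]
  have hpD : ∀ p ∈ N.H, (p s ∈ B ↔ p (!s) ∈ B') := by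
    intro p hp
    constructor
    · intro hpB; exact hs1 (Or.inl ⟨p, ⟨hp, hpB⟩, rfl⟩)
    · intro hpB
      by_contra hc
      exact hs2 hpB (Or.inl ⟨p, ⟨hp, hc⟩, rfl⟩)
  refine ⟨{restr N D, restr N fun t => (D t)ᶜ}, ref_two h ?_ ?_ ?_ ?_, ?_⟩
  · intro t
    rcases hall t with rfl | rfl
    · rwa [hDs]
    · rwa [hDn]
  · intro t
    rcases hall t with rfl | rfl
    · rwa [hDs]
    · rw [hDn]; exact ⟨x, ⟨hx.1, hs1 (Or.inr rfl)⟩, hx.2⟩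
  · intro t
    rcases hall t with rfl | rfl
    · rwa [hDs]
    · rw [hDn]; exact ⟨y, ⟨hy.1, fun hc => hs2 hc (Or.inr rfl)⟩, hy.2⟩
  · intro p hp t t' ht
    rcases hall t with rfl | rfl <;> rcases hall t' with rfl | rfl
    · exact ht
    · rw [hDs] at ht; rw [hDn]; exact (hpD p hp).1 ht
    · rw [hDn] at ht; rw [hDs]; exact (hpD p hp).2 ht
    · exact ht
  · rintro M (rfl | rfl)
    · left; intro z hz; have := hz.2; rwa [hDs] at this
    · right; intro z hz; have := hz.2; beta_reduce at this; rwa [hDs] at this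

theorem install {Y : Set C} {V : Bool → Set C} {L : Bool → ℕ → Set C} {b : Prop} (hb : BF Y V L b)
    {N : Node} (h : Good Y V N) (n : ℕ) :
    ∃ H', Good Y V ⟨N.u, H'⟩ ∧ ∀ s, ∀ x ∈ L s n ∩ N.u s, ∃ p ∈ H', p s = x := by
  have hall : ∀ t s : Bool, t = s ∨ t = !s := by intro t s; cases t <;> cases s <;> simp
  have hu : ∀ s, ∃ u, IsClopen u ∧ u ⊆ N.u s ∧ u ∩ L s n = ∅ ∧ (u ∩ V s).Nonempty := by
    intro s
    obtain ⟨x, hx, hx'⟩ := hb.nwd s n _ (h.clp s).2 (h.ne s)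
    obtain ⟨m, hm⟩ := cyl_mem_open ((h.clp s).2.inter (hb.clL s n).isOpen_compl) ⟨hx.1, hx'⟩
    refine ⟨cylinder x m, clopen_cyl x m, fun z hz => (hm hz).1, ?_, x, self_mem_cylinder x m, hx.2⟩
    ext z
    simp only [mem_inter_iff, mem_empty_iff_false, iff_false]
    rintro ⟨h1, h2⟩
    exact (hm h1).2 h2
  choose u u1 u2 u3 u4 using hu
  have he := fun s => emb_nwd (V := V s) hb.min (hb.bad s (u s) (u1 s) (u4 s)) inter_subset_right
  choose e e1 e2 e3 e4 e5 using he
  set H' : Set (Bool → C) := {p | ∃ s, p s ∈ L s n ∩ N.u s ∧ p (!s) = e (!s) (p s)} with hH'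
  have hdis : ∀ s x, x ∈ u s → x ∉ L s n := by
    intro s x h1 h2
    have : x ∈ u s ∩ L s n := ⟨h1, h2⟩
    rw [u3 s] at this; exact this
  refine ⟨H', ⟨h.clp, h.ne, ?_, ?_, ?_, ?_, ?_⟩, ?_⟩
  · have : H' = ⋃ s, (((fun p : Bool → C => p s) ⁻¹' (L s n ∩ N.u s)) ∩
        {p : Bool → C | p (!s) = e (!s) (p s)}) := by
      ext p; simp [hH']
    show IsClosed H'
    rw [this]
    refine isClosed_iUnion_of_finite fun s => ?_
    refine (((hb.clL s n).inter (h.clp s).1).preimage (continuous_apply s)).inter ?_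
    exact isClosed_eq (continuous_apply _) ((e1 _).comp (continuous_apply s))
  · rintro p ⟨t, ht, ht'⟩ s
    rcases hall s t with rfl | rfl
    · exact ⟨ht.2, hb.sub _ _ ht.1⟩
    · rw [ht']
      exact ⟨u2 _ (e3 _ _).1, (e3 _ _).2⟩
  · rintro p ⟨t, ht, ht'⟩ q ⟨t', hq, hq'⟩ s hs
    have key : t = t' := by
      rcases hall s t with h0 | h0 <;> rcases hall t' t with h' | h' <;> subst h0
      · exact h'.symm
      · exfalso
        subst h'
        rw [Bool.not_not] at hq'
        refine hdis _ _ ?_ ht.1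
        rw [hs, hq']
        exact (e3 _ _).1
      · exact h'.symm
      · exfalso
        subst h'
        refine hdis _ _ ?_ hq.1
        rw [← hs, ht']
        exact (e3 _ _).1
    subst key
    have h1 : p t = q t := by
      rcases hall s t with rfl | rfl
      · exact hs
      · rw [ht', hq'] at hs
        exact e2 _ hs
    funext r
    rcases hall r t with rfl | rfl
    · exact h1
    · rw [ht', hq', h1]
  · rintro p ⟨t, ht, ht'⟩
    have key : ∀ s, (p s ∈ Y ↔ p t ∈ Y) := by
      intro s
      rcases hall s t with rfl | rfl
      · exact Iff.rfl
      · rw [ht']; exact e4 _ _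
    intro s s'
    rw [key s, key s']
  · intro s O hO hne
    obtain ⟨x, hx, hx'⟩ := hb.nwd s n O hO hne
    obtain ⟨y, hy, hy'⟩ := e5 s (O ∩ (L s n)ᶜ) (hO.inter (hb.clL s n).isOpen_compl) ⟨x, ⟨hx.1, hx'⟩, hx.2⟩
    refine ⟨y, ⟨hy.1.1, hy.2⟩, ?_⟩
    rintro p ⟨t, ht, ht'⟩ hp
    rcases hall s t with rfl | rfl
    · rw [hp] at ht; exact hy.1.2 ht.1
    · rw [hp] at ht'; exact hy' ⟨_, ht'.symm⟩
  · intro s x hx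
    refine ⟨fun t => if t = s then x else e (!s) x, ⟨s, ?_, ?_⟩, ?_⟩
    · simpa using hx
    · simp
    · simp

end BG

namespace BG
open Set Topology PiNat

structure Ch (Y : Set C) (V : Bool → Set C) (L : Bool → ℕ → Set C) (n : ℕ) (N : Node) (D : Set Node) : Prop
    extends Cov Y V N D where
  keep : ∀ M ∈ D, ∀ p ∈ N.H, (∀ s, p s ∈ M.u s) → p ∈ M.H
  alt : ∀ M ∈ D, (M.H ⊆ N.H ∧ M.H.Nonempty) ∨ ∀ s, ∀ x ∈ L s n ∩ M.u s, ∃ p ∈ M.H, p s = x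
  bit : ∀ M ∈ D, ∀ s, ∀ x ∈ M.u s, ∀ y ∈ M.u s, x n = y n

theorem bits_eq {B : Set C} {n : ℕ} (h : B ⊆ {w : C | w n = true} ∨ B ⊆ {w : C | w n = true}ᶜ) :
    ∀ x ∈ B, ∀ y ∈ B, x n = y n := by
  intro x hx y hy
  rcases h with h | h
  · have h1 : x n = true := h hx
    have h2 : y n = true := h hy
    rw [h1, h2]
  · have h1 : ¬ (x n = true) := h hx
    have h2 : ¬ (y n = true) := h hy
    rw [Bool.not_eq_true] at h1 h2
    rw [h1, h2]

theorem exists_Ch {Y : Set C} {V : Bool → Set C} {L : Bool → ℕ → Set C} {b : Prop} (hb : BF Y V L b)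
    {N : Node} (h : Good Y V N) (n : ℕ) : ∃ D, Ch Y V L n N D := by
  classical
  obtain ⟨D1, r1, s1⟩ := split hb h (bit_clopen n true) true
  have h2 : ∀ M : Node, ∃ D, M ∈ D1 → Ref Y V M D ∧
      ∀ K ∈ D, K.u false ⊆ {w : C | w n = true} ∨ K.u false ⊆ {w : C | w n = true}ᶜ := by
    intro M
    by_cases hM : M ∈ D1
    · obtain ⟨D, hD⟩ := split hb (r1.good M hM) (bit_clopen n true) false
      exact ⟨D, fun _ => hD⟩
    · exact ⟨∅, fun h => absurd h hM⟩
  choose F hF using h2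
  have r2 := r1.trans (F := F) fun M hM => (hF M hM).1
  set D := ⋃ M ∈ D1, F M with hD
  have hbit : ∀ M ∈ D, ∀ s, ∀ x ∈ M.u s, ∀ y ∈ M.u s, x n = y n := by
    intro M hM s
    simp only [hD, mem_iUnion] at hM
    obtain ⟨K, hK, hM⟩ := hM
    cases s
    · exact bits_eq ((hF K hK).2 M hM)
    · refine bits_eq ?_
      rcases s1 K hK with h | h
      · exact Or.inl (((hF K hK).1.sub M hM true).trans h)
      · exact Or.inr (((hF K hK).1.sub M hM true).trans h)
  have h3 : ∀ M : Node, ∃ M' : Node, M ∈ D → M'.u = M.u ∧ Good Y V M' ∧ M.H ⊆ M'.H ∧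
      ((M'.H ⊆ N.H ∧ M'.H.Nonempty) ∨ ∀ s, ∀ x ∈ L s n ∩ M'.u s, ∃ p ∈ M'.H, p s = x) := by
    intro M
    by_cases hM : M ∈ D
    swap
    · exact ⟨M, fun h => absurd h hM⟩
    by_cases hne : M.H.Nonempty
    · exact ⟨M, fun _ => ⟨rfl, r2.good M hM, subset_rfl, Or.inl ⟨fun p hp => ((r2.H M hM p).1 hp).1, hne⟩⟩⟩
    · obtain ⟨H', g1, g2⟩ := install hb (r2.good M hM) n
      refine ⟨⟨M.u, H'⟩, fun _ => ⟨rfl, g1, ?_, Or.inr g2⟩⟩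
      rw [not_nonempty_iff_eq_empty.1 hne]
      exact empty_subset _
  choose φ hφ using h3
  refine ⟨φ '' D, ⟨?_, ?_, ?_, ?_, ?_⟩, ?_, ?_, ?_⟩
  · rintro _ ⟨M, hM, rfl⟩
    exact (hφ M hM).2.1
  · rintro _ ⟨M, hM, rfl⟩ s
    rw [(hφ M hM).1]
    exact r2.sub M hM s
  · intro s x hx
    obtain ⟨M, hM, hx'⟩ := r2.ex s x hx
    exact ⟨_, ⟨M, hM, rfl⟩, by rwa [(hφ M hM).1]⟩
  · rintro s x hx _ ⟨M, hM, rfl⟩ _ ⟨M', hM', rfl⟩ h1 h2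
    rw [(hφ M hM).1] at h1
    rw [(hφ M' hM').1] at h2
    rw [r2.uq s x hx M hM M' hM' h1 h2]
  · rintro p hp _ ⟨M, hM, rfl⟩ s t h1
    rw [(hφ M hM).1] at h1 ⊢
    exact r2.coh p hp M hM s t h1
  · rintro _ ⟨M, hM, rfl⟩ p hp h1
    rw [(hφ M hM).1] at h1
    exact (hφ M hM).2.2.1 ((r2.H M hM p).2 ⟨hp, h1⟩)
  · rintro _ ⟨M, hM, rfl⟩
    exact (hφ M hM).2.2.2
  · rintro _ ⟨M, hM, rfl⟩ s
    rw [(hφ M hM).1]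
    exact hbit M hM s

def root : Node := ⟨fun _ => univ, ∅⟩

theorem root_good {Y : Set C} {V : Bool → Set C} {L : Bool → ℕ → Set C} {b : Prop} (hb : BF Y V L b) :
    Good Y V root where
  clp s := isClopen_univ
  ne s := by
    obtain ⟨x, hx⟩ := hb.neV s
    exact ⟨x, trivial, hx⟩
  clH := isClosed_empty
  mem p hp := absurd hp (notMem_empty p)
  inj p hp := absurd hp (notMem_empty p)
  st p hp := absurd hp (notMem_empty p)
  nwd s O _ h2 := by
    obtain ⟨x, hx⟩ := h2
    exact ⟨x, hx, fun p hp => absurd hp (notMem_empty p)⟩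

def IsCh (step : ℕ → Node → Set Node) (c : ℕ → Node) : Prop := c 0 = root ∧ ∀ n, c (n+1) ∈ step n (c n)

section
variable {Y : Set C} {V : Bool → Set C} {L : Bool → ℕ → Set C} {b : Prop}
  {step : ℕ → Node → Set Node}

theorem IsCh.good (hb : BF Y V L b) (hs : ∀ n N, Good Y V N → Ch Y V L n N (step n N)) {c : ℕ → Node}
    (hc : IsCh step c) (n : ℕ) : Good Y V (c n) := by
  induction n with
  | zero => rw [hc.1]; exact root_good hb
  | succ n ih => exact (hs n _ ih).good _ (hc.2 n)

theorem IsCh.anti (hb : BF Y V L b) (hs : ∀ n N, Good Y V N → Ch Y V L n N (step n N)) {c : ℕ → Node}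
    (hc : IsCh step c) (s : Bool) : Antitone fun n => (c n).u s :=
  antitone_nat_of_succ_le fun n => (hs n _ (hc.good hb hs n)).sub _ (hc.2 n) s

theorem IsCh.eq_of (hb : BF Y V L b) (hs : ∀ n N, Good Y V N → Ch Y V L n N (step n N)) {c : ℕ → Node}
    (hc : IsCh step c) {s : Bool} {x y : C} (k : ℕ) (hx : ∀ n, k ≤ n → x ∈ (c n).u s)
    (hy : ∀ n, k ≤ n → y ∈ (c n).u s) : x = y := by
  funext n
  have ha := hc.anti hb hs s (le_max_left (n+1) k)
  exact (hs n _ (hc.good hb hs n)).bit _ (hc.2 n) s x (ha (hx _ (le_max_right _ _))) y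
    (ha (hy _ (le_max_right _ _)))

theorem exists_chain (hb : BF Y V L b) (hs : ∀ n N, Good Y V N → Ch Y V L n N (step n N)) {s : Bool} {x : C}
    (hx : x ∈ V s) : ∃ c, IsCh step c ∧ ∀ n, x ∈ (c n).u s := by
  have h1 : ∀ n (N : {N : Node // Good Y V N ∧ x ∈ N.u s}), ∃ M : {N : Node // Good Y V N ∧ x ∈ N.u s},
      M.1 ∈ step n N.1 := by
    rintro n ⟨N, g, hN⟩
    obtain ⟨M, hM, hx'⟩ := (hs n N g).ex s x ⟨hN, hx⟩
    exact ⟨⟨M, (hs n N g).good M hM, hx'⟩, hM⟩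
  choose g hg using h1
  obtain ⟨d, d0, d1⟩ : ∃ d : ℕ → {N : Node // Good Y V N ∧ x ∈ N.u s}, d 0 = ⟨root, root_good hb, trivial⟩ ∧
      ∀ n, d (n+1) = g n (d n) :=
    ⟨fun n => Nat.rec ⟨root, root_good hb, trivial⟩ (fun n N => g n N) n, rfl, fun _ => rfl⟩
  refine ⟨fun n => (d n).1, ⟨?_, fun n => ?_⟩, fun n => (d n).2.2⟩
  · beta_reduce; rw [d0]
  · beta_reduce; rw [d1]; exact hg _ _

theorem unique_chain (hb : BF Y V L b) (hs : ∀ n N, Good Y V N → Ch Y V L n N (step n N)) {s : Bool} {x : C}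
    (hx : x ∈ V s) {c c' : ℕ → Node} (hc : IsCh step c) (hc' : IsCh step c') (n : ℕ)
    (h : x ∈ (c n).u s) (h' : x ∈ (c' n).u s) : c n = c' n := by
  induction n with
  | zero => rw [hc.1, hc'.1]
  | succ n ih =>
    have e := ih (hc.anti hb hs s (Nat.le_succ n) h) (hc'.anti hb hs s (Nat.le_succ n) h')
    have g := hs n _ (hc.good hb hs n)
    have h1 := hc'.2 n
    rw [← e] at h1
    exact g.uq s x hx _ (hc.2 n) _ h1 h h'

def Th (V : Bool → Set C) (step : ℕ → Node → Set Node) : Set (Bool → C) :=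
  {p | ∃ c, IsCh step c ∧ ∀ n s, p s ∈ (c n).u s ∩ V s}

theorem Th.ex (hb : BF Y V L b) (hs : ∀ n N, Good Y V N → Ch Y V L n N (step n N)) {s : Bool} {x : C}
    (hx : x ∈ V s) : ∃ p ∈ Th V step, p s = x := by
  obtain ⟨c, hc, hcx⟩ := exists_chain hb hs hx
  have h1 : ∀ t, ∃ y, ∀ n, y ∈ (c n).u t ∩ V t := by
    intro t
    have cl : ∀ n, IsClosed ((c n).u t ∩ V t) := fun n => ((hc.good hb hs n).clp t).1.inter (hb.clV t)
    obtain ⟨y, hy⟩ := IsCompact.nonempty_iInter_of_sequence_nonempty_isCompact_isClosed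
      (fun n => (c n).u t ∩ V t)
      (fun n => inter_subset_inter_left _ (hc.anti hb hs t (Nat.le_succ n)))
      (fun n => (hc.good hb hs n).ne t) (cl 0).isCompact cl
    exact ⟨y, fun n => mem_iInter.1 hy n⟩
  choose p hp using h1
  refine ⟨p, ⟨c, hc, fun n s => hp s n⟩, ?_⟩
  exact hc.eq_of hb hs 0 (fun n _ => (hp s n).1) (fun n _ => hcx n)

theorem Th.inj (hb : BF Y V L b) (hs : ∀ n N, Good Y V N → Ch Y V L n N (step n N)) {p q : Bool → C}
    (hp : p ∈ Th V step) (hq : q ∈ Th V step) {s : Bool} (h : p s = q s) : p = q := by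
  obtain ⟨c, hc, hp⟩ := hp
  obtain ⟨c', hc', hq⟩ := hq
  have e : ∀ n, c n = c' n := fun n =>
    unique_chain hb hs (hp 0 s).2 hc hc' n (hp n s).1 (h ▸ (hq n s).1)
  funext t
  exact hc.eq_of hb hs 0 (fun n _ => (hp n t).1) (fun n _ => by rw [e n]; exact (hq n t).1)

theorem Th.cont (hb : BF Y V L b) (hs : ∀ n N, Good Y V N → Ch Y V L n N (step n N)) {p : Bool → C}
    (hp : p ∈ Th V step) (s t : Bool) (n : ℕ) :
    ∃ O, IsOpen O ∧ p s ∈ O ∧ ∀ q ∈ Th V step, q s ∈ O → q t n = p t n := by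
  obtain ⟨c, hc, hp⟩ := hp
  refine ⟨(c (n+1)).u s, ((hc.good hb hs (n+1)).clp s).2, (hp _ s).1, ?_⟩
  rintro q ⟨c', hc', hq⟩ hqs
  have e := unique_chain hb hs (hq 0 s).2 hc hc' (n+1) hqs (hq _ s).1
  have h1 := (hq (n+1) t).1
  rw [← e] at h1
  exact (hs n _ (hc.good hb hs n)).bit _ (hc.2 n) t _ h1 _ (hp _ t).1

theorem Th.st (hb : BF Y V L b) (hs : ∀ n N, Good Y V N → Ch Y V L n N (step n N)) {p : Bool → C}
    (hp : p ∈ Th V step) (s t : Bool) : p s ∈ Y ↔ p t ∈ Y := by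
  obtain ⟨c, hc, hp⟩ := hp
  by_cases hL : ∃ s n, p s ∈ L s n
  swap
  · push Not at hL
    rw [hb.st s _ (hp 0 s).2 (hL s), hb.st t _ (hp 0 t).2 (hL t)]
  obtain ⟨r, n, hr⟩ := hL
  suffices h : ∃ m, p ∈ (c m).H by
    obtain ⟨m, hm⟩ := h
    exact (hc.good hb hs m).st p hm s t
  by_cases hA : ∃ m, n ≤ m ∧ ∀ s, ∀ x ∈ L s m ∩ (c (m+1)).u s, ∃ p ∈ (c (m+1)).H, p s = x
  · obtain ⟨m, hm, hA⟩ := hA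
    obtain ⟨q, hq, hqr⟩ := hA r (p r) ⟨hb.mono r hm hr, (hp _ r).1⟩
    have hk : ∀ k, m+1 ≤ k → q ∈ (c k).H := by
      intro k hk
      induction k, hk using Nat.le_induction with
      | base => exact hq
      | succ k hk ih =>
        have g := hs k _ (hc.good hb hs k)
        refine g.keep _ (hc.2 k) q ih fun t => ?_
        exact g.coh q ih _ (hc.2 k) r t (by rw [hqr]; exact (hp _ r).1)
    have : q = p := by
      funext t
      exact hc.eq_of hb hs (m+1) (fun k hk' => ((hc.good hb hs k).mem q (hk k hk') t).1)
        (fun k _ => (hp k t).1)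
    exact ⟨m+1, this ▸ hq⟩
  · have hB : ∀ m, n ≤ m → (c (m+1)).H ⊆ (c m).H ∧ (c (m+1)).H.Nonempty := by
      intro m hm
      rcases (hs m _ (hc.good hb hs m)).alt _ (hc.2 m) with h | h
      · exact h
      · exact absurd ⟨m, hm, h⟩ hA
    obtain ⟨q, hq⟩ := IsCompact.nonempty_iInter_of_sequence_nonempty_isCompact_isClosed
      (fun k => (c (n+k+1)).H) (fun k => (hB (n+(k+1)) (by omega)).1)
      (fun k => (hB (n+k) (by omega)).2) (hc.good hb hs _).clH.isCompact
      (fun k => (hc.good hb hs _).clH)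
    rw [mem_iInter] at hq
    have : q = p := by
      funext t
      refine hc.eq_of hb hs (n+1) (fun k hk' => ?_) (fun k _ => (hp k t).1)
      obtain ⟨j, rfl⟩ : ∃ j, k = n + j + 1 := ⟨k - n - 1, by omega⟩
      exact ((hc.good hb hs _).mem q (hq j) t).1
    exact ⟨n+0+1, this ▸ hq 0⟩

end

theorem BF.homeo {Y : Set C} {V : Bool → Set C} {L : Bool → ℕ → Set C} {b : Prop} (hb : BF Y V L b) :
    Nonempty ((Y ∩ V true : Set C) ≃ₜ (Y ∩ V false : Set C)) := by
  have h1 : ∀ n N, ∃ D, Good Y V N → Ch Y V L n N D := by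
    intro n N
    by_cases h : Good Y V N
    · obtain ⟨D, hD⟩ := exists_Ch hb h n
      exact ⟨D, fun _ => hD⟩
    · exact ⟨∅, fun h' => absurd h' h⟩
  choose step hs using h1
  have h2 : ∀ s (x : (Y ∩ V s : Set C)), ∃ p ∈ Th V step, p s = x.1 := fun s x => Th.ex hb hs x.2.2
  choose P P1 P2 using h2
  have hV : ∀ p ∈ Th V step, ∀ s, p s ∈ V s := fun p ⟨c, _, hp⟩ s => (hp 0 s).2
  have key : ∀ s (x : (Y ∩ V s : Set C)) t, P s x t ∈ Y ∩ V t := by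
    intro s x t
    refine ⟨(Th.st hb hs (P1 s x) s t).1 ?_, hV _ (P1 s x) t⟩
    rw [P2]; exact x.2.1
  have hcont : ∀ s t, Continuous fun x : (Y ∩ V s : Set C) => (⟨P s x t, key s x t⟩ : (Y ∩ V t : Set C)) := by
    intro s t
    refine Continuous.subtype_mk (continuous_pi fun n => ?_) _
    rw [continuous_iff_continuousAt]
    intro x
    obtain ⟨O, hO, hx, hq⟩ := Th.cont hb hs (P1 s x) s t n
    rw [P2] at hx
    have : (fun z : (Y ∩ V s : Set C) => P s z t n) =ᶠ[𝓝 x] fun _ => P s x t n := by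
      filter_upwards [(hO.preimage continuous_subtype_val).mem_nhds hx] with z hz
      refine hq _ (P1 s z) ?_
      rw [P2]; exact hz
    exact continuousAt_const.congr this.symm
  have hinv : ∀ s t (x : (Y ∩ V s : Set C)), (⟨P t ⟨P s x t, key s x t⟩ s, key t ⟨P s x t, key s x t⟩ s⟩ : (Y ∩ V s : Set C)) = x := by
    intro s t x
    apply Subtype.ext
    have : P t ⟨P s x t, key s x t⟩ = P s x := Th.inj hb hs (P1 _ _) (P1 _ _) (s := t) (P2 _ _)
    show P t ⟨P s x t, key s x t⟩ s = x.1
    rw [this, P2]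
  exact ⟨{
    toFun := fun x => ⟨P true x false, key true x false⟩
    invFun := fun x => ⟨P false x true, key false x true⟩
    left_inv := fun x => hinv true false x
    right_inv := fun x => hinv false true x
    continuous_toFun := hcont true false
    continuous_invFun := hcont false true }⟩

end BG

namespace BG
open Set Topology PiNat

theorem SHH_sub {Y D Q : Set C} (h : SHH (Y ∩ D : Set C)) (hQ : IsClopen Q) : SHH (Y ∩ (D ∩ Q) : Set C) := by
  have h1 := (h.clopen (hQ.preimage continuous_subtype_val)).congr (preHomeo (Y ∩ D) Q)
  rwa [inter_assoc] at h1

theorem SHH_open {Y S : Set C} (hS : IsOpen S)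
    (h : ∀ x ∈ Y ∩ S, ∃ D, IsClopen D ∧ x ∈ D ∧ SHH (Y ∩ D : Set C)) : SHH (Y ∩ S : Set C) := by
  refine SHH_local fun x => ?_
  obtain ⟨D, hD, hx, hs⟩ := h x.1 x.2
  obtain ⟨m, hm⟩ := cyl_mem_open hS x.2.2
  have hc := clopen_cyl x.1 m
  refine ⟨Subtype.val ⁻¹' (D ∩ cylinder x.1 m), (hD.inter hc).preimage continuous_subtype_val,
    ⟨hx, self_mem_cylinder x.1 m⟩, ?_⟩
  have h1 := SHH_sub hs hc
  have h2 : Y ∩ (D ∩ cylinder x.1 m) = (Y ∩ S) ∩ (D ∩ cylinder x.1 m) := by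
    ext z
    constructor
    · rintro ⟨h1, h2, h3⟩; exact ⟨⟨h1, hm h3⟩, h2, h3⟩
    · rintro ⟨⟨h1, _⟩, h2, h3⟩; exact ⟨h1, h2, h3⟩
  rw [h2] at h1
  exact h1.congr (preHomeo (Y ∩ S) _).symm

theorem baire_seq {K Y : Set C} (hK : IsClosed K) (hY : MeasurableSet Y) :
    ∃ (u : Set C) (F : ℕ → Set C), IsOpen u ∧ (∀ n, F n ⊆ K) ∧ (∀ n, IsClosed (F n)) ∧ Monotone F ∧
      (∀ n O, IsOpen O → (O ∩ K).Nonempty → ∃ x ∈ O ∩ K, x ∉ F n) ∧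
      ∀ x ∈ K, (∀ n, x ∉ F n) → (x ∈ Y ↔ x ∈ u) := by
  have hm : MeasurableSet (Subtype.val ⁻¹' Y : Set K) := measurable_subtype_coe hY
  obtain ⟨u0, hu0, he⟩ := hm.residualEq_isOpen
  obtain ⟨u, hu, rfl⟩ := isOpen_induced_iff.1 hu0
  obtain ⟨S, S1, S2, S3, S4⟩ := mem_residual_iff.1 he
  obtain ⟨G, hG⟩ := (S3.insert univ).exists_eq_range (insert_nonempty _ _)
  have hG' : ∀ n, IsOpen (G n) ∧ Dense (G n) := by
    intro n
    have : G n ∈ insert univ S := hG ▸ mem_range_self n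
    rcases this with h | h
    · rw [h]; exact ⟨isOpen_univ, dense_univ⟩
    · exact ⟨S1 _ h, S2 _ h⟩
  have hI : ∀ n, IsOpen (⋂ i ≤ n, G i) ∧ Dense (⋂ i ≤ n, G i) := by
    intro n
    induction n with
    | zero => simpa using hG' 0
    | succ n ih =>
      rw [biInter_le_succ]
      exact ⟨ih.1.inter (hG' _).1, ih.2.inter_of_isOpen_left (hG' _).2 ih.1⟩
  refine ⟨u, fun n => Subtype.val '' (⋂ i ≤ n, G i)ᶜ, hu, ?_, ?_, ?_, ?_, ?_⟩
  · rintro n _ ⟨x, _, rfl⟩; exact x.2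
  · intro n
    exact hK.isClosedEmbedding_subtypeVal.isClosedMap _ (hI n).1.isClosed_compl
  · intro n m hnm
    refine image_mono (compl_subset_compl.2 ?_)
    exact biInter_subset_biInter_left fun i hi => le_trans hi hnm
  · rintro n O hO ⟨x, hx1, hx2⟩
    obtain ⟨y, hy1, hy2⟩ := (hI n).2.inter_open_nonempty _ (hO.preimage continuous_subtype_val) ⟨⟨x, hx2⟩, hx1⟩
    refine ⟨y.1, ⟨hy1, y.2⟩, ?_⟩
    rintro ⟨z, hz, hzy⟩
    rw [Subtype.ext hzy] at hz
    exact hz hy2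
  · intro x hx hF
    have : (⟨x, hx⟩ : K) ∈ ⋂₀ S := by
      intro t ht
      have ht' : t ∈ insert univ S := Or.inr ht
      rw [hG] at ht'
      obtain ⟨n, rfl⟩ := ht'
      by_contra hc
      refine hF n ⟨⟨x, hx⟩, fun h => hc ?_, rfl⟩
      simp only [mem_iInter] at h
      exact h n le_rfl
    exact iff_of_eq (S4 this)

theorem HH_of_bad {Y V : Set C} {L : ℕ → Set C} {b : Prop} (min : Min univ Y) (clV : IsClosed V)
    (bad : ∀ u, IsClopen u → (u ∩ V).Nonempty → IsBad (u ∩ V) Y)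
    (sub : ∀ n, L n ⊆ V) (clL : ∀ n, IsClosed (L n)) (mono : Monotone L)
    (nwd : ∀ n O, IsOpen O → (O ∩ V).Nonempty → ∃ x ∈ O ∩ V, x ∉ L n)
    (st : ∀ x, x ∈ V → (∀ n, x ∉ L n) → (x ∈ Y ↔ b)) : HHomogeneous (Y ∩ V : Set C) := by
  intro U hU hne
  set Z : Set C := Subtype.val '' U with hZ
  set V' := closure Z with hV'
  have hZs : Z ⊆ Y ∩ V := by rintro _ ⟨x, _, rfl⟩; exact x.2
  have hsub : V' ⊆ V := closure_minimal (hZs.trans inter_subset_right) clV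
  obtain ⟨P, hP, hPU⟩ := isOpen_induced_iff.1 hU.2
  obtain ⟨P', hP', hPU'⟩ := isOpen_induced_iff.1 hU.compl.2
  have hYZ : Y ∩ V' = Z := by
    apply Subset.antisymm
    · rintro y ⟨hy, hyV⟩
      by_contra hc
      have hyY : y ∈ Y ∩ V := ⟨hy, hsub hyV⟩
      have h1 : (⟨y, hyY⟩ : (Y ∩ V : Set C)) ∈ Uᶜ := fun h => hc ⟨_, h, rfl⟩
      rw [← hPU'] at h1
      obtain ⟨z, hz1, w, hw, rfl⟩ := mem_closure_iff.1 hyV P' hP' h1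
      have : w ∈ Uᶜ := by rw [← hPU']; exact hz1
      exact this hw
    · exact fun z hz => ⟨(hZs hz).1, subset_closure hz⟩
  have hPZ : ∀ y ∈ Y ∩ V, y ∈ P → y ∈ Z := by
    intro y hy hyP
    have : (⟨y, hy⟩ : (Y ∩ V : Set C)) ∈ U := by rw [← hPU]; exact hyP
    exact ⟨_, this, rfl⟩
  have key : ∀ O, IsOpen O → (O ∩ V').Nonempty → ∃ Q, IsClopen Q ∧ Q ⊆ O ∧ (Q ∩ V).Nonempty ∧ Q ∩ V ⊆ V' := by
    rintro O hO ⟨x, hx1, hx2⟩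
    obtain ⟨z, hz1, hz2⟩ := mem_closure_iff.1 hx2 O hO hx1
    have hzP : z ∈ P := by
      obtain ⟨w, hw, rfl⟩ := hz2
      rw [← hPU] at hw; exact hw
    obtain ⟨m, hm⟩ := cyl_mem_open (hO.inter hP) ⟨hz1, hzP⟩
    refine ⟨cylinder z m, clopen_cyl z m, fun y hy => (hm hy).1, ⟨z, self_mem_cylinder z m, (hZs hz2).2⟩, ?_⟩
    rintro y ⟨hy1, hy2⟩
    rw [hV', mem_closure_iff]
    intro R hR hyR
    obtain ⟨k, hk⟩ := cyl_mem_open (hR.inter (clopen_cyl z m).2) ⟨hyR, hy1⟩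
    have hbad := bad (cylinder y k) (clopen_cyl y k) ⟨y, self_mem_cylinder y k, hy2⟩
    obtain ⟨w, hw1, hw2, hw3⟩ := (bad_ne hbad.g hbad.n).1
    exact ⟨w, (hk hw2).1, hPZ w ⟨hw1, hw3⟩ (hm (hk hw2).2).2⟩
  have hZne : Z.Nonempty := hne.image _
  have hBF : BF Y (fun s => cond s V' V) (fun s n => cond s (L n ∩ V') (L n)) b := by
    constructor
    · exact min
    · rintro (_ | _)
      · exact clV
      · exact isClosed_closure
    · rintro (_ | _)
      · exact hZne.mono (hZs.trans inter_subset_right)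
      · exact hZne.mono subset_closure
    · rintro (_ | _) u hu hune
      · exact bad u hu hune
      · change (u ∩ V').Nonempty at hune
        change IsBad (u ∩ V') Y
        obtain ⟨Q, Q1, Q2, Q3, Q4⟩ := key u hu.2 hune
        refine ⟨(hu.1.inter isClosed_closure).isGδ, min.m, fun h => ?_⟩
        have h1 := SHH_sub h Q1
        have h2 : (u ∩ V') ∩ Q = Q ∩ V := by
          ext z
          constructor
          · rintro ⟨⟨_, h1⟩, h2⟩; exact ⟨h2, hsub h1⟩
          · rintro ⟨h1, h2⟩; exact ⟨⟨Q2 h1, Q4 ⟨h1, h2⟩⟩, h1⟩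
        rw [h2] at h1
        exact (bad Q Q1 Q3).n h1
    · rintro (_ | _) n
      · exact sub n
      · exact inter_subset_right
    · rintro (_ | _) n
      · exact clL n
      · exact (clL n).inter isClosed_closure
    · rintro (_ | _)
      · exact mono
      · exact fun n m h => inter_subset_inter_left _ (mono h)
    · rintro (_ | _) n O hO hOne
      · exact nwd n O hO hOne
      · obtain ⟨Q, Q1, Q2, Q3, Q4⟩ := key O hO hOne
        obtain ⟨x, hx, hx'⟩ := nwd n Q Q1.2 Q3
        exact ⟨x, ⟨Q2 hx.1, Q4 hx⟩, fun h => hx' h.1⟩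
    · rintro (_ | _) x hx hxL
      · exact st x hx hxL
      · exact st x (hsub hx) fun n h => hxL n ⟨h, hx⟩
  obtain ⟨e⟩ := hBF.homeo
  change (Y ∩ V' : Set C) ≃ₜ (Y ∩ V : Set C) at e
  rw [hYZ] at e
  exact ⟨(IsEmbedding.subtypeVal.homeomorphImage U).trans e⟩

theorem SHH_C {B : Set C} (hB : MeasurableSet B) : SHH B := by
  by_contra hcon
  obtain ⟨Y, hY⟩ := exists_minC hB hcon
  set K : Set C := {x | ∀ U, IsClopen U → x ∈ U → ¬ SHH (Y ∩ U : Set C)} with hKdef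
  have hKc : ∀ x, x ∉ K → ∃ D, IsClopen D ∧ x ∈ D ∧ SHH (Y ∩ D : Set C) := by
    intro x hx
    by_contra hc
    exact hx fun U hU hxU hS => hc ⟨U, hU, hxU, hS⟩
  have hK : IsClosed K := by
    rw [← isOpen_compl_iff, isOpen_iff_mem_nhds]
    intro x hx
    obtain ⟨D, hD, hxD, hS⟩ := hKc x hx
    filter_upwards [hD.2.mem_nhds hxD] with y hy hyK
    exact hyK D hD hy hS
  have hKne : K.Nonempty := by
    by_contra hc
    refine hY.n (SHH_open isOpen_univ fun x _ => hKc x fun h => hc ⟨x, h⟩)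
  have bad : ∀ u, IsClopen u → (u ∩ K).Nonempty → IsBad (u ∩ K) Y := by
    rintro u hu ⟨x, hxu, hxK⟩
    refine ⟨(hu.1.inter hK).isGδ, hY.m, fun h => ?_⟩
    refine hxK u hu hxu ?_
    refine SHH.assemble_set (fun s : Bool => cond s K Kᶜ) ?_ ?_ ?_ ?_
    · rintro (_ | _) (_ | _) hne
      · exact absurd rfl hne
      · exact disjoint_compl_left
      · exact disjoint_compl_right
      · exact absurd rfl hne
    · rintro (_ | _)
      · exact hK.isOpen_compl.isGδ
      · exact hK.isGδ
    · rintro (_ | _)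
      · change SHH (Y ∩ u ∩ Kᶜ : Set C)
        rw [inter_assoc]
        exact SHH_open (hu.2.inter hK.isOpen_compl) fun x hx => hKc x hx.2.2
      · change SHH (Y ∩ u ∩ K : Set C)
        rwa [inter_assoc]
    · intro z _
      by_cases hz : z ∈ K
      · exact mem_iUnion.2 ⟨true, hz⟩
      · exact mem_iUnion.2 ⟨false, hz⟩
  obtain ⟨u, F, hu, F1, F2, F3, F4, F5⟩ := baire_seq hK hY.m
  obtain ⟨U, b, hU, hUne, hUb⟩ : ∃ (U : Set C) (b : Prop), IsClopen U ∧ (U ∩ K).Nonempty ∧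
      ∀ x ∈ U ∩ K, (x ∈ u ↔ b) := by
    by_cases hne : (u ∩ K).Nonempty
    · obtain ⟨x, hx, hxK⟩ := hne
      obtain ⟨m, hm⟩ := cyl_mem_open hu hx
      exact ⟨cylinder x m, True, clopen_cyl x m, ⟨x, self_mem_cylinder x m, hxK⟩,
        fun y hy => iff_true_intro (hm hy.1)⟩
    · refine ⟨univ, False, isClopen_univ, by rwa [univ_inter], fun y hy => ?_⟩
      exact iff_false_intro fun h => hne ⟨y, h, hy.2⟩
  refine (bad U hU hUne).n (SHH.of_HH ?_)
  refine HH_of_bad (L := fun n => U ∩ F n) (b := b) hY (hU.1.inter hK) ?_ ?_ ?_ ?_ ?_ ?_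
  · intro w hw hne
    rw [← inter_assoc] at hne ⊢
    exact bad _ (hw.inter hU) hne
  · exact fun n => inter_subset_inter_right _ (F1 n)
  · exact fun n => hU.1.inter (F2 n)
  · exact fun n m h => inter_subset_inter_right _ (F3 h)
  · intro n O hO hne
    rw [← inter_assoc] at hne
    obtain ⟨x, hx, hx'⟩ := F4 n _ (hO.inter hU.2) hne
    exact ⟨x, ⟨hx.1.1, hx.1.2, hx.2⟩, fun h => hx' h.2⟩
  · intro x hx h
    rw [F5 x hx.2 fun n hn => h n ⟨hx.1, hn⟩]
    exact hUb x hx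

end BG

namespace BG
open Set Topology PiNat Filter

def okc (o : Option ℚ) : Set ℝ :=
  match o with
  | some q => {(q : ℝ)}
  | none => {x | Irrational x}

theorem okc_gdelta (o : Option ℚ) : IsGδ (okc o) := by
  cases o with
  | none => exact IsGδ.setOfPred_irrational
  | some q => exact (isClosed_singleton (x := (q : ℝ))).isGδ

theorem okc_ex (x : ℝ) : ∃ o, x ∈ okc o := by
  by_cases h : Irrational x
  · exact ⟨none, h⟩
  · have : x ∈ range ((↑) : ℚ → ℝ) := by
      by_contra hc
      exact h hc
    obtain ⟨q, rfl⟩ := this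
    exact ⟨some q, rfl⟩

theorem okc_uq {x : ℝ} {o o' : Option ℚ} (h : x ∈ okc o) (h' : x ∈ okc o') : o = o' := by
  cases o with
  | none =>
    cases o' with
    | none => rfl
    | some q =>
      exfalso
      have h1 : x = q := h'
      have h2 : Irrational x := h
      exact h2 ⟨q, h1.symm⟩
  | some r =>
    have h1 : x = r := h
    cases o' with
    | none =>
      exfalso
      have h2 : Irrational x := h'
      exact h2 ⟨r, h1.symm⟩
    | some q =>
      have h2 : x = q := h'
      rw [h1] at h2
      rw [Rat.cast_injective h2]

def Zp {n : ℕ} (a : Fin n → Option ℚ) : Set (Fin n → ℝ) := {x | ∀ i, x i ∈ okc (a i)}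

theorem Zp_gdelta {n : ℕ} (a : Fin n → Option ℚ) : IsGδ (Zp a) := by
  have : Zp a = ⋂ i, (fun x : Fin n → ℝ => x i) ⁻¹' okc (a i) := by
    ext x; simp [Zp]
  rw [this]
  exact IsGδ.iInter fun i => (okc_gdelta _).preimage (continuous_apply i)

noncomputable def code {n : ℕ} (x : Fin n → ℝ) : C := fun k =>
  match (Encodable.decode k : Option (Fin n × ℚ)) with
  | some p => @decide ((p.2 : ℝ) < x p.1) (Classical.dec _)
  | none => false

theorem code_eq {n : ℕ} (x : Fin n → ℝ) (p : Fin n × ℚ) :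
    code x (Encodable.encode p) = true ↔ (p.2 : ℝ) < x p.1 := by
  unfold code
  rw [Encodable.encodek]
  exact @decide_eq_true_iff _ (Classical.dec _)

theorem code_cont {n : ℕ} (a : Fin n → Option ℚ) : ContinuousOn code (Zp a) := by
  rw [continuousOn_pi]
  intro k x hx
  unfold code
  cases hd : (Encodable.decode k : Option (Fin n × ℚ)) with
  | none => exact continuousWithinAt_const
  | some p =>
    classical
    have key : ∀ᶠ y in 𝓝[Zp a] x, ((p.2 : ℝ) < x p.1 ↔ (p.2 : ℝ) < y p.1) := by
      have hc : ContinuousWithinAt (fun y : Fin n → ℝ => y p.1) (Zp a) x :=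
        (continuous_apply p.1).continuousWithinAt
      rcases lt_trichotomy (p.2 : ℝ) (x p.1) with h | h | h
      · filter_upwards [hc.eventually (lt_mem_nhds h)] with y hy
        exact iff_of_true h hy
      · filter_upwards [self_mem_nhdsWithin] with y hy
        have h1 : x p.1 ∈ okc (some p.2) := h.symm
        have h2 := okc_uq (hx p.1) h1
        have h3 := hy p.1
        rw [h2] at h3
        have h4 : y p.1 = p.2 := h3
        rw [h4, ← h]
      · filter_upwards [hc.eventually (gt_mem_nhds h)] with y hy
        exact iff_of_false h.not_gt hy.not_gt
    have h0 : ContinuousWithinAt (fun _ : Fin n → ℝ => @decide ((p.2 : ℝ) < x p.1) (Classical.dec _)) (Zp a) x :=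
      continuousWithinAt_const
    refine h0.congr_of_eventuallyEq ?_ rfl
    filter_upwards [key] with y hy
    simp only [hy]

theorem code_ind {n : ℕ} {S : Set (Fin n → ℝ)} (hc : ContinuousOn code S) :
    IsEmbedding (fun x : S => code x.1) := by
  have : IsInducing (fun x : S => code x.1) := by
    rw [isInducing_iff_nhds]
    intro x
    apply le_antisymm
    · exact (continuousOn_iff_continuous_domRestrict.1 hc).continuousAt.tendsto.le_comap
    · rw [nhds_subtype, ← tendsto_iff_comap, tendsto_pi_nhds]
      intro i
      have hk : ∀ p : Fin n × ℚ, ∀ᶠ y in comap (fun x : S => code x.1) (𝓝 (code x.1)),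
          (code y.1 (Encodable.encode p) = true ↔ code x.1 (Encodable.encode p) = true) := by
        intro p
        refine mem_comap.2 ⟨{w | w (Encodable.encode p) = code x.1 (Encodable.encode p)},
          (bit_clopen _ _).2.mem_nhds rfl, ?_⟩
        intro y hy
        have : code y.1 (Encodable.encode p) = code x.1 (Encodable.encode p) := hy
        show _ ↔ _
        rw [this]
      rw [tendsto_order]
      constructor
      · intro r hr
        obtain ⟨q, h1, h2⟩ := exists_rat_btwn hr
        filter_upwards [hk (i, q)] with y hy
        rw [code_eq, code_eq] at hy
        exact h1.trans (hy.2 h2)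
      · intro r hr
        obtain ⟨q, h1, h2⟩ := exists_rat_btwn hr
        filter_upwards [hk (i, q)] with y hy
        rw [code_eq, code_eq] at hy
        exact (not_lt.1 fun h => (h1.not_gt (hy.1 h))).trans_lt h2
  exact this.isEmbedding

theorem SHH_R {n : ℕ} {X : Set (Fin n → ℝ)} (hX : MeasurableSet X) : SHH X := by
  refine SHH.assemble_set (fun a : Fin n → Option ℚ => Zp a) ?_ Zp_gdelta ?_ ?_
  · intro a a' hne
    refine Set.disjoint_left.2 fun x h h' => hne ?_
    funext i
    exact okc_uq (h i) (h' i)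
  · intro a
    have hc : ContinuousOn code (X ∩ Zp a) := (code_cont a).mono inter_subset_right
    have he := code_ind hc
    have hm : MeasurableSet (X ∩ Zp a) := hX.inter (Zp_gdelta a).measurableSet
    have hr : range (fun x : (X ∩ Zp a : Set (Fin n → ℝ)) => code x.1) = code '' (X ∩ Zp a) := by
      ext w; simp
    have hm' : MeasurableSet (code '' (X ∩ Zp a)) := by
      refine hm.image_of_continuousOn_injOn hc ?_
      intro x hx y hy hxy
      have := he.injective (a₁ := ⟨x, hx⟩) (a₂ := ⟨y, hy⟩) hxy
      exact congrArg Subtype.val this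
    rw [← hr] at hm'
    exact (SHH_C hm').congr he.toHomeomorph.symm
  · intro x _
    choose o ho using okc_ex
    exact mem_iUnion.2 ⟨fun i => o (x i), fun i => ho (x i)⟩

end BG


/-- For every `n ≥ 1`, every Borel set `X ⊆ ℝⁿ` can be partitioned into
countably many pairwise disjoint subspaces that are Gδ sets in `X` and
h-homogeneous in the subspace topology. -/
theorem borel_euclidean_partition_hHomogeneous_gdelta (n : ℕ) (hn : 1 ≤ n)
    (X : Set (Fin n → ℝ))
    (hX : @MeasurableSet (Fin n → ℝ) (borel (Fin n → ℝ)) X) :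
    ∃ f : ℕ → Set (Fin n → ℝ),
      (∀ i, f i ⊆ X) ∧
      Pairwise (Function.onFun Disjoint f) ∧
      (∀ i, IsGδ (Subtype.val ⁻¹' f i : Set ↥X)) ∧
      (∀ i, HHomogeneous ↥(f i)) ∧
      X = ⋃ i, f i := by
  have hX' : MeasurableSet X := by
    rwa [← BorelSpace.measurable_eq (α := Fin n → ℝ)] at hX
  obtain ⟨f, h1, h2, h3, h4⟩ := BG.SHH_R hX'
  refine ⟨fun i => Subtype.val '' f i, ?_, ?_, ?_, ?_, ?_⟩
  · rintro i _ ⟨x, _, rfl⟩; exact x.2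
  · intro i j hij
    exact (Set.disjoint_image_iff Subtype.val_injective).2 (h1 hij)
  · intro i
    rw [Set.preimage_image_eq _ Subtype.val_injective]
    exact h2 i
  · intro i
    exact BG.HH.congr (h3 i) (Topology.IsEmbedding.subtypeVal.homeomorphImage (f i))
  · rw [← Set.image_iUnion, h4, Set.image_univ, Subtype.range_val]
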